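/- arXiv:1808.00227 — 3 statements merged into one kernel-verified Lean document; each statement's English description precedes it below -/
import Mathlib

section
/- Let ε > 0. There exist constants C > 0 and N such that for all integers n ≥ N and all positive integers k with k ≤ n^{1/8-ε}, one has |M_k(n) − (π/(12√2)) · k · n^{−3/2} · e^{2π√n/√6}| ≤ C · k³ · n^{−7/4} · e^{2π√n/√6}. In particular, M_k(n) = (π/(12√2)) k n^{−3/2} e^{2π√n/√6} + O(k³ n^{−7/4} e^{2π√n/√6}) as n → ∞ uniformly in k ≪ n^{1/8−ε}. -/
open Finset Real

/-- The number of partitions of `m`. -/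
noncomputable def partitionCount (m : ℕ) : ℕ := Nat.card (Nat.Partition m)

/-- The partition function extended to integers, `p(m) = 0` for `m < 0`. -/
noncomputable def pZ (m : ℤ) : ℤ := if 0 ≤ m then (partitionCount m.toNat : ℤ) else 0

/-- The Andrews–Merca function `M_k(n)`. -/
noncomputable def andrewsMercaM (k : ℕ) (n : ℤ) : ℤ :=
  (-1) ^ (k - 1) * ∑ j ∈ Finset.range k,
    (-1) ^ j * (pZ (n - (j : ℤ) * (3 * j + 1) / 2) - pZ (n - (j : ℤ) * (3 * j + 5) / 2 - 1))

namespace AM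
open Filter Topology

section gen
open PowerSeries

/-- geometric series in `X^(i+1)` -/
noncomputable def geo (i : ℕ) : PowerSeries ℝ := PowerSeries.mk fun n => if (i + 1) ∣ n then 1 else 0

noncomputable def geoProd (M : ℕ) : PowerSeries ℝ := ∏ i ∈ Finset.range M, geo i

open scoped PowerSeries.WithPiTopology in
lemma geo_eq (i : ℕ) : (∑' j : ℕ, (X : PowerSeries ℝ) ^ ((i + 1) * j)) = geo i := by
  apply HasSum.tsum_eq
  rw [HasSum, PowerSeries.WithPiTopology.tendsto_iff_coeff_tendsto]
  intro d
  simp only [map_sum, coeff_X_pow, geo, coeff_mk]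
  change HasSum (fun j => if d = (i+1)*j then (1:ℝ) else 0) _
  by_cases h : (i+1) ∣ d
  · obtain ⟨j, rfl⟩ := h
    simp only [dvd_mul_right, if_true]
    convert hasSum_single j ?_ using 1
    · simp
    · intro j' hj'
      rw [if_neg]
      intro h
      exact hj' (Nat.eq_of_mul_eq_mul_left (Nat.succ_pos i) h).symm
  · simp only [h, if_false]
    convert hasSum_zero using 2 with j
    rw [if_neg]
    rintro rfl
    exact h (dvd_mul_right _ _)

open scoped PowerSeries.WithPiTopology in
lemma geoProd_tendsto (n : ℕ) :
    Tendsto (fun M => coeff n (geoProd M)) atTop (𝓝 (partitionCount n : ℝ)) := by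
  have h := Nat.Partition.hasProd_powerSeriesMk_card_restricted ℝ (fun _ => True)
  simp only [if_true, geo_eq] at h
  have h2 := h.tendsto_prod_nat
  rw [PowerSeries.WithPiTopology.tendsto_iff_coeff_tendsto] at h2
  have h3 := h2 n
  simp only [coeff_mk] at h3
  convert h3 using 2
  · rfl
  · simp [partitionCount, Nat.Partition.restricted]

lemma geo_nonneg (i n : ℕ) : 0 ≤ coeff n (geo i) := by
  simp only [geo, coeff_mk]; split_ifs <;> norm_num

lemma geoProd_nonneg (M n : ℕ) : 0 ≤ coeff n (geoProd M) := by
  induction M generalizing n with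
  | zero => simp [geoProd, coeff_one]; split_ifs <;> norm_num
  | succ M ih =>
    rw [geoProd, Finset.prod_range_succ, coeff_mul]
    exact Finset.sum_nonneg fun x _ => mul_nonneg (ih _) (geo_nonneg _ _)

lemma geoProd_mono (n : ℕ) : Monotone (fun M => coeff n (geoProd M)) := by
  apply monotone_nat_of_le_succ
  intro M
  rw [show geoProd (M+1) = geoProd M * geo M by simp [geoProd, Finset.prod_range_succ], coeff_mul]
  have := Finset.single_le_sum (f := fun x : ℕ × ℕ => coeff x.1 (geoProd M) * coeff x.2 (geo M))
    (s := Finset.HasAntidiagonal.antidiagonal n) (fun x _ => mul_nonneg (geoProd_nonneg _ _) (geo_nonneg _ _))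
    (a := (n, 0)) (by simp)
  simpa [geo] using this

lemma geoProd_le (M n : ℕ) : coeff n (geoProd M) ≤ partitionCount n :=
  (geoProd_mono n).ge_of_tendsto (geoProd_tendsto n) M

lemma geo_hasSum (i : ℕ) {q : ℂ} (hq : ‖q‖ < 1) :
    HasSum (fun n => ((coeff n (geo i) : ℝ) : ℂ) * q ^ n) (1 - q ^ (i+1))⁻¹ := by
  have h1 : HasSum (fun j : ℕ => (q ^ (i+1)) ^ j) (1 - q ^ (i+1))⁻¹ := by
    apply hasSum_geometric_of_norm_lt_one
    rw [norm_pow]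
    exact pow_lt_one₀ (norm_nonneg _) hq (Nat.succ_ne_zero i)
  have hinj : Function.Injective (fun j : ℕ => (i+1) * j) := by
    intro a b h
    exact Nat.eq_of_mul_eq_mul_left (Nat.succ_pos i) h
  rw [← hinj.hasSum_iff]
  · convert h1 using 2 with j
    simp [geo, pow_mul]
  · intro x hx
    have : ¬ (i+1) ∣ x := by
      rintro ⟨j, rfl⟩; exact hx ⟨j, rfl⟩
    simp [geo, this]

lemma geoProd_hasSum (M : ℕ) {q : ℂ} (hq : ‖q‖ < 1) :
    Summable (fun n => coeff n (geoProd M) * ‖q‖ ^ n) ∧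
    HasSum (fun n => ((coeff n (geoProd M) : ℝ) : ℂ) * q ^ n) (∏ i ∈ range M, (1 - q ^ (i+1)))⁻¹ := by
  induction M with
  | zero =>
    simp only [geoProd, Finset.range_zero, Finset.prod_empty, coeff_one]
    constructor
    · apply summable_of_ne_finset_zero (s := {0})
      intro b hb; simp at hb; simp [hb]
    · convert hasSum_single 0 ?_ using 1
      · simp
      · intro b hb; simp [hb]
  | succ M ih =>
    have e : geoProd (M+1) = geoProd M * geo M := by simp [geoProd, Finset.prod_range_succ]
    have hs1 : Summable (fun n => ‖((coeff n (geoProd M) : ℝ) : ℂ) * q ^ n‖) := by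
      convert ih.1 using 2 with n
      rw [norm_mul, norm_pow, Complex.norm_real, Real.norm_of_nonneg (geoProd_nonneg _ _)]
    have hq' : ‖(‖q‖ : ℂ)‖ < 1 := by simpa using hq
    have hs2 : Summable (fun n => ‖((coeff n (geo M) : ℝ) : ℂ) * q ^ n‖) := by
      have := (geo_hasSum M hq').summable
      rw [← Complex.summable_ofReal]
      convert this using 2 with n
      rw [norm_mul, norm_pow, Complex.norm_real, Real.norm_of_nonneg (geo_nonneg _ _)]
      push_cast; rfl
    have key : ∀ n, ∑ kl ∈ antidiagonal n, (((coeff kl.1 (geoProd M) : ℝ) : ℂ) * q ^ kl.1) *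
        (((coeff kl.2 (geo M) : ℝ) : ℂ) * q ^ kl.2) = ((coeff n (geoProd (M+1)) : ℝ) : ℂ) * q ^ n := by
      intro n
      rw [e, coeff_mul]
      push_cast
      rw [Finset.sum_mul]
      refine Finset.sum_congr rfl fun x hx => ?_
      rw [← (Finset.HasAntidiagonal.mem_antidiagonal.1 hx), pow_add]; ring
    have hsn := summable_norm_sum_mul_antidiagonal_of_summable_norm hs1 hs2
    have ht := tsum_mul_tsum_eq_tsum_sum_antidiagonal_of_summable_norm hs1 hs2
    simp only [key] at hsn ht
    constructor
    · convert hsn using 2 with n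
      rw [norm_mul, norm_pow, Complex.norm_real, Real.norm_of_nonneg (geoProd_nonneg _ _)]
    · rw [ih.2.tsum_eq, (geo_hasSum M hq).tsum_eq] at ht
      rw [Finset.prod_range_succ, mul_inv, ht]
      exact hsn.of_norm.hasSum

lemma one_sub_pow_ne {q : ℂ} (hq : ‖q‖ < 1) (i : ℕ) : 1 - q ^ (i+1) ≠ 0 := by
  intro h
  have : ‖q ^ (i+1)‖ < 1 := by
    rw [norm_pow]; exact pow_lt_one₀ (norm_nonneg _) hq (Nat.succ_ne_zero i)
  rw [← sub_eq_zero.1 h] at this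
  simp at this

lemma euler_ne_zero {q : ℂ} (hq : ‖q‖ < 1) : ∏' n : ℕ, (1 - q ^ (n+1)) ≠ 0 := by
  have := tprod_one_add_ne_zero_of_summable (f := fun n : ℕ => -q ^ (n+1)) ?_ ?_
  · simpa [sub_eq_add_neg] using this
  · intro i; simpa [sub_eq_add_neg] using one_sub_pow_ne hq i
  · simpa using (summable_nat_add_iff 1).mpr (summable_geometric_of_lt_one (norm_nonneg _) hq)

lemma euler_tendsto {q : ℂ} (hq : ‖q‖ < 1) :
    Tendsto (fun M => (∏ i ∈ range M, (1 - q ^ (i+1)))⁻¹) atTop (𝓝 (∏' n : ℕ, (1 - q ^ (n+1)))⁻¹) :=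
  ((ModularForm.multipliable_one_sub_pow hq).hasProd.tendsto_prod_nat).inv₀ (euler_ne_zero hq)

lemma partition_summable {q : ℂ} (hq : ‖q‖ < 1) :
    Summable (fun n => (partitionCount n : ℝ) * ‖q‖ ^ n) := by
  have hq' : ‖(‖q‖ : ℂ)‖ < 1 := by simpa using hq
  have hb := (euler_tendsto hq').norm.bddAbove_range
  obtain ⟨B, hB⟩ := hb
  apply summable_of_sum_range_le (c := B)
  · intro n; positivity
  intro N
  have h1 : Tendsto (fun M => ∑ n ∈ range N, coeff n (geoProd M) * ‖q‖ ^ n) atTop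
      (𝓝 (∑ n ∈ range N, (partitionCount n : ℝ) * ‖q‖ ^ n)) :=
    tendsto_finsetSum _ fun n _ => (geoProd_tendsto n).mul_const _
  refine le_of_tendsto h1 (Eventually.of_forall fun M => ?_)
  have h2 := geoProd_hasSum M hq'
  have h3 : (∑' n, coeff n (geoProd M) * ‖q‖ ^ n : ℝ) = ‖(∏ i ∈ range M, (1 - (‖q‖:ℂ) ^ (i+1)))⁻¹‖ := by
    rw [← h2.2.tsum_eq]
    have : (∑' n, ((coeff n (geoProd M) : ℝ) : ℂ) * (‖q‖ : ℂ) ^ n) =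
        ((∑' n, coeff n (geoProd M) * ‖q‖ ^ n : ℝ) : ℂ) := by
      push_cast; rfl
    rw [this, Complex.norm_real, Real.norm_of_nonneg]
    exact tsum_nonneg fun n => mul_nonneg (geoProd_nonneg _ _) (by positivity)
  calc _ ≤ ∑' n, coeff n (geoProd M) * ‖q‖ ^ n :=
        Summable.sum_le_tsum _ (fun n _ => mul_nonneg (geoProd_nonneg _ _) (by positivity))
          (by simpa using h2.1)
    _ ≤ B := by rw [h3]; exact hB ⟨M, rfl⟩

lemma partition_hasSum {q : ℂ} (hq : ‖q‖ < 1) :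
    HasSum (fun n => (partitionCount n : ℂ) * q ^ n) (∏' n : ℕ, (1 - q ^ (n+1)))⁻¹ := by
  have hs := partition_summable hq
  have hs' : Summable (fun n => (partitionCount n : ℂ) * q ^ n) := by
    apply Summable.of_norm
    simpa using hs
  have h1 : Tendsto (fun M => ∑' n, ((coeff n (geoProd M) : ℝ) : ℂ) * q ^ n) atTop
      (𝓝 (∑' n, (partitionCount n : ℂ) * q ^ n)) := by
    apply tendsto_tsum_of_dominated_convergence hs
    · intro n
      refine Tendsto.mul_const _ ?_
      have := (Complex.continuous_ofReal.tendsto _).comp (geoProd_tendsto n)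
      simpa [Function.comp_def] using this
    · refine Eventually.of_forall fun M n => ?_
      rw [norm_mul, norm_pow, Complex.norm_real, Real.norm_of_nonneg (geoProd_nonneg _ _)]
      gcongr
      exact geoProd_le _ _
  have h2 : (fun M => ∑' n, ((coeff n (geoProd M) : ℝ) : ℂ) * q ^ n) =
      fun M => (∏ i ∈ range M, (1 - q ^ (i+1)))⁻¹ := by
    ext M; exact (geoProd_hasSum M hq).2.tsum_eq
  rw [h2] at h1
  rw [tendsto_nhds_unique (euler_tendsto hq) h1]
  exact hs'.hasSum

end gen
end AM

namespace AM
open Filter Topology MeasureTheory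

/-- Euler product at `exp (-z)`. -/
noncomputable def D (z : ℂ) : ℂ := ∏' n : ℕ, (1 - Complex.exp (-z) ^ (n+1))

lemma norm_exp_neg_lt {z : ℂ} (hz : 0 < z.re) : ‖Complex.exp (-z)‖ < 1 := by
  rw [Complex.norm_exp]; simpa using hz

lemma D_ne_zero {z : ℂ} (hz : 0 < z.re) : D z ≠ 0 := euler_ne_zero (norm_exp_neg_lt hz)

lemma D_hasSum {z : ℂ} (hz : 0 < z.re) :
    HasSum (fun n => (partitionCount n : ℂ) * Complex.exp (-z) ^ n) (D z)⁻¹ :=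
  partition_hasSum (norm_exp_neg_lt hz)

lemma integral_exp_int (k : ℤ) : ∫ θ in (-π)..π, Complex.exp (k * θ * Complex.I) =
    if k = 0 then (2 * π : ℂ) else 0 := by
  split_ifs with h
  · subst h; simp; ring
  · have : ∀ θ : ℝ, Complex.exp (k * θ * Complex.I) = Complex.exp ((k * Complex.I) * θ) := by
      intro θ; ring_nf
    simp_rw [this]
    rw [integral_exp_mul_complex (by simp [h])]
    have e : Complex.exp (k * Complex.I * (π:ℝ)) = Complex.exp (k * Complex.I * ((-π : ℝ):ℂ)) := by
      rw [Complex.exp_eq_exp_iff_exists_int]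
      exact ⟨k, by push_cast; ring⟩
    rw [e, sub_self, zero_div]

lemma coeff_formula {α : ℝ} (hα : 0 < α) (n : ℕ) :
    ∫ θ in (-π)..π, (D (α + θ * Complex.I))⁻¹ * Complex.exp (n * (α + θ * Complex.I)) =
      2 * π * partitionCount n := by
  set F : ℕ → C(ℝ, ℂ) := fun m => ⟨fun θ => (partitionCount m : ℂ) *
    Complex.exp (-(α + θ * Complex.I)) ^ m * Complex.exp (n * (α + θ * Complex.I)), by fun_prop⟩ with hF
  have hnorm : ∀ m (θ : ℝ), ‖F m θ‖ = (partitionCount m : ℝ) * ‖Complex.exp (-(α:ℂ))‖ ^ m * Real.exp (n * α) := by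
    intro m θ
    simp [hF, Complex.norm_exp]
  have hs := partition_summable (q := Complex.exp (-(α:ℂ))) (norm_exp_neg_lt (by simpa using hα))
  have h1 := intervalIntegral.hasSum_intervalIntegral_of_summable_norm (a := -π) (b := π) (f := F) ?_
  · have h2 : ∀ θ : ℝ, ∑' m, F m θ = (D (α + θ * Complex.I))⁻¹ * Complex.exp (n * (α + θ * Complex.I)) := by
      intro θ
      have := (D_hasSum (z := α + θ * Complex.I) (by simpa using hα)).mul_right
        (Complex.exp (n * (α + θ * Complex.I)))
      exact this.tsum_eq
    simp_rw [h2] at h1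
    have h3 : ∀ m, ∫ θ in (-π)..π, F m θ = if m = n then (2 * π * partitionCount n : ℂ) else 0 := by
      intro m
      have : ∀ θ : ℝ, F m θ = (partitionCount m * Complex.exp (((n:ℂ) - m) * α)) *
          Complex.exp (((n - m : ℤ) : ℂ) * θ * Complex.I) := by
        intro θ
        simp only [hF, ContinuousMap.coe_mk]
        rw [← Complex.exp_nat_mul, mul_assoc, mul_assoc, ← Complex.exp_add, ← Complex.exp_add]
        congr 2
        push_cast; ring
      simp_rw [this]
      rw [intervalIntegral.integral_const_mul, integral_exp_int]
      by_cases h : m = n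
      · subst h; simp; ring
      · rw [if_neg h, if_neg (by omega), mul_zero]
    simp_rw [h3] at h1
    exact h1.unique (by simpa using hasSum_ite_eq n (2 * π * partitionCount n : ℂ))
  · apply Summable.of_nonneg_of_le (fun _ => norm_nonneg _) _ (hs.mul_right (Real.exp (n * α)))
    intro m
    rw [ContinuousMap.norm_le _ (by positivity)]
    intro x
    rw [ContinuousMap.restrict_apply, hnorm]

lemma sqrt_quot {w : ℂ} (hw : 0 < w.re) :
    (Complex.sqrt Complex.I)⁻¹ * Complex.sqrt (Complex.I * w) = w ^ (1/2 : ℂ) := by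
  have hw0 : w ≠ 0 := by rintro rfl; simp at hw
  have harg := Complex.abs_arg_lt_pi_div_two_iff.2 (Or.inl hw)
  rw [abs_lt] at harg
  have hmem : Complex.arg Complex.I + Complex.arg w ∈ Set.Ioc (-π) π := by
    rw [Complex.arg_I]
    constructor <;> linarith [Real.pi_pos]
  have hl := Complex.log_mul Complex.I_ne_zero hw0 hmem
  have hsq : ∀ {u : ℂ}, u ≠ 0 → Complex.sqrt u = Complex.exp (Complex.log u / 2) := by
    intro u hu
    rw [Complex.sqrt, Complex.cpow_def_of_ne_zero hu]; congr 1
  rw [hsq Complex.I_ne_zero, hsq (mul_ne_zero Complex.I_ne_zero hw0), hl,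
    Complex.cpow_def_of_ne_zero hw0, ← Complex.exp_neg, ← Complex.exp_add]
  congr 1
  ring

lemma modular {z : ℂ} (hz : 0 < z.re) :
    (D z)⁻¹ = (z / (2 * π)) ^ (1/2 : ℂ) * Complex.exp (π^2 / (6 * z) - z / 24) * (D (4 * π^2 / z))⁻¹ := by
  have hz0 : z ≠ 0 := by rintro rfl; simp at hz
  have hpi : (π : ℂ) ≠ 0 := by exact_mod_cast Real.pi_ne_zero
  have hw : 0 < (z / (2 * π)).re := by
    have : z / (2 * π) = z / ((2 * π : ℝ) : ℂ) := by push_cast; rfl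
    rw [this, Complex.div_ofReal_re]
    positivity
  have hτ : (Complex.I * (z / (2 * π))) ∈ UpperHalfPlane.upperHalfPlaneSet := by
    simpa [UpperHalfPlane.upperHalfPlaneSet] using hw
  have h := ModularForm.eta_comp_eq_csqrt_I_inv hτ
  simp only [Function.comp_apply, Pi.smul_apply, Pi.mul_apply, smul_eq_mul] at h
  rw [← mul_assoc, sqrt_quot hw] at h
  have e1 : ∀ w : ℂ, ModularForm.eta (Complex.I * (w / (2 * π))) = Complex.exp (-w/24) * D w := by
    intro w
    simp only [ModularForm.eta, D, ModularForm.eta_q, Function.Periodic.qParam]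
    congr 1
    · congr 1; push_cast; field_simp; rw [Complex.I_sq]; ring
    · congr 1; ext n; congr 3; push_cast; field_simp; rw [Complex.I_sq]; ring
  have e2 : -1 / (Complex.I * (z / (2 * π))) = Complex.I * ((4 * π^2 / z) / (2 * π)) := by
    field_simp; rw [Complex.I_sq]; ring
  rw [e2, e1, e1] at h
  have hz' : 0 < (4 * π^2 / z : ℂ).re := by
    rw [show (4 * π^2 / z : ℂ) = ((4 * π^2 : ℝ) : ℂ) * z⁻¹ by push_cast; rw [div_eq_mul_inv], Complex.re_ofReal_mul, Complex.inv_re]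
    have := Complex.normSq_pos.2 hz0
    positivity
  have hD := D_ne_zero hz
  have hD' := D_ne_zero hz'
  have e3 : Complex.exp (π^2 / (6 * z) - z / 24) = Complex.exp (-z/24) * (Complex.exp (-(4 * π^2 / z)/24))⁻¹ := by
    rw [← Complex.exp_neg, ← Complex.exp_add]; congr 1; field_simp; ring
  have hE := Complex.exp_ne_zero (-(4 * π^2 / z)/24)
  rw [e3]
  generalize D (4 * π ^ 2 / z) = a at *
  generalize D z = b at *
  generalize Complex.exp (-(4 * π^2 / z)/24) = c at *
  generalize Complex.exp (-z/24) = d at *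
  rw [eq_comm, ← div_eq_mul_inv, div_eq_iff hD', ← div_eq_mul_inv, ← mul_div_assoc, div_eq_iff hE, eq_comm]
  rw [mul_assoc, mul_comm a, h]
  field_simp

lemma re_four_div {z : ℂ} : (4 * π^2 / z : ℂ).re = 4 * π^2 * (z.re / Complex.normSq z) := by
  rw [show (4 * π^2 / z : ℂ) = ((4 * π^2 : ℝ) : ℂ) * z⁻¹ by push_cast; rw [div_eq_mul_inv], Complex.re_ofReal_mul, Complex.inv_re]

end AM

namespace AM
open Filter Topology MeasureTheory

lemma D_inv_near_one : ∃ C : ℝ, 0 < C ∧ ∀ w : ℂ, 1 ≤ w.re → ‖(D w)⁻¹ - 1‖ ≤ C * Real.exp (-w.re) := by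
  have hs0 := partition_summable (q := Complex.exp (-(1:ℂ))) (norm_exp_neg_lt (by simp))
  have hn : ∀ w : ℂ, ‖Complex.exp (-w)‖ = Real.exp (-w.re) := by
    intro w; rw [Complex.norm_exp]; simp
  rw [hn, Complex.one_re] at hs0
  have hs1 : Summable (fun n => (partitionCount (n+1) : ℝ) * Real.exp (-1) ^ n) := by
    have h := ((summable_nat_add_iff 1).2 hs0).mul_right (Real.exp 1)
    refine h.congr fun n => ?_
    rw [pow_succ, mul_assoc, mul_assoc, ← Real.exp_add]; simp
  refine ⟨∑' n, (partitionCount (n+1) : ℝ) * Real.exp (-1) ^ n + 1, ?_, ?_⟩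
  · have : 0 ≤ ∑' n, (partitionCount (n+1) : ℝ) * Real.exp (-1) ^ n := tsum_nonneg fun n => by positivity
    linarith
  intro w hw
  have h := D_hasSum (z := w) (by linarith)
  have hp0 : partitionCount 0 = 1 := by simp [partitionCount]
  rw [← hasSum_nat_add_iff' 1] at h
  simp only [Finset.range_one, Finset.sum_singleton, hp0, pow_zero, Nat.cast_one, mul_one] at h
  have hb : ‖(D w)⁻¹ - 1‖ ≤ ∑' n, (partitionCount (n+1) : ℝ) * Real.exp (-1) ^ n * Real.exp (-w.re) := by
    rw [← h.tsum_eq]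
    apply tsum_of_norm_bounded (hs1.mul_right _).hasSum
    intro n
    rw [norm_mul, norm_pow, hn, Complex.norm_natCast, pow_succ, ← mul_assoc]
    gcongr
  rw [tsum_mul_right] at hb
  refine hb.trans ?_
  gcongr
  linarith

lemma newman_factor {w : ℂ} (hw : ‖w‖ < 1) :
    (1 - ‖w‖) * Real.exp ((‖w‖ - w.re) / 4) ≤ ‖1 - w‖ := by
  have hre : |w.re| ≤ ‖w‖ := Complex.abs_re_le_norm w
  have hre' := abs_le.1 hre
  set s := ‖w‖
  set u := s - w.re with hu
  have hu0 : 0 ≤ u := by linarith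
  have hu2 : u ≤ 2 := by linarith
  have hs0 : 0 ≤ s := norm_nonneg _
  have hsq : ‖1 - w‖ ^ 2 = (1 - s) ^ 2 + 2 * u := by
    have h1 : s ^ 2 = w.re ^ 2 + w.im ^ 2 := by
      rw [← Complex.normSq_eq_norm_sq, Complex.normSq_apply]; ring
    rw [← Complex.normSq_eq_norm_sq, Complex.normSq_apply]
    simp only [Complex.sub_re, Complex.one_re, Complex.sub_im, Complex.one_im]
    nlinarith
  have he : Real.exp (u / 2) ≤ 1 + 2 * u := by
    have := Real.abs_exp_sub_one_sub_id_le (x := u/2) (by rw [abs_of_nonneg] <;> linarith)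
    have := (abs_le.1 this).2
    nlinarith
  apply le_of_sq_le_sq _ (norm_nonneg _)
  rw [hsq, mul_pow, ← Real.exp_nat_mul]
  have : ((2:ℕ):ℝ) * (u / 4) = u / 2 := by push_cast; ring
  rw [this]
  have h1 : (1 - s)^2 ≤ 1 := by nlinarith
  nlinarith [sq_nonneg (1-s)]

lemma newman {q : ℂ} (hq : ‖q‖ < 1) :
    ‖(∏' n : ℕ, (1 - q ^ (n+1)))⁻¹‖ ≤ ‖(∏' n : ℕ, (1 - (‖q‖ : ℂ) ^ (n+1)))⁻¹‖ *
      Real.exp (-((‖q‖ / (1 - ‖q‖) - (q / (1 - q)).re) / 4)) := by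
  have hq' : ‖(‖q‖ : ℂ)‖ < 1 := by simpa using hq
  have h1 := (euler_tendsto hq).norm
  have h2 := (euler_tendsto hq').norm
  have hsum : HasSum (fun n : ℕ => (‖q‖ ^ (n+1) - (q ^ (n+1)).re) / 4)
      ((‖q‖ / (1 - ‖q‖) - (q / (1 - q)).re) / 4) := by
    apply HasSum.div_const
    apply HasSum.sub
    · have := (hasSum_geometric_of_lt_one (norm_nonneg q) hq).mul_left ‖q‖
      simpa [pow_succ', div_eq_mul_inv] using this
    · have := (hasSum_geometric_of_norm_lt_one hq).mul_left q
      have := Complex.hasSum_re this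
      simpa [pow_succ', div_eq_mul_inv] using this
  have h3 := hsum.tendsto_sum_nat
  have h4 : Tendsto (fun M => Real.exp (-(∑ i ∈ range M, (‖q‖ ^ (i+1) - (q ^ (i+1)).re) / 4))) atTop
      (𝓝 (Real.exp (-((‖q‖ / (1 - ‖q‖) - (q / (1 - q)).re) / 4)))) :=
    (Real.continuous_exp.tendsto _).comp h3.neg
  refine le_of_tendsto_of_tendsto' h1 (h2.mul h4) fun M => ?_
  rw [← Finset.sum_neg_distrib, Real.exp_sum, norm_inv, norm_inv, norm_prod, norm_prod, ← Finset.prod_inv_distrib,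
    ← Finset.prod_inv_distrib, ← Finset.prod_mul_distrib]
  apply Finset.prod_le_prod
  · intro i _; positivity
  intro i _
  have hl : ‖q ^ (i+1)‖ < 1 := by
    rw [norm_pow]; exact pow_lt_one₀ (norm_nonneg _) hq (Nat.succ_ne_zero i)
  have hk := newman_factor hl
  rw [norm_pow] at hk hl
  have e : ‖1 - (‖q‖ : ℂ) ^ (i+1)‖ = 1 - ‖q‖ ^ (i+1) := by
    rw [show (1 - (‖q‖ : ℂ) ^ (i+1)) = ((1 - ‖q‖ ^ (i+1) : ℝ) : ℂ) by push_cast; rfl, Complex.norm_real,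
      Real.norm_of_nonneg (by linarith)]
  rw [e, Real.exp_neg, ← mul_inv]
  apply inv_anti₀ _ hk
  have : 0 < 1 - ‖q‖ ^ (i+1) := by linarith
  positivity

lemma gap {α θ : ℝ} (h0 : 0 < α) (h1 : α ≤ 1/2) (h2 : α ≤ |θ|) (h3 : |θ| ≤ π) :
    1 / (40 * α) ≤ ‖Complex.exp (-(α + θ * Complex.I))‖ / (1 - ‖Complex.exp (-(α + θ * Complex.I))‖) -
      (Complex.exp (-(α + θ * Complex.I)) / (1 - Complex.exp (-(α + θ * Complex.I)))).re := by
  set q := Complex.exp (-(α + θ * Complex.I)) with hq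
  have hn : ‖q‖ = Real.exp (-α) := by rw [hq, Complex.norm_exp]; simp
  have hre : q.re = Real.exp (-α) * Real.cos θ := by
    rw [hq, Complex.exp_re]; simp
  set r := Real.exp (-α) with hr
  have hr1 : 1 - r ≤ α := by have := Real.add_one_le_exp (-α); linarith
  have hr2 : 1/2 ≤ r := by linarith
  have hr3 : r < 1 := by
    rw [hr, ← Real.exp_zero]; exact Real.exp_lt_exp.2 (by linarith)
  have hcos : 2 * θ^2 / π^2 ≤ 1 - Real.cos θ := by
    have := Real.cos_le_one_sub_mul_cos_sq h3
    have e : 2*θ^2/π^2 = 2/π^2*θ^2 := by ring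
    linarith
  have hpi2 : π^2 < 10 := by have := Real.pi_lt_d2; nlinarith [Real.pi_pos]
  have hsq : ‖1 - q‖^2 = (1-r)^2 + 2 * r * (1 - Real.cos θ) := by
    have h1 : q.re^2 + q.im^2 = r ^ 2 := by
      rw [← hn, ← Complex.normSq_eq_norm_sq, Complex.normSq_apply]; ring
    rw [← Complex.normSq_eq_norm_sq, Complex.normSq_apply]
    simp only [Complex.sub_re, Complex.one_re, Complex.sub_im, Complex.one_im]
    nlinarith
  have hθ : α^2 ≤ θ^2 := by rw [← sq_abs θ]; gcongr
  have hc2 : (1-r)^2/5 ≤ 1 - Real.cos θ := by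
    refine le_trans ?_ hcos
    rw [div_le_div_iff₀ (by norm_num) (by positivity)]
    have : (1-r)^2 ≤ θ^2 := by nlinarith
    nlinarith [sq_nonneg (1-r)]
  have hy : (1 - r) ≤ 0.95 * ‖1 - q‖ := by
    apply le_of_sq_le_sq _ (by positivity)
    rw [mul_pow, hsq]
    nlinarith [sq_nonneg (1-r)]
  have hx : 0 < 1 - r := by linarith
  have hy0 : 0 < ‖1 - q‖ := by nlinarith
  have hle : (q / (1 - q)).re ≤ 0.95 * (r / (1 - r)) := by
    refine (Complex.re_le_norm _).trans ?_
    rw [norm_div, hn, ← mul_div_assoc, div_le_div_iff₀ hy0 hx]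
    nlinarith
  rw [hn]
  have : 1 / (40 * α) ≤ 0.05 * (r / (1 - r)) := by
    rw [← mul_div_assoc, div_le_div_iff₀ (by positivity) hx]
    nlinarith
  linarith

lemma cpow_half_norm_le {α : ℝ} (h0 : 0 < α) (h1 : α ≤ 1/2) : ‖((α:ℂ) / (2 * π)) ^ (1/2 : ℂ)‖ ≤ 1 := by
  have h2 : 0 ≤ α / (2 * π) := by positivity
  have h3 : α / (2 * π) ≤ 1 := by rw [div_le_one (by positivity)]; linarith [Real.pi_gt_three]
  rw [show ((α:ℂ) / (2 * π)) ^ (1/2 : ℂ) = (((α / (2 * π)) ^ (1/2 : ℝ) : ℝ) : ℂ) by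
    rw [Complex.ofReal_cpow h2]; push_cast; rfl, Complex.norm_real, Real.norm_of_nonneg (by positivity)]
  exact Real.rpow_le_one h2 h3 (by norm_num)

lemma D_real_bound : ∃ C : ℝ, 0 < C ∧ ∀ α : ℝ, 0 < α → α ≤ 1/2 →
    ‖(D α)⁻¹‖ ≤ C * Real.exp (π^2 / (6 * α)) := by
  obtain ⟨C, hC, h⟩ := D_inv_near_one
  refine ⟨1 + C, by linarith, fun α h0 h1 => ?_⟩
  rw [modular (z := α) (by simpa using h0), norm_mul, norm_mul]
  have e : (4 * π^2 / α : ℂ) = ((4 * π^2 / α : ℝ) : ℂ) := by push_cast; rfl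
  have hw : 1 ≤ (4 * π^2 / α : ℂ).re := by
    rw [e, Complex.ofReal_re, le_div_iff₀ h0]
    nlinarith [Real.pi_gt_three]
  have h2 := h _ hw
  have h3 : ‖(D (4 * π^2 / α))⁻¹‖ ≤ 1 + C := by
    have := norm_sub_norm_le ((D (4 * π^2 / α))⁻¹) 1
    rw [norm_one] at this
    have h4 : Real.exp (-(4 * π^2 / α : ℂ).re) ≤ 1 := Real.exp_le_one_iff.2 (by linarith)
    nlinarith
  have h5 : ‖Complex.exp (π^2 / (6 * α) - α / 24)‖ ≤ Real.exp (π^2 / (6 * α)) := by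
    rw [show (π^2 / (6 * α) - α / 24 : ℂ) = ((π^2 / (6 * α) - α / 24 : ℝ) : ℂ) by push_cast; rfl, Complex.norm_exp,
      Complex.ofReal_re]
    apply Real.exp_le_exp.2; linarith
  calc _ ≤ 1 * Real.exp (π^2 / (6 * α)) * (1 + C) := by
        gcongr
        exact cpow_half_norm_le h0 h1
    _ = _ := by ring

lemma minor : ∃ C : ℝ, 0 < C ∧ ∀ α θ : ℝ, 0 < α → α ≤ 1/2 → α ≤ |θ| → |θ| ≤ π →
    ‖(D (α + θ * Complex.I))⁻¹‖ ≤ C * Real.exp (π^2 / (6 * α) - 1 / (160 * α)) := by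
  obtain ⟨C, hC, h⟩ := D_real_bound
  refine ⟨C, hC, fun α θ h0 h1 h2 h3 => ?_⟩
  have hz : 0 < ((α:ℂ) + θ * Complex.I).re := by simpa using h0
  have hk := newman (norm_exp_neg_lt hz)
  have hg := gap h0 h1 h2 h3
  have e : D α = ∏' n : ℕ, (1 - (‖Complex.exp (-(α + θ * Complex.I))‖ : ℂ) ^ (n+1)) := by
    rw [D, Complex.norm_exp]; simp
  rw [← e] at hk
  refine hk.trans ?_
  rw [show π^2/(6*α) - 1/(160*α) = π^2/(6*α) + -(1/(160*α)) by ring, Real.exp_add, ← mul_assoc]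
  refine mul_le_mul (h α h0 h1) (Real.exp_le_exp.2 ?_) (Real.exp_pos _).le (by positivity)
  · have : 1 / (160 * α) = 1 / (40 * α) / 4 := by field_simp; norm_num
    rw [this]
    linarith

lemma prod_near {a b : ℂ} {A B x : ℝ} (ha : ‖a - 1‖ ≤ A * x) (hb : ‖b - 1‖ ≤ B * x) (hA : 0 ≤ A) (hB : 0 ≤ B)
    (hx0 : 0 ≤ x) (hx : x ≤ 2) : ‖a * b - 1‖ ≤ (A + B + 2 * A * B) * x := by
  have : a * b - 1 = (a - 1) + (b - 1) + (a - 1) * (b - 1) := by ring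
  rw [this]
  calc _ ≤ ‖a - 1‖ + ‖b - 1‖ + ‖a - 1‖ * ‖b - 1‖ := by
        refine (norm_add_le _ _).trans ?_
        rw [norm_mul]; gcongr; exact norm_add_le _ _
    _ ≤ A * x + B * x + (A * x) * (B * x) := by gcongr
    _ ≤ _ := by nlinarith [mul_nonneg hA hB, mul_nonneg (mul_nonneg (mul_nonneg hA hB) hx0) (by linarith : 0 ≤ 2 - x)]

lemma sqrt_near (t : ℝ) : ‖(1 + t * Complex.I) ^ (1/2 : ℂ) - 1‖ ≤ |t| := by
  set s := (1 + t * Complex.I) ^ (1/2 : ℂ) with hs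
  have h1 : s ^ 2 = 1 + t * Complex.I := by
    rw [hs, ← Complex.cpow_nat_mul]; norm_num
  have h2 : 0 ≤ s.re := by
    rw [hs, one_div, Complex.cpow_inv_two_re]; positivity
  have h3 : 1 ≤ ‖s + 1‖ := by
    refine le_trans ?_ (Complex.re_le_norm _)
    simpa using h2
  have h4 : (s - 1) * (s + 1) = t * Complex.I := by
    linear_combination h1
  have h5 : ‖s - 1‖ * ‖s + 1‖ = |t| := by rw [← norm_mul, h4]; simp
  nlinarith [norm_nonneg (s - 1)]

lemma major : ∃ C : ℝ, 0 < C ∧ ∀ α t : ℝ, 0 < α → α ≤ 1/2 → |t| ≤ 1 →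
    ‖(1 - Complex.exp (-(α + (α * t : ℝ) * Complex.I))) * (D (α + (α * t : ℝ) * Complex.I))⁻¹ *
      Complex.exp (-(π^2 / (6 * (α + (α * t : ℝ) * Complex.I)))) - ((α * √(α / (2 * π)) : ℝ) : ℂ)‖ ≤
      C * (α * √(α / (2 * π))) * (α + |t|) := by
  obtain ⟨C0, hC0, hD⟩ := D_inv_near_one
  refine ⟨(3 + 1 + 2*3*1) + (1 + C0 + 2*1*C0) + 2 * (3 + 1 + 2*3*1) * (1 + C0 + 2*1*C0), by positivity, fun α t h0 h1 ht => ?_⟩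
  set z : ℂ := α + (α * t : ℝ) * Complex.I with hz
  have hzα : z = α * (1 + t * Complex.I) := by rw [hz]; push_cast; ring
  have hzre : z.re = α := by simp [hz]
  have hzim : z.im = α * t := by simp [hz]
  have hα' : (α : ℂ) ≠ 0 := by exact_mod_cast h0.ne'
  have hz0 : z ≠ 0 := by intro h; rw [h] at hzre; simp at hzre; linarith
  have hns : Complex.normSq z = α^2 * (1 + t^2) := by
    rw [Complex.normSq_apply, hzre, hzim]; ring
  have ht2 : t^2 ≤ 1 := by rw [← sq_abs]; nlinarith [abs_nonneg t]
  have hnz : ‖z‖ ≤ 3/2 * α := by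
    apply le_of_sq_le_sq _ (by positivity)
    rw [← Complex.normSq_eq_norm_sq, hns]; nlinarith [sq_nonneg α]
  have hnz1 : ‖z‖ ≤ 1 := by linarith
  have hat := abs_nonneg t
  -- factor 1
  have f1 : ‖(1 - Complex.exp (-z)) / α - 1‖ ≤ 3 * (α + |t|) := by
    have h := Complex.norm_exp_sub_one_sub_id_le (x := -z) (by rwa [norm_neg])
    rw [norm_neg] at h
    have e : (1 - Complex.exp (-z)) / α - 1 = -(Complex.exp (-z) - 1 - -z) / α + t * Complex.I := by
      rw [hzα]; field_simp; ring
    rw [e]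
    refine (norm_add_le _ _).trans ?_
    rw [norm_div, norm_neg, norm_mul, Complex.norm_I, Complex.norm_real, Complex.norm_real, Real.norm_eq_abs, Real.norm_eq_abs,
      abs_of_pos h0]
    have : ‖Complex.exp (-z) - 1 - -z‖ / α ≤ 9/4 * α := by
      rw [div_le_iff₀ h0]
      refine h.trans ?_
      nlinarith [norm_nonneg z]
    linarith
  have f2 := sqrt_near t
  have f2' : ‖(1 + t * Complex.I) ^ (1/2 : ℂ) - 1‖ ≤ 1 * (α + |t|) := by linarith
  have f3 : ‖Complex.exp (-z/24) - 1‖ ≤ 1 * (α + |t|) := by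
    have hn24 : ‖-z/24‖ = ‖z‖/24 := by rw [norm_div, norm_neg]; simp
    have h := Complex.norm_exp_sub_one_le (x := -z/24) (by rw [hn24]; linarith)
    rw [hn24] at h
    linarith
  have f4 : ‖(D (4 * π^2 / z))⁻¹ - 1‖ ≤ C0 * (α + |t|) := by
    have hre := re_four_div (z := z)
    have hge : 1 / α ≤ (4 * π^2 / z : ℂ).re := by
      rw [hre, hzre, hns]
      rw [show 4 * π ^ 2 * (α / (α ^ 2 * (1 + t ^ 2))) = (4 * π^2 / (1 + t^2)) / α by field_simp]
      gcongr
      rw [le_div_iff₀ (by positivity)]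
      nlinarith [Real.pi_gt_three]
    have h1α : 1 ≤ 1 / α := by rw [le_div_iff₀ h0]; linarith
    refine (hD _ (by linarith)).trans ?_
    gcongr
    have : Real.exp (-(4 * π^2 / z : ℂ).re) ≤ α := by
      rw [Real.exp_neg, inv_le_comm₀ (Real.exp_pos _) h0, ← one_div]
      have := Real.add_one_le_exp ((4 * π^2 / z : ℂ).re)
      linarith
    linarith
  have hx0 : 0 ≤ α + |t| := by linarith
  have hx2 : α + |t| ≤ 2 := by linarith
  have g1 := prod_near f1 f2' (by norm_num) (by norm_num) hx0 hx2
  have g2 := prod_near f3 f4 (by norm_num) hC0.le hx0 hx2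
  have g3 := prod_near g1 g2 (by norm_num) (by positivity) hx0 hx2
  have hsplit : (z / (2 * π)) ^ (1/2 : ℂ) = ((√(α / (2 * π)) : ℝ) : ℂ) * (1 + t * Complex.I) ^ (1/2 : ℂ) := by
    rw [Real.sqrt_eq_rpow, Complex.ofReal_cpow (by positivity), hzα]
    rw [show (α * (1 + t * Complex.I) / (2 * π) : ℂ) = ((α / (2 * π) : ℝ) : ℂ) * (1 + t * Complex.I) by push_cast; ring]
    have hne : (1 + t * Complex.I : ℂ) ≠ 0 := by
      intro h; rw [hzα, h, mul_zero] at hz0; exact hz0 rfl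
    have hpos : 0 < α / (2 * π) := by positivity
    have hne2 : ((α / (2 * π) : ℝ) : ℂ) ≠ 0 := by exact_mod_cast hpos.ne'
    rw [Complex.cpow_def_of_ne_zero (mul_ne_zero hne2 hne), Complex.cpow_def_of_ne_zero hne2,
      Complex.cpow_def_of_ne_zero hne, Complex.log_ofReal_mul hpos hne, ← Complex.exp_add, Complex.ofReal_log hpos.le]
    congr 1
    push_cast; ring
  have hexp : Complex.exp (π^2 / (6 * z) - z / 24) * Complex.exp (-(π^2 / (6 * z))) = Complex.exp (-z/24) := by
    rw [← Complex.exp_add]; congr 1; ring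
  have hfin : (1 - Complex.exp (-z)) * (D z)⁻¹ * Complex.exp (-(π^2 / (6 * z))) - ((α * √(α / (2 * π)) : ℝ) : ℂ)
      = ((α * √(α / (2 * π)) : ℝ) : ℂ) * ((1 - Complex.exp (-z)) / α * (1 + t * Complex.I) ^ (1/2 : ℂ) *
        (Complex.exp (-z/24) * (D (4 * π^2 / z))⁻¹) - 1) := by
    rw [modular (by rw [hzre]; exact h0), hsplit, ← hexp]
    push_cast
    field_simp
  rw [hfin, norm_mul, Complex.norm_real, Real.norm_of_nonneg (by positivity)]
  calc _ ≤ _ := mul_le_mul_of_nonneg_left g3 (by positivity)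
    _ = _ := by ring

end AM

namespace AM
open Filter Topology MeasureTheory

lemma D_inv_cont {α : ℝ} (hα : 0 < α) : Continuous fun θ : ℝ => (D (α + θ * Complex.I))⁻¹ := by
  have hre : ∀ θ : ℝ, 0 < ((α:ℂ) + θ * Complex.I).re := fun θ => by simpa using hα
  have e : (fun θ : ℝ => (D (α + θ * Complex.I))⁻¹) =
      fun θ : ℝ => ∑' n, (partitionCount n : ℂ) * Complex.exp (-(α + θ * Complex.I)) ^ n := by
    ext θ; exact (D_hasSum (hre θ)).tsum_eq.symm
  rw [e]
  have hs := partition_summable (norm_exp_neg_lt (hre 0))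
  refine continuous_tsum (fun n => by fun_prop) hs fun n θ => ?_
  rw [norm_mul, norm_pow, Complex.norm_natCast, Complex.norm_exp, Complex.norm_exp]
  simp

/-- The integrand for the first difference of the partition function. -/
noncomputable def F (α : ℝ) (n : ℕ) (θ : ℝ) : ℂ :=
  (1 - Complex.exp (-(α + θ * Complex.I))) * (D (α + θ * Complex.I))⁻¹ *
    Complex.exp (n * (α + θ * Complex.I))

lemma F_cont {α : ℝ} (hα : 0 < α) (n : ℕ) : Continuous (F α n) := by
  unfold F
  have := D_inv_cont hα
  fun_prop

lemma diff_formula {α : ℝ} (hα : 0 < α) (n : ℕ) :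
    ∫ θ in (-π)..π, F α (n+1) θ = ((2 * π * ((partitionCount (n+1) : ℝ) - partitionCount n) : ℝ) : ℂ) := by
  have h1 := coeff_formula hα (n+1)
  have h2 := coeff_formula hα n
  have hc := D_inv_cont hα
  push_cast
  rw [mul_sub, ← h1, ← h2, ← intervalIntegral.integral_sub]
  · congr 1
    ext θ
    unfold F
    rw [show ((n:ℕ) : ℂ) * (α + θ * Complex.I) = ((n+1:ℕ):ℂ) * (α + θ * Complex.I) + -(α + θ * Complex.I) by push_cast; ring,
      Complex.exp_add]
    ring
  · exact (by fun_prop : Continuous _).intervalIntegrable _ _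
  · exact (by fun_prop : Continuous _).intervalIntegrable _ _

lemma exp_diff {a b : ℂ} {c : ℝ} (ha : a.re ≤ c) (hb : b.re ≤ c) :
    ‖Complex.exp a - Complex.exp b‖ ≤ Real.exp c * ‖a - b‖ := by
  refine (convex_halfSpace_re_le c).norm_image_sub_le_of_norm_deriv_le (f := Complex.exp) (𝕜 := ℂ) ?_ ?_ hb ha
  · intro x _; exact Complex.differentiable_exp x
  · intro x hx
    rw [Complex.deriv_exp, Complex.norm_exp]
    exact Real.exp_le_exp.2 hx

lemma poly_exp {C s y : ℝ} (hC : 0 < C) (hy : s^2 / 2 ≤ y) :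
    C + C * s + 2 * s^3 ≤ (4 * C + 16) * Real.exp y := by
  have h1 : 1 + s^2/2 + (s^2/2)^2/2 ≤ Real.exp y :=
    (Real.quadratic_le_exp_of_nonneg (by positivity)).trans (Real.exp_le_exp.2 hy)
  have h2 : C + C * s + 2 * s^3 ≤ (4 * C + 16) * (1 + s^2/2 + (s^2/2)^2/2) := by
    have : s ≤ 1 + s^2 := by nlinarith [sq_nonneg (s-1)]
    have h3 : 2 * s^3 ≤ s^2 + s^4 := by nlinarith [sq_nonneg (s*(s-1))]
    have h4 : C * s ≤ C * (1 + s^2) := by gcongr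
    have : 0 ≤ C * s^4 := by positivity
    have : 0 ≤ s^4 := by positivity
    nlinarith [sq_nonneg s, mul_nonneg hC.le (sq_nonneg s)]
  exact h2.trans (by gcongr)

/-- Amplitude. -/
noncomputable def Amp (α : ℝ) : ℝ := α * √(α / (2 * π))

set_option maxHeartbeats 1000000 in
lemma near : ∃ C : ℝ, 0 < C ∧ ∀ (α t : ℝ) (n : ℕ), 0 < α → α ≤ 1/2 → n * α^2 = π^2 / 6 → |t| ≤ 1 →
    ‖F α n (α * t) - ((Amp α * Real.exp (2 * (π^2/(6*α))) * Real.exp (-(π^2/(6*α) * t^2)) : ℝ) : ℂ)‖ ≤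
      C * (Amp α * Real.exp (2 * (π^2/(6*α)))) * √α * Real.exp (-(π^2/(6*α)*t^2/8)) := by
  obtain ⟨C, hC, h⟩ := major
  refine ⟨4 * C + 16, by positivity, fun α t n h0 h1 hn ht => ?_⟩
  have hG := h α t h0 h1 ht
  set z : ℂ := α + (α * t : ℝ) * Complex.I with hz
  set L := π^2/(6*α) with hL
  have hnL : (n:ℝ) * α = L := by rw [hL]; field_simp; linarith
  have hA : 0 < Amp α := by unfold Amp; positivity
  have hα' : (α : ℂ) ≠ 0 := by exact_mod_cast h0.ne'
  have ht2 : t^2 ≤ 1 := by rw [← sq_abs]; nlinarith [abs_nonneg t]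
  have hw0 : (1 + t * Complex.I : ℂ) ≠ 0 := by
    intro h; have := congrArg Complex.re h; simp at this
  have hzα : z = α * (1 + t * Complex.I) := by rw [hz]; push_cast; ring
  have hL0 : 0 < L := by rw [hL]; positivity
  set a : ℂ := -(L * t^2 / (1 + t * Complex.I)) with ha
  set b : ℂ := ((-(L * t^2) : ℝ) : ℂ) with hb
  have hsplit : F α n (α * t) = ((Real.exp (2 * L) : ℝ) : ℂ) *
      (((1 - Complex.exp (-z)) * (D z)⁻¹ * Complex.exp (-(π^2 / (6 * z)))) * Complex.exp a) := by
    have : Complex.exp (n * z) = Complex.exp (2 * L) * Complex.exp (-(π^2 / (6 * z))) * Complex.exp a := by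
      rw [← Complex.exp_add, ← Complex.exp_add]
      congr 1
      have hnL' : (n:ℂ) * α = L := by exact_mod_cast hnL
      have hLc : (π:ℂ)^2 / (6 * z) = L / (1 + t * Complex.I) := by
        rw [hzα, hL]; push_cast; field_simp
      rw [hLc, ha, hzα, ← mul_assoc, hnL']
      field_simp
      ring_nf
      simp only [Complex.I_sq]
      ring
    unfold F
    rw [← hz, this]
    push_cast
    ring
  have hnE : a.re ≤ -(L * t^2/2) := by
    have : a.re = -(L * t^2 / (1 + t^2)) := by
      rw [ha, Complex.neg_re, show (L * t^2 / (1 + t * Complex.I) : ℂ) = ((L * t^2 : ℝ) : ℂ) / (1 + t * Complex.I) by push_cast; rfl,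
        Complex.div_re, Complex.ofReal_re, Complex.ofReal_im]
      simp [Complex.normSq_apply]
      field_simp
    rw [this]
    have : L * t^2 / 2 ≤ L * t^2 / (1 + t^2) := by
      gcongr; linarith
    linarith
  have hbE : b.re ≤ -(L * t^2/2) := by
    rw [hb, Complex.ofReal_re]
    have : 0 ≤ L * t^2 := by positivity
    linarith
  have hd := exp_diff hnE hbE
  have hab : ‖a - b‖ ≤ L * |t|^3 := by
    have : a - b = (L * t^2 : ℝ) * (t * Complex.I / (1 + t * Complex.I)) := by
      rw [ha, hb]; push_cast; field_simp; ring
    rw [this, norm_mul, norm_div, norm_mul, Complex.norm_I, Complex.norm_real, Complex.norm_real, Real.norm_of_nonneg (by positivity),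
      Real.norm_eq_abs, ← sq_abs t, mul_one]
    have h1 : 1 ≤ ‖(1 + t * Complex.I : ℂ)‖ := by
      refine le_trans ?_ (Complex.re_le_norm _); simp
    have : |t| / ‖(1 + t * Complex.I : ℂ)‖ ≤ |t| := div_le_self (abs_nonneg _) h1
    calc _ ≤ L * |t|^2 * |t| := by gcongr
      _ = _ := by ring
  have hEn : ‖Complex.exp a‖ ≤ Real.exp (-(L * t^2/2)) := by
    rw [Complex.norm_exp]; exact Real.exp_le_exp.2 hnE
  set G := (1 - Complex.exp (-z)) * (D z)⁻¹ * Complex.exp (-(π^2 / (6 * z)))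
  have hfin : F α n (α * t) - ((Amp α * Real.exp (2 * L) * Real.exp (-(L * t^2)) : ℝ) : ℂ) =
      ((Real.exp (2 * L) : ℝ) : ℂ) * ((G - (Amp α : ℝ)) * Complex.exp a + (Amp α : ℝ) * (Complex.exp a - Complex.exp b)) := by
    rw [hsplit, hb, ← Complex.ofReal_exp]; push_cast; ring
  rw [hfin, norm_mul, Complex.norm_real, Real.norm_of_nonneg (Real.exp_pos _).le]
  have hstep : ‖(G - (Amp α : ℝ)) * Complex.exp a + (Amp α : ℝ) * (Complex.exp a - Complex.exp b)‖ ≤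
      Amp α * Real.exp (-(L * t^2/2)) * (C * (α + |t|) + L * |t|^3) := by
    refine (norm_add_le _ _).trans ?_
    rw [norm_mul, norm_mul, Complex.norm_real, Real.norm_of_nonneg hA.le]
    have e1 : ‖G - (Amp α : ℝ)‖ * ‖Complex.exp a‖ ≤ C * Amp α * (α + |t|) * Real.exp (-(L * t^2/2)) := by
      gcongr
      exact hG
    have e2 : Amp α * ‖Complex.exp a - Complex.exp b‖ ≤ Amp α * (Real.exp (-(L * t^2/2)) * (L * |t|^3)) := by
      gcongr
      exact hd.trans (by gcongr)
    linarith
  set r := √α with hr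
  have hr0 : 0 < r := Real.sqrt_pos.2 h0
  have hr2 : r^2 = α := Real.sq_sqrt h0.le
  have hr1 : r ≤ 1 := by rw [hr]; exact Real.sqrt_le_one.2 (by linarith)
  set s := |t| / r with hs
  have hts : |t| = s * r := by rw [hs]; field_simp
  have hs0 : 0 ≤ s := by positivity
  have hp9 : 9 < π^2 := by nlinarith [Real.pi_gt_three]
  have hp12 : π^2 < 12 := by nlinarith [Real.pi_lt_d2, Real.pi_gt_three]
  have hLt : L * t^2 = π^2/6 * s^2 := by
    rw [← sq_abs, hts, hL, ← hr2]; field_simp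
  have hLt3 : L * |t|^3 = π^2/6 * s^3 * r := by
    rw [hts, hL, ← hr2]; field_simp
  have hpoly := poly_exp (s := s) (y := 3/8 * (L * t^2)) hC (by
    rw [hLt]
    have := mul_le_mul_of_nonneg_right hp9.le (sq_nonneg s)
    have := sq_nonneg s
    linarith)
  have hbr : C * (α + |t|) + L * |t|^3 ≤ (C + C * s + 2 * s^3) * r := by
    rw [hLt3, hts]
    have h1 : α ≤ r := by
      have := mul_le_mul_of_nonneg_left hr1 hr0.le
      rw [← pow_two, hr2, mul_one] at this
      exact this
    have h2 : π^2/6 * s^3 * r ≤ 2 * s^3 * r := by gcongr; linarith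
    have h3 : C * α ≤ C * r := by gcongr
    linarith
  calc _ ≤ Real.exp (2 * L) * (Amp α * Real.exp (-(L * t^2/2)) * (((4 * C + 16) * Real.exp (3/8 * (L * t^2))) * r)) := by
        refine mul_le_mul_of_nonneg_left (hstep.trans ?_) (Real.exp_pos _).le
        refine mul_le_mul_of_nonneg_left (hbr.trans ?_) (by positivity)
        gcongr
    _ = (4 * C + 16) * (Amp α * Real.exp (2 * L)) * r * (Real.exp (-(L * t^2/2)) * Real.exp (3/8 * (L * t^2))) := by ring
    _ = _ := by rw [← Real.exp_add]; congr 2; ring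

end AM

namespace AM
open Filter Topology MeasureTheory

lemma far {α t : ℝ} (h0 : 0 < α) (h1 : α ≤ 1/2) (ht : 1 ≤ |t|) :
    Real.exp (-(π^2/(6*α) * t^2)) ≤ √α * Real.exp (-(π^2/(6*α)*t^2/8)) := by
  have ht2 : 1 ≤ t^2 := by rw [← sq_abs]; nlinarith
  have hp9 : 9 < π^2 := by nlinarith [Real.pi_gt_three]
  have hL : 3/2/α ≤ π^2/(6*α) := by
    rw [div_le_div_iff₀ h0 (by positivity)]; nlinarith
  have hαr : α ≤ √α := by
    apply Real.le_sqrt_of_sq_le; nlinarith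
  have h : Real.exp (-(7/8 * (π^2/(6*α) * t^2))) ≤ α := by
    rw [Real.exp_neg, inv_le_comm₀ (Real.exp_pos _) h0]
    have := Real.add_one_le_exp (7/8 * (π^2/(6*α) * t^2))
    have h2 : 3/2/α * 1 ≤ π^2/(6*α) * t^2 := by gcongr
    have h3 : 3/2/α = 3/2 * α⁻¹ := by ring
    have : 0 < α⁻¹ := by positivity
    linarith
  calc _ = Real.exp (-(7/8 * (π^2/(6*α) * t^2))) * Real.exp (-(π^2/(6*α)*t^2/8)) := by
        rw [← Real.exp_add]; congr 1; ring
    _ ≤ _ := by gcongr; exact h.trans hαr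

lemma pointwise : ∃ C : ℝ, 0 < C ∧ ∀ (α : ℝ) (n : ℕ), 0 < α → α ≤ 1/2 → n * α^2 = π^2 / 6 → ∀ θ : ℝ,
    ‖(Set.Ioc (-π) π).indicator (F α n) θ -
      ((Amp α * Real.exp (2 * (π^2/(6*α))) * Real.exp (-(π^2/(6*α^3)) * θ^2) : ℝ) : ℂ)‖ ≤
      C * (Amp α * Real.exp (2 * (π^2/(6*α)))) * √α * Real.exp (-(π^2/(48*α^3)) * θ^2) +
      (Set.Ioc (-π) π).indicator (fun _ => C * Real.exp (2 * (π^2/(6*α)) - 1/(160*α))) θ := by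
  obtain ⟨C1, hC1, hnear⟩ := near
  obtain ⟨C2, hC2, hminor⟩ := minor
  refine ⟨C1 + 2 * C2 + 1, by positivity, fun α n h0 h1 hn θ => ?_⟩
  obtain ⟨t, rfl⟩ : ∃ t, θ = α * t := ⟨θ / α, by field_simp⟩
  have e1 : -(π^2/(6*α^3)) * (α * t)^2 = -(π^2/(6*α)*t^2) := by field_simp
  have e2 : -(π^2/(48*α^3)) * (α * t)^2 = -(π^2/(6*α)*t^2/8) := by field_simp; ring
  rw [e1, e2]
  have hA : 0 < Amp α := by unfold Amp; positivity
  have hind0 : 0 ≤ (Set.Ioc (-π) π).indicator (fun _ => (C1 + 2 * C2 + 1) * Real.exp (2 * (π^2/(6*α)) - 1/(160*α))) (α * t) :=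
    Set.indicator_nonneg (fun _ _ => by positivity) _
  rcases le_or_gt |t| 1 with ht | ht
  · have hmem : α * t ∈ Set.Ioc (-π) π := by
      have := abs_le.1 ht
      constructor <;> nlinarith [Real.pi_gt_three]
    rw [Set.indicator_of_mem hmem]
    refine (hnear α t n h0 h1 hn ht).trans ?_
    refine le_trans ?_ (le_add_of_nonneg_right hind0)
    gcongr
    linarith
  · have hgauss : ‖((Amp α * Real.exp (2 * (π^2/(6*α))) * Real.exp (-(π^2/(6*α) * t^2)) : ℝ) : ℂ)‖ ≤
        (C1 + 2 * C2 + 1) * (Amp α * Real.exp (2 * (π^2/(6*α)))) * √α * Real.exp (-(π^2/(6*α)*t^2/8)) := by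
      rw [Complex.norm_real, Real.norm_of_nonneg (by positivity)]
      calc _ ≤ 1 * (Amp α * Real.exp (2 * (π^2/(6*α)))) * (√α * Real.exp (-(π^2/(6*α)*t^2/8))) := by
            rw [one_mul]; gcongr; exact far h0 h1 ht.le
        _ ≤ (C1 + 2 * C2 + 1) * (Amp α * Real.exp (2 * (π^2/(6*α)))) * (√α * Real.exp (-(π^2/(6*α)*t^2/8))) := by
            gcongr; linarith
        _ = _ := by ring
    by_cases hmem : α * t ∈ Set.Ioc (-π) π
    · rw [Set.indicator_of_mem hmem, Set.indicator_of_mem hmem]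
      refine (norm_sub_le _ _).trans ?_
      rw [add_comm]
      refine add_le_add hgauss ?_
      have hm := hminor α (α * t) h0 h1 (by rw [abs_mul, abs_of_pos h0]; nlinarith)
        (abs_le.2 ⟨hmem.1.le, hmem.2⟩)
      have hz : 0 < ((α:ℂ) + (α * t : ℝ) * Complex.I).re := by simpa using h0
      unfold F
      rw [norm_mul, norm_mul]
      have k1 : ‖1 - Complex.exp (-(α + (α * t : ℝ) * Complex.I))‖ ≤ 2 := by
        refine (norm_sub_le _ _).trans ?_
        rw [norm_one]; linarith [norm_exp_neg_lt hz]
      have k2 : ‖Complex.exp (n * (α + (α * t : ℝ) * Complex.I))‖ = Real.exp (π^2/(6*α)) := by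
        have hnL : (n:ℝ) * α = π^2/(6*α) := by field_simp; linarith
        rw [Complex.norm_exp, ← hnL]
        simp
      rw [k2]
      calc _ ≤ 2 * (C2 * Real.exp (π^2/(6*α) - 1/(160*α))) * Real.exp (π^2/(6*α)) := by gcongr
        _ = 2 * C2 * Real.exp (2 * (π^2/(6*α)) - 1/(160*α)) := by
          rw [show 2 * (π^2/(6*α)) - 1/(160*α) = (π^2/(6*α) - 1/(160*α)) + π^2/(6*α) by ring, Real.exp_add]
          ring
        _ ≤ _ := by gcongr; linarith
    · rw [Set.indicator_of_notMem hmem, zero_sub, norm_neg]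
      exact hgauss.trans (le_add_of_nonneg_right hind0)

lemma key_alpha : ∃ C : ℝ, 0 < C ∧ ∀ (α : ℝ) (n : ℕ), 0 < α → α ≤ 1/2 → (n + 1 : ℝ) * α^2 = π^2 / 6 →
    |((partitionCount (n+1) : ℝ) - partitionCount n) - √3 / (2 * π^2) * α^3 * Real.exp (2 * (π^2/(6*α)))| ≤
      C * α^3 * √α * Real.exp (2 * (π^2/(6*α))) := by
  obtain ⟨C, hC, h⟩ := pointwise
  refine ⟨C * 2 + C * (24 * 160^4), by positivity, fun α n h0 h1 hn => ?_⟩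
  have hp := h α (n+1) h0 h1 (by push_cast; exact hn)
  set L := π^2/(6*α) with hL
  set M := Amp α * Real.exp (2 * L) with hM
  have hA : 0 < Amp α := by unfold Amp; positivity
  have hM0 : 0 < M := by positivity
  have hb : 0 < π^2/(6*α^3) := by positivity
  have hb8 : 0 < π^2/(48*α^3) := by positivity
  have i1 : Integrable (fun θ : ℝ => M * Real.exp (-(π^2/(6*α^3)) * θ^2)) := (integrable_exp_neg_mul_sq hb).const_mul _
  have i2 : Integrable (fun θ : ℝ => C * M * √α * Real.exp (-(π^2/(48*α^3)) * θ^2)) := (integrable_exp_neg_mul_sq hb8).const_mul _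
  have i3 : Integrable ((Set.Ioc (-π) π).indicator (fun _ : ℝ => C * Real.exp (2 * L - 1/(160*α)))) := by
    rw [integrable_indicator_iff measurableSet_Ioc]
    exact continuous_const.integrableOn_Ioc
  have i4 : Integrable ((Set.Ioc (-π) π).indicator (F α (n+1))) := by
    rw [integrable_indicator_iff measurableSet_Ioc]
    exact (F_cont h0 (n+1)).integrableOn_Ioc
  have hI := norm_integral_le_of_norm_le (i2.add i3) (Eventually.of_forall hp)
  have i1' : Integrable (fun θ : ℝ => ((M * Real.exp (-(π^2/(6*α^3)) * θ^2) : ℝ) : ℂ)) := i1.ofReal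
  rw [integral_sub i4 i1', integral_indicator measurableSet_Ioc,
    ← intervalIntegral.integral_of_le (by linarith [Real.pi_pos]), diff_formula h0] at hI
  have j1 : ∫ θ : ℝ, ((M * Real.exp (-(π^2/(6*α^3)) * θ^2) : ℝ) : ℂ) = ((M * √(π / (π^2/(6*α^3))) : ℝ) : ℂ) := by
    rw [integral_complex_ofReal, integral_const_mul, integral_gaussian]
  have j2 : ∫ θ : ℝ, ((fun θ : ℝ => C * M * √α * Real.exp (-(π^2/(48*α^3)) * θ^2)) + (Set.Ioc (-π) π).indicator (fun _ : ℝ => C * Real.exp (2 * L - 1/(160*α)))) θ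
      = C * M * √α * √(π / (π^2/(48*α^3))) + 2 * π * (C * Real.exp (2 * L - 1/(160*α))) := by
    rw [integral_add' i2 i3, integral_const_mul, integral_gaussian, integral_indicator measurableSet_Ioc]
    simp
    left
    rw [max_eq_left (by linarith [Real.pi_pos])]; ring
  rw [j1] at hI
  replace hI := hI.trans_eq j2
  rw [← Complex.ofReal_sub, Complex.norm_real, Real.norm_eq_abs] at hI
  have s1 : M * √(π / (π^2/(6*α^3))) = √3 / π * α^3 * Real.exp (2 * L) := by
    have : √(α / (2 * π)) * √(π / (π^2/(6*α^3))) = √3 / π * α^2 := by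
      rw [← Real.sqrt_mul (by positivity), show α / (2 * π) * (π / (π^2/(6*α^3))) = 3 * (α^2/π)^2 by field_simp; norm_num,
        Real.sqrt_mul (by norm_num), Real.sqrt_sq (by positivity)]
      ring
    rw [hM, Amp]
    linear_combination (α * Real.exp (2 * L)) * this
  have s2 : M * √(π / (π^2/(48*α^3))) ≤ 2 * (2 * π) * α^3 * Real.exp (2 * L) := by
    have : √(π / (π^2/(48*α^3))) = √8 * √(π / (π^2/(6*α^3))) := by
      rw [← Real.sqrt_mul (by norm_num)]; congr 1; field_simp; norm_num
    rw [this, mul_left_comm, s1]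
    have h8 : √8 ≤ 3 := by rw [Real.sqrt_le_left (by norm_num)]; norm_num
    have h3 : √3 ≤ 2 := by rw [Real.sqrt_le_left (by norm_num)]; norm_num
    have : √8 * (√3 / π) ≤ 2 * (2 * π) := by
      rw [← mul_div_assoc, div_le_iff₀ Real.pi_pos]
      have : √8 * √3 ≤ 3 * 2 := by gcongr
      nlinarith [Real.pi_gt_three]
    calc _ = (√8 * (√3 / π)) * α^3 * Real.exp (2 * L) := by ring
      _ ≤ _ := by gcongr
  have hr2 : √α * √α = α := Real.mul_self_sqrt h0.le
  have hr1 : √α ≤ 1 := Real.sqrt_le_one.2 (by linarith)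
  have s3 : Real.exp (2 * L - 1/(160*α)) ≤ 24 * 160^4 * α^3 * √α * Real.exp (2 * L) := by
    have k := Real.pow_div_factorial_le_exp (1/(160*α)) (by positivity) 4
    have : Real.exp (-(1/(160*α))) ≤ 24 * 160^4 * α^4 := by
      rw [Real.exp_neg, inv_le_comm₀ (Real.exp_pos _) (by positivity)]
      refine le_trans (le_of_eq ?_) k
      simp [Nat.factorial]; field_simp
    have h4 : α^4 ≤ α^3 * √α := by
      rw [pow_succ]; gcongr; nlinarith [Real.sqrt_nonneg α]
    rw [sub_eq_add_neg, Real.exp_add, mul_comm]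
    gcongr
    nlinarith
  have hpi := Real.pi_pos
  have hfin : 2 * π * |((partitionCount (n+1) : ℝ) - partitionCount n) - √3 / (2 * π^2) * α^3 * Real.exp (2 * L)| ≤
      2 * π * ((C * 2 + C * (24 * 160^4)) * α^3 * √α * Real.exp (2 * L)) := by
    rw [← abs_of_pos (by positivity : 0 < 2 * π), ← abs_mul, abs_of_pos (by positivity : 0 < 2 * π)]
    have : 2 * π * (((partitionCount (n+1) : ℝ) - partitionCount n) - √3 / (2 * π^2) * α^3 * Real.exp (2 * L)) =
      2 * π * ((partitionCount (n+1) : ℝ) - partitionCount n) - M * √(π / (π^2/(6*α^3))) := by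
      rw [s1]; field_simp
    rw [this]
    refine hI.trans ?_
    calc _ = C * √α * (M * √(π / (π^2/(48*α^3)))) + 2 * π * (C * Real.exp (2 * L - 1/(160*α))) := by ring
      _ ≤ C * √α * (2 * (2 * π) * α^3 * Real.exp (2 * L)) + 2 * π * (C * (24 * 160^4 * α^3 * √α * Real.exp (2 * L))) := by gcongr
      _ = _ := by ring
  exact le_of_mul_le_mul_left hfin (by positivity)

end AM

namespace AM
open Filter Topology MeasureTheory

/-- exponential growth factor -/
noncomputable def Ex (x : ℝ) : ℝ := Real.exp (2 * π * √x / √6)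

lemma key_n : ∃ C : ℝ, 0 < C ∧ ∀ m : ℕ, 7 ≤ m →
    |((partitionCount m : ℝ) - partitionCount (m - 1)) - π / (12 * √2) * (m : ℝ) ^ (-(3:ℝ)/2) * Ex m| ≤
      C * (m : ℝ) ^ (-(7:ℝ)/4) * Ex m := by
  obtain ⟨C, hC, h⟩ := key_alpha
  refine ⟨C * ((π / √6) ^ 3 * √(π/√6)), by positivity, fun m hm => ?_⟩
  obtain ⟨n, rfl⟩ : ∃ n, m = n + 1 := ⟨m - 1, by omega⟩
  rw [Nat.add_sub_cancel]
  have hx : (7:ℝ) ≤ ((n+1:ℕ):ℝ) := by exact_mod_cast hm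
  have hx1 : ((n+1:ℕ):ℝ) = n + 1 := by push_cast; rfl
  set x : ℝ := ((n+1:ℕ):ℝ) with hxd
  have hx0 : 0 < x := by linarith
  set s := √x with hs
  have hs0 : 0 < s := Real.sqrt_pos.2 hx0
  have hs2 : s^2 = x := Real.sq_sqrt hx0.le
  have h6 : √6 ^ 2 = (6:ℝ) := Real.sq_sqrt (by norm_num)
  have h60 : 0 < √6 := by positivity
  have hk := h (π / √6 / s) n (by positivity) ?_ ?_
  · have e1 : π^2 / (6 * (π / √6 / s)) = π * s / √6 := by
      field_simp; rw [h6]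
    have e1' : Real.exp (2 * (π^2 / (6 * (π / √6 / s)))) = Ex x := by
      rw [e1, Ex, ← hs]; congr 1; ring
    have e2 : x ^ (-(3:ℝ)/2) = 1 / s^3 := by
      rw [hs, Real.sqrt_eq_rpow, ← Real.rpow_natCast, ← Real.rpow_mul hx0.le, one_div, ← Real.rpow_neg hx0.le]
      norm_num
    have e3 : x ^ (-(7:ℝ)/4) = 1 / (s^3 * √s) := by
      rw [hs, Real.sqrt_eq_rpow, Real.sqrt_eq_rpow, ← Real.rpow_natCast, ← Real.rpow_mul hx0.le, ← Real.rpow_mul hx0.le, 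
        ← Real.rpow_add hx0, one_div, ← Real.rpow_neg hx0.le]
      norm_num
    have e4 : √(π / √6 / s) = √(π / √6) / √s := Real.sqrt_div (by positivity) _
    have e5 : √3 / (2 * π^2) * (π / √6 / s)^3 = π / (12 * √2) * (1 / s^3) := by
      have h62 : √6 = √3 * √2 := by rw [← Real.sqrt_mul (by norm_num)]; norm_num
      have h3 : √3 ^ 2 = (3:ℝ) := Real.sq_sqrt (by norm_num)
      have h2 : √2 ^ 2 = (2:ℝ) := Real.sq_sqrt (by norm_num)
      rw [h62]
      field_simp
      rw [h3, h2]; norm_num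
    rw [e1', e5, e4] at hk
    rw [e2, e3]
    refine hk.trans (le_of_eq ?_)
    field_simp
  · rw [div_div, div_le_iff₀ (by positivity)]
    have : (2 * π)^2 ≤ (√6 * s)^2 := by
      rw [mul_pow, mul_pow, h6, hs2]
      nlinarith [Real.pi_lt_d2, Real.pi_gt_three]
    have := le_of_sq_le_sq this (by positivity)
    linarith
  · rw [← hx1, div_pow, div_pow, h6, hs2]; field_simp

lemma ratio_pow {m n : ℝ} {a : ℝ} (hm : 0 < m) (hn : n / 2 ≤ m) (hmn : m ≤ n) (ha0 : 0 ≤ a) (ha : a ≤ 2) :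
    m ^ (-a) ≤ n ^ (-a) * (1 + 6 * ((n - m) / n)) ∧ m ^ (-a) ≤ 4 * n ^ (-a) := by
  have hn0 : 0 < n := by linarith
  have e : m ^ (-a) = n ^ (-a) * (n / m) ^ a := by
    rw [Real.div_rpow hn0.le hm.le, Real.rpow_neg hm.le, Real.rpow_neg hn0.le]
    have := (Real.rpow_pos_of_pos hn0 a).ne'
    field_simp
  have h1 : 1 ≤ n / m := by rw [le_div_iff₀ hm]; linarith
  have h2 : (n/m) ^ a ≤ (n/m)^2 := by
    rw [← Real.rpow_natCast]; exact Real.rpow_le_rpow_of_exponent_le h1 (by exact_mod_cast ha)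
  have h3 : n / m ≤ 1 + 2 * ((n-m)/n) := by
    have : 1 + 2 * ((n-m)/n) = (3 * n - 2 * m) / n := by field_simp; ring
    rw [this, div_le_div_iff₀ hm hn0]; nlinarith
  have hy0 : 0 ≤ (n-m)/n := div_nonneg (by linarith) hn0.le
  have hy1 : (n-m)/n ≤ 1/2 := by rw [div_le_iff₀ hn0]; linarith
  have hp := Real.rpow_pos_of_pos hn0 (-a)
  have h4 : (n/m)^2 ≤ 1 + 6 * ((n-m)/n) := by nlinarith
  rw [e]
  constructor
  · gcongr; linarith
  · rw [mul_comm 4]; gcongr; nlinarith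

lemma Ex_mono {x y : ℝ} (h : x ≤ y) : Ex x ≤ Ex y := by
  unfold Ex; gcongr

lemma Ex_diff {m n : ℝ} (hm : 0 < m) (hmn : m ≤ n) : Ex n - Ex m ≤ Ex n * (3 * ((n - m) * n ^ (-(1:ℝ)/2))) := by
  have hn0 : 0 < n := by linarith
  have e : n ^ (-(1:ℝ)/2) = 1 / √n := by
    rw [Real.sqrt_eq_rpow, one_div, ← Real.rpow_neg hn0.le]; norm_num
  have h1 : √n - √m ≤ (n - m) * (1 / √n) := by
    have hs : 0 < √n := Real.sqrt_pos.2 hn0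
    rw [mul_one_div, le_div_iff₀ hs]
    have h2 := Real.mul_self_sqrt hn0.le
    have h3 := Real.mul_self_sqrt hm.le
    have h4 : √m ≤ √n := Real.sqrt_le_sqrt hmn
    nlinarith [Real.sqrt_nonneg m]
  have hc : 2 * π / √6 ≤ 3 := by
    have : (2.4:ℝ) ≤ √6 := Real.le_sqrt_of_sq_le (by norm_num)
    rw [div_le_iff₀ (by positivity)]
    nlinarith [Real.pi_lt_d2]
  have h5 : Ex m = Ex n * Real.exp (-(2 * π / √6 * (√n - √m))) := by
    unfold Ex; rw [← Real.exp_add]; congr 1; ring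
  have h6 := Real.add_one_le_exp (-(2 * π / √6 * (√n - √m)))
  have hE : 0 < Ex n := Real.exp_pos _
  have h0 : 0 ≤ √n - √m := sub_nonneg.2 (Real.sqrt_le_sqrt hmn)
  rw [h5, e]
  have h7 : 2 * π / √6 * (√n - √m) ≤ 3 * ((n - m) * (1 / √n)) := by gcongr
  calc _ = Ex n * (1 - Real.exp (-(2 * π / √6 * (√n - √m)))) := by ring
    _ ≤ _ := by gcongr; linarith

lemma key_local : ∃ C : ℝ, 0 < C ∧ ∀ n m : ℕ, 16 ≤ n → m ≤ n → (n:ℝ) - m ≤ 2 * (n:ℝ) ^ ((1:ℝ)/4) →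
    |((partitionCount m : ℝ) - partitionCount (m - 1)) - π / (12 * √2) * (n : ℝ) ^ (-(3:ℝ)/2) * Ex n| ≤
      C * (n : ℝ) ^ (-(7:ℝ)/4) * Ex n := by
  obtain ⟨C, hC, h⟩ := key_n
  refine ⟨4 * C + 18, by positivity, fun n m hn hmn hd => ?_⟩
  have hn' : (16:ℝ) ≤ n := by exact_mod_cast hn
  have hn0 : (0:ℝ) < n := by linarith
  have hmn' : (m:ℝ) ≤ n := by exact_mod_cast hmn
  set y := (n:ℝ) ^ ((1:ℝ)/4) with hy
  have hy4 : y^4 = n := by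
    rw [hy, ← Real.rpow_natCast, ← Real.rpow_mul hn0.le]; norm_num
  have hy0 : 0 < y := Real.rpow_pos_of_pos hn0 _
  have hy2 : 2 ≤ y := by
    by_contra hlt
    push Not at hlt
    have : y^4 < 2^4 := by gcongr
    linarith
  have hy8 : 8 * y ≤ n := by
    rw [← hy4]
    have : (2:ℝ)^3 ≤ y^3 := by gcongr
    nlinarith
  have hm2 : (n:ℝ)/2 ≤ m := by linarith
  have hm7 : 7 ≤ m := by
    have : (7:ℝ) ≤ m := by linarith
    exact_mod_cast this
  have hm0 : (0:ℝ) < m := by linarith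
  have hk := h m hm7
  have e32 : -(3:ℝ)/2 = -(3/2) := by ring
  have e74 : -(7:ℝ)/4 = -(7/4) := by ring
  obtain ⟨r1, _⟩ := ratio_pow (a := 3/2) hm0 hm2 hmn' (by norm_num) (by norm_num)
  obtain ⟨_, r2⟩ := ratio_pow (a := 7/4) hm0 hm2 hmn' (by norm_num) (by norm_num)
  rw [← e32] at r1
  rw [← e74] at r2
  have hEm := Ex_mono hmn'
  have hE0 : 0 < Ex m := Real.exp_pos _
  have hEn0 : 0 < Ex n := Real.exp_pos _
  have hEd := Ex_diff hm0 hmn'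
  set P := (n:ℝ) ^ (-(3:ℝ)/2) with hP
  set Q := (n:ℝ) ^ (-(7:ℝ)/4) with hQ
  have hP0 : 0 < P := Real.rpow_pos_of_pos hn0 _
  have hQ0 : 0 < Q := Real.rpow_pos_of_pos hn0 _
  have hPn : P ≤ (m:ℝ) ^ (-(3:ℝ)/2) := by
    rw [hP]; exact Real.rpow_le_rpow_of_nonpos hm0 hmn' (by norm_num)
  have q1 : P * (6 * (((n:ℝ) - m) / n)) ≤ 12 * Q := by
    have : P * (y / n) ≤ Q := by
      rw [hP, hQ, hy, ← Real.rpow_sub_one hn0.ne', ← Real.rpow_add hn0]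
      exact Real.rpow_le_rpow_of_exponent_le (by linarith) (by norm_num)
    calc _ ≤ P * (6 * ((2 * y) / n)) := by gcongr
      _ = 12 * (P * (y / n)) := by ring
      _ ≤ _ := by gcongr
  have q2 : P * (3 * (((n:ℝ) - m) * (n:ℝ) ^ (-(1:ℝ)/2))) ≤ 6 * Q := by
    have : P * (y * (n:ℝ) ^ (-(1:ℝ)/2)) = Q := by
      rw [hP, hQ, hy, ← Real.rpow_add hn0, ← Real.rpow_add hn0]; norm_num
    calc _ ≤ P * (3 * ((2 * y) * (n:ℝ) ^ (-(1:ℝ)/2))) := by gcongr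
      _ = 6 * (P * (y * (n:ℝ) ^ (-(1:ℝ)/2))) := by ring
      _ = _ := by rw [this]
  have hdiff : |(m:ℝ) ^ (-(3:ℝ)/2) * Ex m - P * Ex n| ≤ 18 * Q * Ex n := by
    have e : (m:ℝ) ^ (-(3:ℝ)/2) * Ex m - P * Ex n = ((m:ℝ) ^ (-(3:ℝ)/2) - P) * Ex m - P * (Ex n - Ex m) := by ring
    rw [e]
    have b1 : ((m:ℝ) ^ (-(3:ℝ)/2) - P) * Ex m ≤ 12 * Q * Ex n := by
      have : (m:ℝ) ^ (-(3:ℝ)/2) - P ≤ 12 * Q := by linarith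
      gcongr
    have b2 : P * (Ex n - Ex m) ≤ 6 * Q * Ex n := by
      calc _ ≤ P * (Ex n * (3 * (((n:ℝ) - m) * (n:ℝ) ^ (-(1:ℝ)/2)))) := by gcongr
        _ = (P * (3 * (((n:ℝ) - m) * (n:ℝ) ^ (-(1:ℝ)/2)))) * Ex n := by ring
        _ ≤ _ := by gcongr
    have b3 : 0 ≤ ((m:ℝ) ^ (-(3:ℝ)/2) - P) * Ex m := mul_nonneg (by linarith) hE0.le
    have b4 : 0 ≤ P * (Ex n - Ex m) := mul_nonneg hP0.le (by linarith)
    have b5 : 0 ≤ Q * Ex n := by positivity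
    rw [abs_le]; constructor <;> linarith
  have hA : π / (12 * √2) ≤ 1 := by
    have : 1 ≤ √2 := Real.one_le_sqrt.2 (by norm_num)
    rw [div_le_one (by positivity)]; linarith [Real.pi_lt_d2]
  have hA0 : 0 ≤ π / (12 * √2) := by positivity
  have e : ((partitionCount m : ℝ) - partitionCount (m - 1)) - π / (12 * √2) * P * Ex n =
    (((partitionCount m : ℝ) - partitionCount (m - 1)) - π / (12 * √2) * (m : ℝ) ^ (-(3:ℝ)/2) * Ex m) +
      π / (12 * √2) * ((m:ℝ) ^ (-(3:ℝ)/2) * Ex m - P * Ex n) := by ring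
  rw [e]
  refine (abs_add_le _ _).trans ?_
  rw [abs_mul, abs_of_nonneg hA0]
  calc _ ≤ C * (4 * Q) * Ex n + 1 * (18 * Q * Ex n) := by
        gcongr
        exact hk.trans (by gcongr)
    _ = _ := by ring

lemma block {G H : ℝ} (a b : ℕ) (h : ∀ m, a < m → m ≤ a + b → |((partitionCount m : ℝ) - partitionCount (m - 1)) - G| ≤ H) :
    |((partitionCount (a + b) : ℝ) - partitionCount a) - b * G| ≤ b * H := by
  induction b with
  | zero => simp
  | succ b ih =>
    have h1 := ih fun m h1 h2 => h m h1 (by omega)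
    have h2 := h (a + (b+1)) (by omega) le_rfl
    rw [show a + (b+1) - 1 = a + b by omega] at h2
    have e : ((partitionCount (a + (b+1)) : ℝ) - partitionCount a) - ((b+1:ℕ):ℝ) * G =
      (((partitionCount (a + b) : ℝ) - partitionCount a) - b * G) +
      (((partitionCount (a + (b+1)) : ℝ) - partitionCount (a + b)) - G) := by push_cast; ring
    rw [e]
    refine (abs_add_le _ _).trans ?_
    push_cast
    linarith

lemma sum_odd (k : ℕ) : ∑ j ∈ range k, (2 * (j:ℝ) + 1) = k^2 := by
  induction k with
  | zero => simp
  | succ k ih => rw [sum_range_succ, ih]; push_cast; ring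

lemma sum_alt (k : ℕ) : ∑ j ∈ range k, (-1:ℝ)^j * (2 * (j:ℝ) + 1) = -(-1)^k * k := by
  induction k with
  | zero => simp
  | succ k ih => rw [sum_range_succ, ih]; push_cast; ring

lemma term_bound {n k j : ℕ} {G H : ℝ} (hj : j < k) (hk : 2 * k^2 ≤ n)
    (h : ∀ m, n ≤ m + 2 * k^2 → m ≤ n → |((partitionCount m : ℝ) - partitionCount (m - 1)) - G| ≤ H) :
    |((pZ ((n:ℤ) - (j : ℤ) * (3 * j + 1) / 2) - pZ ((n:ℤ) - (j : ℤ) * (3 * j + 5) / 2 - 1) : ℤ) : ℝ) - (2 * j + 1) * G| ≤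
      (2 * j + 1) * H := by
  obtain ⟨a, ha⟩ : ∃ a : ℕ, j * (3 * j + 1) = 2 * a := by
    have : Even (j * (3 * j + 1)) := by
      rcases Nat.even_or_odd j with h | h
      · exact h.mul_right _
      · apply Even.mul_left; obtain ⟨c, rfl⟩ := h; exact ⟨3 * c + 2, by ring⟩
    obtain ⟨c, hc⟩ := this
    exact ⟨c, by omega⟩
  have hb : j * (3 * j + 5) = 2 * (a + 2 * j) := by linarith
  have haz : (j : ℤ) * (3 * j + 1) / 2 = a := by
    have : (j : ℤ) * (3 * j + 1) = 2 * a := by exact_mod_cast ha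
    omega
  have hbz : (j : ℤ) * (3 * j + 5) / 2 = a + 2 * j := by
    have : (j : ℤ) * (3 * j + 5) = 2 * (a + 2 * j) := by exact_mod_cast hb
    omega
  have hle : a + 2 * j + 1 ≤ 2 * k^2 := by
    have : (j+1)^2 ≤ k^2 := Nat.pow_le_pow_left hj 2
    nlinarith
  obtain ⟨c, hc⟩ : ∃ c, n = c + (a + 2 * j + 1) := ⟨n - (a + 2*j+1), by omega⟩
  have e1 : pZ ((n:ℤ) - (j : ℤ) * (3 * j + 1) / 2) = partitionCount (c + (2 * j + 1)) := by
    rw [haz, show (n:ℤ) - a = ((c + (2*j+1) : ℕ) : ℤ) by rw [hc]; push_cast; ring, pZ, if_pos (by positivity)]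
    rfl
  have e2 : pZ ((n:ℤ) - (j : ℤ) * (3 * j + 5) / 2 - 1) = partitionCount c := by
    rw [hbz, show (n:ℤ) - (a + 2 * j) - 1 = (c : ℤ) by rw [hc]; push_cast; ring, pZ, if_pos (by positivity)]
    rfl
  rw [e1, e2]
  have := block (G := G) (H := H) c (2 * j + 1) fun m h1 h2 => h m (by omega) (by omega)
  push_cast at this ⊢
  exact this

theorem main (ε : ℝ) (hε : 0 < ε) :
    ∃ C : ℝ, 0 < C ∧ ∃ N : ℕ, ∀ n : ℕ, N ≤ n → ∀ k : ℕ, 0 < k →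
      (k : ℝ) ≤ (n : ℝ) ^ ((1 : ℝ) / 8 - ε) →
      |(andrewsMercaM k n : ℝ) -
          π / (12 * Real.sqrt 2) * k * (n : ℝ) ^ (-(3 : ℝ) / 2) *
            Real.exp (2 * π * Real.sqrt n / Real.sqrt 6)| ≤
        C * k ^ 3 * (n : ℝ) ^ (-(7 : ℝ) / 4) * Real.exp (2 * π * Real.sqrt n / Real.sqrt 6) := by
  obtain ⟨C, hC, h⟩ := key_local
  refine ⟨C, hC, 16, fun n hn k hk hkn => ?_⟩
  have hn' : (16:ℝ) ≤ n := by exact_mod_cast hn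
  have hn0 : (0:ℝ) < n := by linarith
  have hk1 : (1:ℝ) ≤ k := by exact_mod_cast hk
  have hk8 : (k:ℝ) ≤ (n:ℝ) ^ ((1:ℝ)/8) :=
    hkn.trans (Real.rpow_le_rpow_of_exponent_le (by linarith) (by linarith))
  set y := (n:ℝ) ^ ((1:ℝ)/4) with hy
  have hk2 : (k:ℝ)^2 ≤ y := by
    have : ((n:ℝ) ^ ((1:ℝ)/8))^2 = y := by
      rw [hy, ← Real.rpow_natCast, ← Real.rpow_mul hn0.le]; norm_num
    rw [← this]; gcongr
  have hy4 : y^4 = n := by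
    rw [hy, ← Real.rpow_natCast, ← Real.rpow_mul hn0.le]; norm_num
  have hy0 : 0 < y := Real.rpow_pos_of_pos hn0 _
  have hy2 : 2 ≤ y := by
    by_contra hlt
    push Not at hlt
    have : y^4 < 2^4 := by gcongr
    linarith
  have hyn : 2 * y ≤ n := by
    rw [← hy4]
    have : (2:ℝ)^3 ≤ y^3 := by gcongr
    nlinarith
  have hkn2 : 2 * k^2 ≤ n := by
    have : 2 * (k:ℝ)^2 ≤ n := by linarith
    exact_mod_cast this
  change |(andrewsMercaM k n : ℝ) - π / (12 * √2) * k * (n : ℝ) ^ (-(3 : ℝ) / 2) * Ex n| ≤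
    C * k ^ 3 * (n : ℝ) ^ (-(7 : ℝ) / 4) * Ex n
  set G := π / (12 * √2) * (n : ℝ) ^ (-(3 : ℝ) / 2) * Ex n with hG
  set H := C * (n : ℝ) ^ (-(7 : ℝ) / 4) * Ex n with hH
  have hH0 : 0 ≤ H := by
    have : 0 < Ex n := Real.exp_pos _
    positivity
  have hterm : ∀ m, n ≤ m + 2 * k^2 → m ≤ n → |((partitionCount m : ℝ) - partitionCount (m - 1)) - G| ≤ H := by
    intro m h1 h2
    refine h n m hn h2 ?_
    have : (n:ℝ) ≤ m + 2 * k^2 := by exact_mod_cast h1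
    linarith
  have e1 : (-1:ℝ)^(k-1) * (-(-1)^k) = 1 := by
    obtain ⟨l, rfl⟩ : ∃ l, k = l + 1 := ⟨k - 1, by omega⟩
    rw [Nat.add_sub_cancel, pow_succ]
    have : (-1:ℝ)^l * (-1)^l = 1 := by rw [← mul_pow]; norm_num
    linear_combination this
  have e2 : π / (12 * √2) * k * (n : ℝ) ^ (-(3 : ℝ) / 2) * Ex n =
      (-1:ℝ)^(k-1) * ∑ j ∈ range k, (-1:ℝ)^j * ((2 * (j:ℝ) + 1) * G) := by
    simp_rw [← mul_assoc]
    rw [← Finset.sum_mul, sum_alt]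
    rw [hG]
    linear_combination -(π / (12 * √2) * k * (n : ℝ) ^ (-(3 : ℝ) / 2) * Ex n) * e1
  rw [e2, andrewsMercaM]
  push_cast
  rw [← mul_sub, ← Finset.sum_sub_distrib, abs_mul, abs_pow, abs_neg, abs_one, one_pow, one_mul]
  calc _ ≤ ∑ j ∈ range k, (2 * (j:ℝ) + 1) * H := by
        refine (Finset.abs_sum_le_sum_abs _ _).trans (Finset.sum_le_sum fun j hj => ?_)
        rw [← mul_sub, abs_mul, abs_pow, abs_neg, abs_one, one_pow, one_mul]
        have := term_bound (Finset.mem_range.1 hj) hkn2 hterm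
        push_cast at this
        exact this
    _ = k^2 * H := by rw [← Finset.sum_mul, sum_odd]
    _ ≤ k^3 * H := by gcongr; norm_num
    _ = _ := by rw [hH]; ring

end AM

theorem andrewsMercaM_asymptotic (ε : ℝ) (hε : 0 < ε) :
    ∃ C : ℝ, 0 < C ∧ ∃ N : ℕ, ∀ n : ℕ, N ≤ n → ∀ k : ℕ, 0 < k →
      (k : ℝ) ≤ (n : ℝ) ^ ((1 : ℝ) / 8 - ε) →
      |(andrewsMercaM k n : ℝ) -
          π / (12 * Real.sqrt 2) * k * (n : ℝ) ^ (-(3 : ℝ) / 2) *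
            Real.exp (2 * π * Real.sqrt n / Real.sqrt 6)| ≤
        C * k ^ 3 * (n : ℝ) ^ (-(7 : ℝ) / 4) * Real.exp (2 * π * Real.sqrt n / Real.sqrt 6) := by
  exact AM.main ε hε
end

section
/- For every fixed positive integer k, there exists N such that M_k(n) > 0 for all n ≥ N. -/
open Finset

namespace AMproof

open PowerSeries

/-- Generating function of partitions with all parts larger than `b`. -/
noncomputable def Q (b : ℕ) : PowerSeries ℤ :=
  PowerSeries.mk fun n => ((Nat.Partition.restricted n (fun i => b < i)).card : ℤ)

/-- Geometric series in `X ^ m`. -/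
noncomputable def G (m : ℕ) : PowerSeries ℤ := PowerSeries.mk fun n => if m ∣ n then 1 else 0

noncomputable def I : ℕ → PowerSeries ℤ
  | 0 => 1
  | j + 1 => I j * G (j + 1)

noncomputable def E : ℕ → PowerSeries ℤ
  | 0 => 1
  | j + 1 => E j * (1 - X ^ (j + 1))

def t : ℕ → ℕ
  | 0 => 0
  | j + 1 => t j + (j + 1)

noncomputable def c (j k : ℕ) : PowerSeries ℤ := X ^ (k * j + t j) * I j

noncomputable def f (J k : ℕ) : PowerSeries ℤ := ∑ j ∈ range J, (-1) ^ j * c j k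

noncomputable def S (k : ℕ) : PowerSeries ℤ :=
  ∑ j ∈ range k, (-1) ^ j * (X ^ (j ^ 2 + t j) * (1 - X ^ (2 * j + 1)))

def NN (φ : PowerSeries ℤ) : Prop := ∀ n, 0 ≤ coeff n φ

lemma NN.mul {φ ψ : PowerSeries ℤ} (h : NN φ) (h' : NN ψ) : NN (φ * ψ) := by
  intro n
  rw [coeff_mul]
  exact Finset.sum_nonneg fun x _ => mul_nonneg (h _) (h' _)

lemma NN_X_pow (m : ℕ) : NN (X ^ m) := by
  intro n
  rw [coeff_X_pow]
  split_ifs <;> simp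

lemma NN_G (m : ℕ) : NN (G m) := by
  intro n
  rw [G, coeff_mk]
  split_ifs <;> simp

lemma NN_I (j : ℕ) : NN (I j) := by
  induction j with
  | zero => intro n; rw [I, coeff_one]; split_ifs <;> simp
  | succ j ih => exact ih.mul (NN_G _)

lemma NN_Q (b : ℕ) : NN (Q b) := by
  intro n
  rw [Q, coeff_mk]
  positivity

lemma NN_c (j k : ℕ) : NN (c j k) := (NN_X_pow _).mul (NN_I _)

lemma G_mul (m : ℕ) : G (m + 1) * (1 - X ^ (m + 1)) = 1 := by
  ext n
  rw [mul_sub, mul_one, map_sub, coeff_mul_X_pow', coeff_one]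
  simp only [G, coeff_mk]
  rcases Nat.eq_zero_or_pos n with rfl | hn
  · simp
  by_cases h : m + 1 ≤ n
  · have : (m + 1 ∣ n - (m + 1)) ↔ (m + 1 ∣ n) := by
      rw [Nat.dvd_sub_self_right]
      constructor
      · rintro (h1 | h1)
        · exact h1
        · have : n = m + 1 := by omega
          simp [this]
      · exact Or.inl
    simp [h, this, hn.ne']
  · have : ¬ (m + 1 ∣ n) := fun hd => h (Nat.le_of_dvd hn hd)
    simp [h, this, hn.ne']

lemma E_mul_I (j : ℕ) : E j * I j = 1 := by
  induction j with
  | zero => simp [E, I]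
  | succ j ih =>
    calc E (j+1) * I (j+1) = (E j * I j) * (G (j + 1) * (1 - X ^ (j + 1))) := by
          rw [E, I]; ring
      _ = 1 := by rw [ih, G_mul, one_mul]

lemma I_succ (j : ℕ) : I (j + 1) * (1 - X ^ (j + 1)) = I j := by
  rw [I, mul_assoc, G_mul, mul_one]

lemma coeff_zero_I (j : ℕ) : coeff 0 (I j) = 1 := by
  induction j with
  | zero => simp [I]
  | succ j ih =>
    have hG : coeff 0 (G (j + 1)) = 1 := by simp only [G, coeff_mk]; simp
    rw [I, coeff_mul, Finset.Nat.antidiagonal_zero, Finset.sum_singleton, ih, hG, one_mul]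

lemma card_rec (n b : ℕ) : (Nat.Partition.restricted n (fun i => b < i)).card =
    (Nat.Partition.restricted n (fun i => b + 1 < i)).card +
      if b + 1 ≤ n then (Nat.Partition.restricted (n - (b + 1)) (fun i => b < i)).card else 0 := by
  classical
  rw [← Finset.card_filter_add_card_filter_not
    (s := Nat.Partition.restricted n (fun i => b < i)) (fun x => b + 1 ∉ x.parts)]
  congr 1
  · congr 1
    ext x
    simp only [Nat.Partition.restricted, Finset.mem_filter, Finset.mem_univ, true_and]
    constructor
    · rintro ⟨h1, h2⟩ i hi
      have := h1 i hi
      have : i ≠ b + 1 := fun h => h2 (h ▸ hi)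
      omega
    · intro h
      exact ⟨fun i hi => by have := h i hi; omega, fun hi => by have := h _ hi; omega⟩
  · split_ifs with h
    · let e := Nat.Partition.partitionWithPartEquiv (n := n) (a := b + 1) (by omega) h
      symm
      refine Finset.card_bij (fun p _ => (e.symm p).1) ?_ ?_ ?_
      · intro p hp
        simp only [Nat.Partition.restricted, Finset.mem_filter, Finset.mem_univ, true_and,
          not_not] at hp ⊢
        refine ⟨?_, (e.symm p).2⟩
        intro i hi
        rw [Nat.Partition.partitionWithPartEquiv_symm_apply_parts, Multiset.mem_cons] at hi
        rcases hi with rfl | hi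
        · omega
        · exact hp i hi
      · intro p _ q _ hpq
        exact e.symm.injective (Subtype.ext hpq)
      · intro x hx
        simp only [Nat.Partition.restricted, Finset.mem_filter, Finset.mem_univ, true_and,
          not_not] at hx
        refine ⟨e ⟨x, hx.2⟩, ?_, by simp⟩
        simp only [Nat.Partition.restricted, Finset.mem_filter, Finset.mem_univ, true_and]
        intro i hi
        rw [Nat.Partition.partitionWithPartEquiv_apply_parts] at hi
        exact hx.1 i (Multiset.mem_of_mem_erase hi)
    · rw [Finset.card_eq_zero, Finset.filter_eq_empty_iff]
      intro x _ hx
      rw [not_not] at hx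
      exact h (Nat.Partition.le_of_mem_parts hx)

lemma Q_rec (b : ℕ) : Q (b + 1) = (1 - X ^ (b + 1)) * Q b := by
  ext n
  rw [sub_mul, one_mul, map_sub, coeff_X_pow_mul']
  simp only [Q, coeff_mk]
  rw [card_rec n b]
  split_ifs <;> simp

lemma Q_eq (b : ℕ) : Q b = E b * Q 0 := by
  induction b with
  | zero => simp [E]
  | succ b ih => rw [Q_rec, ih, E]; ring

lemma coeff_Q_zero (n : ℕ) : coeff n (Q 0) = (partitionCount n : ℤ) := by
  rw [Q, coeff_mk, partitionCount, Nat.card_eq_fintype_card, Nat.Partition.restricted,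
    Finset.filter_true_of_mem, Finset.card_univ]
  intro x _ i hi
  exact x.parts_pos hi

lemma coeff_Q_pos (b n : ℕ) (h : b < n) : 1 ≤ coeff n (Q b) := by
  rw [Q, coeff_mk]
  have : 0 < (Nat.Partition.restricted n (fun i => b < i)).card := by
    rw [Finset.card_pos]
    refine ⟨Nat.Partition.indiscrete n, ?_⟩
    simp only [Nat.Partition.restricted, Finset.mem_filter, Finset.mem_univ, true_and]
    intro i hi
    rw [Nat.Partition.indiscrete_parts (by omega), Multiset.mem_singleton] at hi
    omega
  exact_mod_cast this

lemma Q_dvd (b : ℕ) : X ^ (b + 1) ∣ Q b - 1 := by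
  rw [X_pow_dvd_iff]
  intro m hm
  rw [map_sub, coeff_one, Q, coeff_mk]
  rcases Nat.eq_zero_or_pos m with rfl | hm0
  · simp [Nat.Partition.restricted]
  · simp only [hm0.ne', if_false, sub_zero, Nat.cast_eq_zero, Finset.card_eq_zero]
    rw [Nat.Partition.restricted, Finset.filter_eq_empty_iff]
    intro x _ hx
    have h0 : x.parts ≠ 0 := by
      intro h
      have := x.parts_sum
      rw [h] at this
      simp at this
      omega
    obtain ⟨i, hi⟩ := Multiset.exists_mem_of_ne_zero h0
    have := hx i hi
    have := Nat.Partition.le_of_mem_parts hi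
    omega

lemma c_rec (j k : ℕ) : c (j + 1) k = c (j + 1) (k + 1) + X ^ (k + 1) * c j (k + 1) := by
  rw [c, c, c, ← I_succ j, t]
  ring

lemma f_rec (J k : ℕ) : f (J + 1) k =
    (1 - X ^ (k + 1)) * f (J + 1) (k + 1) + X ^ (k + 1) * ((-1) ^ J * c J (k + 1)) := by
  induction J with
  | zero => simp [f, c, t, I]
  | succ J ih =>
    have h1 : ∀ k, f (J + 1 + 1) k = f (J + 1) k + (-1) ^ (J + 1) * c (J + 1) k := fun k => by
      rw [f, Finset.sum_range_succ, f]
    rw [h1, h1, ih, c_rec]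
    ring

lemma shanks (k : ℕ) : E (k + 1) * f (k + 1) (k + 1) = S (k + 1) := by
  induction k with
  | zero => simp [E, f, S, c, t, I]
  | succ k ih =>
    have h1 : f (k + 1 + 1) (k + 1 + 1) =
        f (k + 1) (k + 2) + (-1) ^ (k + 1) * c (k + 1) (k + 2) := by
      rw [f, Finset.sum_range_succ, f]
    have h2 := f_rec k (k + 1)
    have h3 : S (k + 1 + 1) = S (k + 1) + (-1) ^ (k + 1) *
        (X ^ ((k + 1) ^ 2 + t (k + 1)) * (1 - X ^ (2 * (k + 1) + 1))) := by
      rw [S, Finset.sum_range_succ, S]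
    rw [h3, ← ih, h1, h2, E, c, c, ← I_succ k]
    have h4 := E_mul_I (k + 1)
    simp only [t]
    have e1 : (X : PowerSeries ℤ) ^ ((k + 2) * k + t k) * X ^ (k + 2)
      = X ^ ((k + 1) ^ 2 + (t k + (k + 1))) := by rw [← pow_add]; congr 1; ring
    have e2 : (X : PowerSeries ℤ) ^ ((k + 2) * (k + 1) + (t k + (k + 1)))
      = X ^ ((k + 1) ^ 2 + (t k + (k + 1))) * X ^ (k + 1) := by rw [← pow_add]; congr 1; ring
    have e3 : (X : PowerSeries ℤ) ^ (2 * (k + 1) + 1) = X ^ (k + 1) * X ^ (k + 2) := by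
      rw [← pow_add]; congr 1; ring
    rw [e2, e3, ← e1, show k + 1 + 1 = k + 2 from rfl]
    linear_combination ((-1 : PowerSeries ℤ) ^ (k + 1) * X ^ ((k + 2) * k + t k) * X ^ (k + 2) *
      (1 - X ^ (k + 1) * X ^ (k + 2))) * h4

lemma W_rec (J k : ℕ) : (-1) ^ J * (f (J + 1) k * Q k) =
    (-1) ^ J * (f (J + 1) (k + 1) * Q (k + 1)) + X ^ (k + 1) * (c J (k + 1) * Q k) := by
  have h : ((-1 : PowerSeries ℤ) ^ J) * (-1) ^ J = 1 := by
    rw [← mul_pow]; simp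
  rw [f_rec, Q_rec]
  linear_combination (X ^ (k + 1) * (c J (k + 1) * Q k)) * h

lemma W_mono (J k d n : ℕ) : coeff n ((-1) ^ J * (f (J + 1) (k + d) * Q (k + d))) ≤
    coeff n ((-1) ^ J * (f (J + 1) k * Q k)) := by
  induction d with
  | zero => simp
  | succ d ih =>
    refine le_trans ?_ ih
    rw [W_rec J (k + d), map_add]
    have := ((NN_X_pow (k + d + 1)).mul ((NN_c J (k + d + 1)).mul (NN_Q (k + d)))) n
    rw [← add_assoc]
    linarith

lemma f_dvd (J k : ℕ) : X ^ (k + 1) ∣ f (J + 1) k - 1 := by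
  rw [f, Finset.sum_range_succ']
  simp only [c, t, I]
  simp only [mul_zero, add_zero, pow_zero, mul_one, add_sub_cancel_right]
  refine Finset.dvd_sum fun j _ => Dvd.dvd.mul_left (Dvd.dvd.mul_right (pow_dvd_pow _ ?_) _) _
  nlinarith [Nat.zero_le (k * j)]

lemma W_lim (J K n : ℕ) (hn : 0 < n) (h : n ≤ K) :
    coeff n ((-1) ^ J * (f (J + 1) K * Q K)) = 0 := by
  have h1 : X ^ (K + 1) ∣ (-1) ^ J * (f (J + 1) K * Q K) - (-1) ^ J := by
    have : (-1) ^ J * (f (J + 1) K * Q K) - (-1) ^ J =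
      (-1) ^ J * ((f (J + 1) K - 1) * Q K + (Q K - 1)) := by ring
    rw [this]
    exact Dvd.dvd.mul_left (dvd_add (Dvd.dvd.mul_right (f_dvd _ _) _) (Q_dvd _)) _
  have h2 := (X_pow_dvd_iff.mp h1) n (by omega)
  rw [map_sub] at h2
  have h3 : coeff n ((-1 : PowerSeries ℤ) ^ J) = 0 := by
    rcases neg_one_pow_eq_or (PowerSeries ℤ) J with h | h <;> rw [h] <;>
      simp [coeff_one, hn.ne']
  rw [h3] at h2
  linarith

lemma W_pos (J k n : ℕ) (h : k + 1 + ((k + 1) * J + t J) + (k + 1) ≤ n) :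
    0 < coeff n ((-1) ^ J * (f (J + 1) k * Q k)) := by
  rw [W_rec, map_add]
  have h1 := W_mono J (k + 1) n n
  rw [W_lim J (k + 1 + n) n (by omega) (by omega)] at h1
  have h2 : 1 ≤ coeff n (X ^ (k + 1) * (c J (k + 1) * Q k)) := by
    rw [c, mul_assoc, ← mul_assoc, ← pow_add, coeff_X_pow_mul', if_pos (by omega), coeff_mul]
    set m := n - (k + 1 + ((k + 1) * J + t J)) with hm
    have : coeff 0 (I J) * coeff m (Q k) ≤
        ∑ p ∈ antidiagonal m, coeff p.1 (I J) * coeff p.2 (Q k) :=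
      Finset.single_le_sum (f := fun p : ℕ × ℕ => coeff p.1 (I J) * coeff p.2 (Q k))
        (fun p _ => mul_nonneg (NN_I _ _) (NN_Q _ _)) (a := ((0, m) : ℕ × ℕ)) (by simp)
    rw [coeff_zero_I, one_mul] at this
    have := coeff_Q_pos k m (by omega)
    linarith
  linarith

lemma two_t (j : ℕ) : 2 * (t j : ℤ) = j * (j + 1) := by
  induction j with
  | zero => simp [t]
  | succ j ih => rw [t]; push_cast; linarith

lemma coeff_pZ (n a : ℕ) : coeff n (X ^ a * Q 0) = pZ ((n : ℤ) - a) := by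
  rw [coeff_X_pow_mul', pZ]
  by_cases h : a ≤ n
  · rw [if_pos h, if_pos (by omega), coeff_Q_zero]
    congr 2
    omega
  · rw [if_neg h, if_neg (by omega)]

lemma M_eq (J n : ℕ) : andrewsMercaM (J + 1) n =
    coeff n ((-1) ^ J * (f (J + 1) (J + 1) * Q (J + 1))) := by
  have h0 : (-1) ^ J * (f (J + 1) (J + 1) * Q (J + 1)) = (-1) ^ J * (S (J + 1) * Q 0) := by
    rw [Q_eq, ← shanks]; ring
  have hC : ∀ (j : ℕ) (φ : PowerSeries ℤ), coeff n ((-1) ^ j * φ) = (-1) ^ j * coeff n φ := by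
    intro j φ
    rcases Nat.even_or_odd j with h | h <;> simp [h.neg_one_pow]
  rw [h0, hC, andrewsMercaM, S, Finset.sum_mul, map_sum, Nat.add_sub_cancel]
  congr 1
  refine Finset.sum_congr rfl fun j _ => ?_
  rw [mul_assoc, hC]
  congr 1
  have : X ^ (j ^ 2 + t j) * (1 - X ^ (2 * j + 1)) * Q 0 =
    X ^ (j ^ 2 + t j) * Q 0 - X ^ (j ^ 2 + t j + (2 * j + 1)) * Q 0 := by
    rw [pow_add _ (j ^ 2 + t j)]; ring
  rw [this, map_sub, coeff_pZ, coeff_pZ]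
  have ht := two_t j
  have e1 : (j : ℤ) * (3 * j + 1) / 2 = (j : ℤ) ^ 2 + t j := by
    rw [show (j : ℤ) * (3 * j + 1) = 2 * ((j : ℤ) ^ 2 + t j) by linear_combination -ht]
    simp
  have e2 : (j : ℤ) * (3 * j + 5) / 2 = (j : ℤ) ^ 2 + t j + 2 * j := by
    rw [show (j : ℤ) * (3 * j + 5) = 2 * ((j : ℤ) ^ 2 + t j + 2 * j) by linear_combination -ht]
    simp
  rw [e1, e2]
  push_cast
  congr 2
  ring

end AMproof

theorem andrewsMercaM_eventually_pos (k : ℕ) (hk : 0 < k) :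
    ∃ N : ℤ, ∀ n : ℤ, N ≤ n → 0 < andrewsMercaM k n := by
  obtain ⟨J, rfl⟩ : ∃ J, k = J + 1 := ⟨k - 1, by omega⟩
  refine ⟨((J + 1 + 1 + ((J + 1 + 1) * J + AMproof.t J) + (J + 1 + 1) : ℕ) : ℤ), fun n hn => ?_⟩
  obtain ⟨m, rfl⟩ := Int.eq_ofNat_of_zero_le (le_trans (Int.natCast_nonneg _) hn)
  rw [AMproof.M_eq]
  exact AMproof.W_pos J (J + 1) m (by exact_mod_cast hn)
end

section
/- Let ε > 0. There exist constants C > 0 and N such that for all integers n ≥ N and all positive integers k with k ≤ n^{1/12−ε}, one has | M̄_k(n) − (1/8) n^{−1} e^{π√n} | ≤ C k³ n^{−5/4} e^{π√n}. -/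
open Finset Real

/-- The number of partitions of `m` into distinct parts. -/
noncomputable def distinctPartitionCount (m : ℕ) : ℕ :=
  Nat.card {P : Nat.Partition m // P.parts.Nodup}

/-- The number of overpartitions of `m`. -/
noncomputable def overpartitionCount (m : ℕ) : ℕ :=
  ∑ j ∈ Finset.range (m + 1), distinctPartitionCount j * partitionCount (m - j)

/-- The overpartition function extended to integers, vanishing for negative arguments. -/
noncomputable def pbarZ (m : ℤ) : ℤ := if 0 ≤ m then (overpartitionCount m.toNat : ℤ) else 0

/-- The Andrews–Merca overpartition function `M̄_k(n)`. -/
noncomputable def Mbar (k : ℕ) (n : ℤ) : ℤ :=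
  (-1) ^ k * ∑ j ∈ Finset.Icc (-(k : ℤ)) (k : ℤ), (-1) ^ j.natAbs * pbarZ (n - j ^ 2)


/-! ### Generating function -/

namespace OverAsym

open PowerSeries in
/-- `f` evaluates absolutely at `q` to `v`. -/
def EvalAt (f : PowerSeries ℝ) (q v : ℂ) : Prop :=
  Summable (fun n => ‖((coeff n f : ℝ) : ℂ) * q ^ n‖) ∧
    HasSum (fun n => ((coeff n f : ℝ) : ℂ) * q ^ n) v

open PowerSeries

theorem EvalAt.mul {f g : PowerSeries ℝ} {q v w : ℂ} (hf : EvalAt f q v) (hg : EvalAt g q w) :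
    EvalAt (f * g) q (v * w) := by
  have key : (fun n => ((coeff n (f * g) : ℝ) : ℂ) * q ^ n) = fun n =>
      ∑ kl ∈ antidiagonal n, (((coeff kl.1 f : ℝ) : ℂ) * q ^ kl.1) *
        (((coeff kl.2 g : ℝ) : ℂ) * q ^ kl.2) := by
    funext n
    rw [coeff_mul]
    push_cast
    rw [Finset.sum_mul]
    refine Finset.sum_congr rfl fun kl hkl => ?_
    rw [← mem_antidiagonal.mp hkl, pow_add]
    ring
  have hs := summable_norm_sum_mul_antidiagonal_of_summable_norm hf.1 hg.1
  have ht := tsum_mul_tsum_eq_tsum_sum_antidiagonal_of_summable_norm hf.1 hg.1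
  rw [hf.2.tsum_eq, hg.2.tsum_eq] at ht
  refine ⟨?_, ?_⟩
  · have := congrArg (fun F : ℕ → ℂ => fun n => ‖F n‖) key
    rw [this]; exact hs
  · rw [key, ht]
    exact hs.of_norm.hasSum

theorem EvalAt.add {f g : PowerSeries ℝ} {q v w : ℂ} (hf : EvalAt f q v) (hg : EvalAt g q w) :
    EvalAt (f + g) q (v + w) := by
  have h2 := hf.2.add hg.2
  refine ⟨?_, ?_⟩
  · refine Summable.of_nonneg_of_le (fun _ => norm_nonneg _) (fun n => ?_) (hf.1.add hg.1)
    simp only [map_add, Complex.ofReal_add, add_mul]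
    exact norm_add_le _ _
  · simpa [add_mul] using h2

theorem evalAt_monomial (d : ℕ) (c : ℝ) (q : ℂ) : EvalAt (monomial d c) q (c * q ^ d) := by
  have h0 : ∀ n, n ≠ d → ((coeff n (monomial d c) : ℝ) : ℂ) * q ^ n = 0 := by
    intro n hn
    simp [coeff_monomial, hn]
  refine ⟨?_, ?_⟩
  · refine summable_of_ne_finset_zero (s := {d}) fun n hn => ?_
    rw [h0 n (by simpa using hn), norm_zero]
  · have := hasSum_single (f := fun n => ((coeff n (monomial d c) : ℝ) : ℂ) * q ^ n) d h0
    simpa [coeff_monomial] using this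

theorem evalAt_one (q : ℂ) : EvalAt 1 q 1 := by
  simpa using evalAt_monomial 0 1 q

theorem EvalAt.prod {f : ℕ → PowerSeries ℝ} {q : ℂ} {v : ℕ → ℂ} (h : ∀ i, EvalAt (f i) q (v i))
    (N : ℕ) : EvalAt (∏ i ∈ range N, f i) q (∏ i ∈ range N, v i) := by
  induction N with
  | zero => simpa using evalAt_one q
  | succ N ih => rw [prod_range_succ, prod_range_succ]; exact ih.mul (h N)

/-- The geometric series `∑ X^{d j}`. -/
noncomputable def geo (d : ℕ) : PowerSeries ℝ := PowerSeries.mk fun n => if d ∣ n then 1 else 0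

theorem geo_mul (d : ℕ) (hd : 0 < d) : geo d * (1 - X ^ d) = 1 := by
  ext n
  rw [mul_sub, mul_one, map_sub, coeff_mul_X_pow']
  simp only [geo, coeff_mk, coeff_one]
  by_cases hn : n = 0
  · subst hn
    have : ¬ d ≤ 0 := by omega
    simp [this]
  · by_cases h : d ≤ n
    · simp only [h, if_true, hn, if_false]
      have : (d ∣ n - d) ↔ d ∣ n := by
        rw [Nat.dvd_sub_iff_left h dvd_rfl]
      by_cases h2 : d ∣ n <;> simp only [this, h2, if_true, if_false, sub_self]
    · have : ¬ d ∣ n := fun h' => h (Nat.le_of_dvd (Nat.pos_of_ne_zero hn) h')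
      simp [h, this, hn]

theorem evalAt_geo (d : ℕ) (hd : 0 < d) (q : ℂ) (hq : ‖q‖ < 1) :
    EvalAt (geo d) q (1 / (1 - q ^ d)) := by
  have hs : Summable (fun n => ‖((coeff n (geo d) : ℝ) : ℂ) * q ^ n‖) := by
    refine Summable.of_nonneg_of_le (fun _ => norm_nonneg _) (fun n => ?_)
      (summable_geometric_of_lt_one (norm_nonneg q) hq)
    rw [norm_mul, norm_pow]
    refine mul_le_of_le_one_left (by positivity) ?_
    simp only [geo, coeff_mk]
    split_ifs <;> simp
  have hE : EvalAt (geo d) q (∑' n, ((coeff n (geo d) : ℝ) : ℂ) * q ^ n) :=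
    ⟨hs, hs.of_norm.hasSum⟩
  have h1 : EvalAt (1 - X ^ d : PowerSeries ℝ) q (1 - q ^ d) := by
    have := (evalAt_one q).add (evalAt_monomial d (-1) q)
    have e : (1 + monomial d (-1 : ℝ) : PowerSeries ℝ) = 1 - X ^ d := by
      rw [X_pow_eq, sub_eq_add_neg, ← map_neg]
    rw [e] at this
    simpa [sub_eq_add_neg] using this
  have h2 := hE.mul h1
  rw [geo_mul d hd] at h2
  have h3 := h2.2.unique (evalAt_one q).2
  have hne : (1 - q ^ d) ≠ 0 := right_ne_zero_of_mul_eq_one h3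
  rw [eq_div_of_mul_eq hne h3] at hE
  exact hE

/-- The local factor. -/
noncomputable def fac (i : ℕ) : PowerSeries ℝ := (1 + X ^ (i + 1)) * geo (i + 1)

theorem evalAt_fac (i : ℕ) (q : ℂ) (hq : ‖q‖ < 1) :
    EvalAt (fac i) q ((1 + q ^ (i + 1)) / (1 - q ^ (i + 1))) := by
  have h1 : EvalAt (1 + X ^ (i + 1) : PowerSeries ℝ) q (1 + q ^ (i + 1)) := by
    have := (evalAt_one q).add (evalAt_monomial (i + 1) 1 q)
    rw [X_pow_eq]
    simpa using this
  have := h1.mul (evalAt_geo (i + 1) (Nat.succ_pos i) q hq)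
  rw [mul_one_div] at this
  exact this

/-- Nonnegative coefficients. -/
def NN (f : PowerSeries ℝ) : Prop := ∀ n, 0 ≤ coeff n f

theorem NN.mul {f g : PowerSeries ℝ} (hf : NN f) (hg : NN g) : NN (f * g) := fun n => by
  rw [coeff_mul]
  exact Finset.sum_nonneg fun kl _ => mul_nonneg (hf _) (hg _)

theorem NN.add {f g : PowerSeries ℝ} (hf : NN f) (hg : NN g) : NN (f + g) := fun n => by
  rw [map_add]; exact add_nonneg (hf n) (hg n)

theorem nn_one : NN 1 := fun n => by
  rw [coeff_one]; split_ifs <;> norm_num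

theorem nn_geo (d : ℕ) : NN (geo d) := fun n => by
  simp only [geo, coeff_mk]; split_ifs <;> norm_num

theorem nn_X_pow (d : ℕ) : NN (X ^ d) := fun n => by
  rw [coeff_X_pow]; split_ifs <;> norm_num

theorem nn_fac (i : ℕ) : NN (fac i) := (nn_one.add (nn_X_pow _)).mul (nn_geo _)

theorem nn_fac_sub_one (i : ℕ) : NN (fac i - 1) := by
  have h : NN (geo (i + 1) - 1) := fun n => by
    rw [map_sub]
    simp only [geo, coeff_mk, coeff_one]
    by_cases hn : n = 0
    · simp [hn]
    · simp only [hn, if_false]; split_ifs <;> norm_num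
  have : fac i - 1 = (geo (i + 1) - 1) + X ^ (i + 1) * geo (i + 1) := by
    rw [fac]; ring
  rw [this]
  exact h.add ((nn_X_pow _).mul (nn_geo _))

noncomputable def part (N : ℕ) : PowerSeries ℝ := ∏ i ∈ range N, fac i

theorem nn_part (N : ℕ) : NN (part N) := by
  induction N with
  | zero => simpa [part] using nn_one
  | succ N ih => rw [part, prod_range_succ]; exact ih.mul (nn_fac N)

theorem part_mono (n : ℕ) : Monotone fun N => coeff n (part N) := by
  refine monotone_nat_of_le_succ fun N => ?_
  have : part (N + 1) = part N + part N * (fac N - 1) := by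
    rw [part, prod_range_succ, ← part]; ring
  rw [this, map_add]
  exact le_add_of_nonneg_right (((nn_part N).mul (nn_fac_sub_one N)) n)

open scoped PowerSeries.WithPiTopology in
theorem tsum_geo (i : ℕ) : ∑' j : ℕ, (X : PowerSeries ℝ) ^ ((i + 1) * j) = geo (i + 1) := by
  have h := WithPiTopology.tsum_pow_mul_one_sub_of_constantCoeff_eq_zero
    (f := (X ^ (i + 1) : PowerSeries ℝ)) (by simp)
  simp_rw [← pow_mul] at h
  have h2 := geo_mul (i + 1) (Nat.succ_pos i)
  have h3 : (1 - X ^ (i + 1) : PowerSeries ℝ) ≠ 0 := right_ne_zero_of_mul_eq_one h2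
  exact mul_right_cancel₀ h3 (h.trans h2.symm)

open scoped PowerSeries.WithPiTopology in
theorem coeff_part_tendsto (n : ℕ) :
    Filter.Tendsto (fun N => coeff n (part N)) Filter.atTop
      (nhds (overpartitionCount n : ℝ)) := by
  have h1 := Nat.Partition.hasProd_powerSeriesMk_card_countRestricted ℝ (m := 2) (by norm_num)
  have h2 := Nat.Partition.hasProd_powerSeriesMk_card_restricted ℝ (fun _ => True)
  have h3 := (h1.mul h2).tendsto_prod_nat
  have h4 := ((WithPiTopology.continuous_coeff ℝ n).tendsto _).comp h3
  have e1 : (fun N => coeff n (part N)) = (coeff n) ∘ fun N => ∏ i ∈ range N,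
      ((∑ j ∈ range 2, (X : PowerSeries ℝ) ^ ((i + 1) * j)) *
        if True then ∑' j : ℕ, X ^ ((i + 1) * j) else 1) := by
    funext N
    simp only [Function.comp_apply, part]
    congr 1
    refine prod_congr rfl fun i _ => ?_
    rw [if_pos trivial, tsum_geo, fac, sum_range_succ, sum_range_one]
    simp
  rw [e1]
  convert h4 using 2
  rw [coeff_mul]
  simp only [coeff_mk]
  rw [overpartitionCount, Finset.Nat.sum_antidiagonal_eq_sum_range_succ_mk]
  push_cast
  refine sum_congr rfl fun j _ => ?_
  congr 2
  · rw [distinctPartitionCount, Nat.card_eq_fintype_card, Fintype.card_subtype,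
      Nat.Partition.countRestricted_two, Nat.Partition.distincts]
  · rw [partitionCount, Nat.card_eq_fintype_card, Nat.Partition.restricted]
    simp

/-- Euler product. -/
noncomputable def G (q : ℂ) : ℂ := ∏' n : ℕ, (1 - q ^ (n + 1))

/-- The generating function of overpartitions. -/
noncomputable def H (q : ℂ) : ℂ := G (q ^ 2) / G q ^ 2

theorem one_sub_pow_ne_zero {q : ℂ} (hq : ‖q‖ < 1) (n : ℕ) : 1 - q ^ (n + 1) ≠ 0 := by
  intro h
  have h1 : ‖q ^ (n + 1)‖ < 1 := by
    rw [norm_pow]; exact pow_lt_one₀ (norm_nonneg _) hq (Nat.succ_ne_zero n)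
  rw [← sub_eq_zero.mp h, norm_one] at h1
  exact lt_irrefl _ h1

theorem G_ne_zero {q : ℂ} (hq : ‖q‖ < 1) : G q ≠ 0 := by
  have := tprod_one_add_ne_zero_of_summable (f := fun n : ℕ => -q ^ (n + 1)) ?_ ?_
  · simpa [G, sub_eq_add_neg] using this
  · intro i; simpa [sub_eq_add_neg] using one_sub_pow_ne_zero hq i
  · simpa using (summable_nat_add_iff 1).mpr (summable_geometric_of_lt_one (norm_nonneg _) hq)

theorem H_tendsto {q : ℂ} (hq : ‖q‖ < 1) :
    Filter.Tendsto (fun N => ∏ i ∈ range N, (1 + q ^ (i + 1)) / (1 - q ^ (i + 1)))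
      Filter.atTop (nhds (H q)) := by
  have hq2 : ‖q ^ 2‖ < 1 := by
    rw [norm_pow]; exact pow_lt_one₀ (norm_nonneg _) hq (by norm_num)
  have h1 := (ModularForm.multipliable_one_sub_pow hq2).hasProd.tendsto_prod_nat
  have h2 := (ModularForm.multipliable_one_sub_pow hq).hasProd.tendsto_prod_nat
  have h3 := h1.div (h2.pow 2) (pow_ne_zero 2 (G_ne_zero hq))
  refine h3.congr fun N => ?_
  rw [Pi.div_apply, ← prod_pow, ← prod_div_distrib]
  refine prod_congr rfl fun i _ => ?_
  have := one_sub_pow_ne_zero hq i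
  rw [div_eq_div_iff (pow_ne_zero 2 this) this]
  ring

theorem H_real_mono {r : ℝ} (h0 : 0 ≤ r) (h1 : r < 1) (N : ℕ) :
    ∏ i ∈ range N, (1 + r ^ (i + 1)) / (1 - r ^ (i + 1)) ≤ (H r).re := by
  have hq : ‖(r : ℂ)‖ < 1 := by rwa [Complex.norm_real, Real.norm_of_nonneg h0]
  have ht := (Complex.continuous_re.tendsto _).comp (H_tendsto hq)
  have e : (Complex.re ∘ fun N => ∏ i ∈ range N, (1 + (r : ℂ) ^ (i + 1)) / (1 - (r : ℂ) ^ (i + 1)))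
      = fun N => ∏ i ∈ range N, (1 + r ^ (i + 1)) / (1 - r ^ (i + 1)) := by
    funext N
    simp only [Function.comp_apply]
    rw [← Complex.ofReal_re (∏ i ∈ range N, (1 + r ^ (i + 1)) / (1 - r ^ (i + 1)))]
    push_cast
    rfl
  rw [e] at ht
  refine Monotone.ge_of_tendsto (monotone_nat_of_le_succ fun N => ?_) ht N
  have hp : ∀ i : ℕ, 0 < 1 - r ^ (i + 1) := fun i => by
    have := pow_lt_one₀ h0 h1 (Nat.succ_ne_zero i); simp only [Nat.succ_eq_add_one] at this; linarith
  rw [prod_range_succ]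
  refine le_mul_of_one_le_right (prod_nonneg fun i _ => ?_) ?_
  · have := hp i; positivity
  · rw [le_div_iff₀ (hp N)]
    have : 0 ≤ r ^ (N + 1) := by positivity
    linarith

theorem summable_pbar {r : ℝ} (h0 : 0 ≤ r) (h1 : r < 1) :
    Summable fun n => (overpartitionCount n : ℝ) * r ^ n := by
  have hq : ‖(r : ℂ)‖ < 1 := by rwa [Complex.norm_real, Real.norm_of_nonneg h0]
  refine summable_of_sum_range_le (c := (H r).re) (fun n => by positivity) fun M => ?_
  have ht : Filter.Tendsto (fun N => ∑ n ∈ range M, coeff n (part N) * r ^ n) Filter.atTop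
      (nhds (∑ n ∈ range M, (overpartitionCount n : ℝ) * r ^ n)) :=
    tendsto_finsetSum _ fun n _ => (coeff_part_tendsto n).mul_const _
  refine le_of_tendsto' ht fun N => le_trans ?_ (H_real_mono h0 h1 N)
  have hE := (EvalAt.prod (fun i => evalAt_fac i r hq) N).2
  have hE2 : HasSum (fun n => coeff n (part N) * r ^ n)
      (∏ i ∈ range N, (1 + r ^ (i + 1)) / (1 - r ^ (i + 1))) := by
    rw [← Complex.hasSum_ofReal] 
    push_cast
    exact hE
  exact sum_le_hasSum _ (fun n _ => mul_nonneg (nn_part N n) (by positivity)) hE2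

theorem hasSum_pbar {q : ℂ} (hq : ‖q‖ < 1) :
    HasSum (fun n => (overpartitionCount n : ℂ) * q ^ n) (H q) := by
  have hs := summable_pbar (norm_nonneg q) hq
  have hs' : Summable (fun n => (overpartitionCount n : ℂ) * q ^ n) := by
    refine Summable.of_norm ?_
    simpa using hs
  have ht := tendsto_tsum_of_dominated_convergence (𝓕 := Filter.atTop)
    (f := fun N n => ((coeff n (part N) : ℝ) : ℂ) * q ^ n)
    (g := fun n => (overpartitionCount n : ℂ) * q ^ n) hs
    (fun n => by
      have := ((Complex.continuous_ofReal.tendsto _).comp (coeff_part_tendsto n)).mul_const (q ^ n)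
      simpa using this)
    (Filter.Eventually.of_forall fun N n => by
      rw [norm_mul, norm_pow, Complex.norm_real, Real.norm_of_nonneg (nn_part N n)]
      exact mul_le_mul_of_nonneg_right
        ((part_mono n).ge_of_tendsto (coeff_part_tendsto n) N) (by positivity))
  have ht2 : Filter.Tendsto (fun N => ∑' n, ((coeff n (part N) : ℝ) : ℂ) * q ^ n) Filter.atTop
      (nhds (H q)) := by
    refine (H_tendsto hq).congr fun N => ?_
    exact (EvalAt.prod (fun i => evalAt_fac i q hq) N).2.tsum_eq.symm
  rw [← tendsto_nhds_unique ht ht2]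
  exact hs'.hasSum

end OverAsym

/-! ### Coefficient extraction and the minor arc bound -/

namespace OverAsym

theorem integral_exp_int (k : ℤ) :
    ∫ θ in (-π)..π, Complex.exp ((k : ℂ) * Complex.I * (θ : ℂ)) = if k = 0 then 2 * (π : ℂ) else 0 := by
  split_ifs with hk
  · subst hk
    simp
    ring
  · have hc : (k : ℂ) * Complex.I ≠ 0 := mul_ne_zero (by exact_mod_cast hk) Complex.I_ne_zero
    rw [integral_exp_mul_complex hc, div_eq_zero_iff]
    left
    rw [sub_eq_zero, Complex.exp_eq_exp_iff_exists_int]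
    refine ⟨k, ?_⟩
    push_cast
    ring

theorem norm_cexp_neg (t θ : ℝ) :
    ‖Complex.exp (-((t : ℂ) + θ * Complex.I))‖ = Real.exp (-t) := by
  rw [Complex.norm_exp]; simp

theorem norm_cexp_neg_lt {t : ℝ} (ht : 0 < t) (θ : ℝ) :
    ‖Complex.exp (-((t : ℂ) + θ * Complex.I))‖ < 1 := by
  rw [norm_cexp_neg]; simpa using ht

theorem pbar_integral {t : ℝ} (ht : 0 < t) (n : ℕ) :
    ∫ θ in (-π)..π, H (Complex.exp (-((t : ℂ) + θ * Complex.I))) *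
      Complex.exp (n * ((t : ℂ) + θ * Complex.I)) = 2 * π * (overpartitionCount n : ℂ) := by
  set F : ℕ → ℝ → ℂ := fun m θ => (overpartitionCount m : ℂ) *
    Complex.exp (-((t : ℂ) + θ * Complex.I)) ^ m * Complex.exp (n * ((t : ℂ) + θ * Complex.I)) with hF
  have hsum := summable_pbar (Real.exp_pos (-t)).le (by simpa using ht : Real.exp (-t) < 1)
  have hnorm : ∀ θ : ℝ, ‖Complex.exp (n * ((t : ℂ) + θ * Complex.I))‖ = Real.exp (n * t) := by
    intro θ; rw [Complex.norm_exp]; simp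
  have h := intervalIntegral.hasSum_integral_of_dominated_convergence (μ := MeasureTheory.volume)
    (a := -π) (b := π) (F := F)
    (f := fun θ : ℝ => H (Complex.exp (-((t : ℂ) + θ * Complex.I))) *
      Complex.exp (n * ((t : ℂ) + θ * Complex.I)))
    (fun m _ => (overpartitionCount m : ℝ) * Real.exp (-t) ^ m * Real.exp (n * t))
    (fun m => by
      have : Continuous (F m) := by simp only [hF]; fun_prop
      exact this.aestronglyMeasurable)
    (fun m => Filter.Eventually.of_forall fun θ _ => by
      simp only [hF]
      rw [norm_mul, norm_mul, norm_pow, norm_cexp_neg, hnorm]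
      simp)
    (Filter.Eventually.of_forall fun θ _ => hsum.mul_right _)
    (by simp)
    (Filter.Eventually.of_forall fun θ _ => (hasSum_pbar (norm_cexp_neg_lt ht θ)).mul_right _)
  have hint : ∀ m, ∫ θ in (-π)..π, F m θ = if m = n then 2 * π * (overpartitionCount n : ℂ) else 0 := by
    intro m
    have e : ∀ θ : ℝ, F m θ = ((overpartitionCount m : ℂ) * Complex.exp (((n : ℂ) - m) * t)) *
        Complex.exp ((((n : ℤ) - (m : ℤ) : ℤ) : ℂ) * Complex.I * (θ : ℂ)) := by
      intro θ
      simp only [hF]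
      rw [mul_assoc, mul_assoc, ← Complex.exp_nat_mul, ← Complex.exp_add, ← Complex.exp_add]
      congr 2
      push_cast
      ring
    simp_rw [e]
    rw [intervalIntegral.integral_const_mul, integral_exp_int]
    by_cases hmn : m = n
    · subst hmn
      simp
      ring
    · have : ¬ ((n : ℤ) - (m : ℤ) = 0) := by omega
      simp [this, hmn]
  simp_rw [hint] at h
  have h2 := hasSum_ite_eq n (2 * π * (overpartitionCount n : ℂ))
  exact h.unique h2

theorem fac_bound (z : ℂ) (hz : ‖z‖ < 1) :
    ‖(1 + z) / (1 - z)‖ ≤ (1 + ‖z‖) / (1 - ‖z‖) * Real.exp (-(‖z‖ - z.re) / 8) := by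
  set r := ‖z‖ with hr
  set x := z.re with hx
  have hxr : |x| ≤ r := Complex.abs_re_le_norm z
  obtain ⟨hx1, hx2⟩ := abs_le.mp hxr
  have hr0 : 0 ≤ r := norm_nonneg z
  have hsq : z.re ^ 2 + z.im ^ 2 = r ^ 2 := by
    rw [hr, Complex.sq_norm, Complex.normSq_apply]; ring
  have e1 : ‖1 + z‖ ^ 2 = 1 + r ^ 2 + 2 * x := by
    rw [Complex.sq_norm, Complex.normSq_apply]; simp; nlinarith
  have e2 : ‖1 - z‖ ^ 2 = 1 + r ^ 2 - 2 * x := by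
    rw [Complex.sq_norm, Complex.normSq_apply]; simp; nlinarith
  have hR : 0 < (1 - r) := by linarith
  have hpos : 0 ≤ (1 + r) / (1 - r) * Real.exp (-(r - x) / 8) := by positivity
  refine le_of_sq_le_sq ?_ hpos
  rw [norm_div, div_pow, e1, e2, mul_pow, div_pow, ← Real.exp_nat_mul]
  have hden : 0 < 1 + r ^ 2 - 2 * x := by nlinarith
  have hden2 : 0 < (1 + r) ^ 2 * (1 + r ^ 2 - 2 * x) := by positivity
  have h1 : 1 - (r - x) / 4 ≤ Real.exp (((2 : ℕ) : ℝ) * (-(r - x) / 8)) := by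
    have := Real.add_one_le_exp (((2 : ℕ) : ℝ) * (-(r - x) / 8))
    push_cast at this ⊢
    linarith
  refine le_trans ?_ (mul_le_mul_of_nonneg_left h1 (by positivity))
  rw [div_mul_eq_mul_div, div_le_div_iff₀ hden (by positivity)]
  have key : (r - x) * ((1 + r) ^ 2 * (1 + r ^ 2 - 2 * x)) ≤ (r - x) * (16 * (1 + r ^ 2)) := by
    refine mul_le_mul_of_nonneg_left ?_ (by linarith)
    have d1 : (1 + r) ^ 2 ≤ 4 := by nlinarith
    have d2 : 1 + r ^ 2 - 2 * x ≤ 4 := by nlinarith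
    nlinarith [mul_le_mul d1 d2 hden.le (by norm_num)]
  nlinarith

theorem H_norm_le {q : ℂ} (hq : ‖q‖ < 1) :
    ‖H q‖ ≤ (H (‖q‖ : ℝ)).re * Real.exp (-(‖q‖ / (1 - ‖q‖) - (q / (1 - q)).re) / 8) := by
  set r := ‖q‖ with hr
  have hr0 : 0 ≤ r := norm_nonneg q
  have hs1 : HasSum (fun i : ℕ => r ^ (i + 1)) (r / (1 - r)) := by
    have := (hasSum_geometric_of_lt_one hr0 hq).mul_left r
    simpa [pow_succ', div_eq_mul_inv] using this
  have hs2 : HasSum (fun i : ℕ => (q ^ (i + 1)).re) ((q / (1 - q)).re) := by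
    have := (hasSum_geometric_of_norm_lt_one hq).mul_left q
    have h2 := Complex.hasSum_re this
    simpa [pow_succ', div_eq_mul_inv] using h2
  have ht := (hs1.sub hs2).tendsto_sum_nat
  have ht2 : Filter.Tendsto (fun N => (H (r : ℝ)).re *
      Real.exp (-(∑ i ∈ range N, (r ^ (i + 1) - (q ^ (i + 1)).re)) / 8)) Filter.atTop
      (nhds ((H (r : ℝ)).re * Real.exp (-(r / (1 - r) - (q / (1 - q)).re) / 8))) := by
    refine Filter.Tendsto.const_mul _ ?_
    exact (Real.continuous_exp.tendsto _).comp ((ht.neg).div_const 8)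
  refine le_of_tendsto_of_tendsto' (H_tendsto hq).norm ht2 fun N => ?_
  have : ‖∏ i ∈ range N, (1 + q ^ (i + 1)) / (1 - q ^ (i + 1))‖ ≤
      (∏ i ∈ range N, (1 + r ^ (i + 1)) / (1 - r ^ (i + 1))) *
        Real.exp (-(∑ i ∈ range N, (r ^ (i + 1) - (q ^ (i + 1)).re)) / 8) := by
    rw [neg_div, Finset.sum_div, ← Finset.sum_neg_distrib, Real.exp_sum, ← prod_mul_distrib,
      norm_prod]
    refine prod_le_prod (fun _ _ => norm_nonneg _) fun i _ => ?_
    have h1 : ‖q ^ (i + 1)‖ < 1 := by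
      rw [norm_pow]; exact pow_lt_one₀ hr0 hq (Nat.succ_ne_zero i)
    have := fac_bound (q ^ (i + 1)) h1
    rw [norm_pow, ← hr, neg_div] at this
    exact this
  exact this.trans (mul_le_mul_of_nonneg_right (H_real_mono hr0 hq N) (Real.exp_pos _).le)

theorem minor_bound {t θ : ℝ} (ht : 0 < t) (ht1 : t ≤ 1) (h1 : t ≤ |θ|) (h2 : |θ| ≤ π) :
    ‖H (Complex.exp (-((t : ℂ) + θ * Complex.I)))‖ ≤
      (H (Real.exp (-t) : ℝ)).re * Real.exp (-(1 / 200) / t) := by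
  set q := Complex.exp (-((t : ℂ) + θ * Complex.I)) with hqdef
  have hqn : ‖q‖ = Real.exp (-t) := norm_cexp_neg t θ
  have hq : ‖q‖ < 1 := norm_cexp_neg_lt ht θ
  have h := H_norm_le hq
  rw [hqn] at h
  set r := Real.exp (-t) with hr
  have hrpos : 0 < r := Real.exp_pos _
  have hr1 : r < 1 := hqn ▸ hq
  have hHpos : 0 ≤ (H (r : ℝ)).re := by
    have := H_real_mono hrpos.le hr1 0
    simp at this; linarith
  refine h.trans (mul_le_mul_of_nonneg_left (Real.exp_le_exp.mpr ?_) hHpos)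
  set δ := 1 - r with hδ
  have hδ0 : 0 < δ := by linarith
  have hδt : δ ≤ t := by
    have := Real.add_one_le_exp (-t); linarith
  have hr3 : 1 / 3 ≤ r := by
    have a1 : Real.exp (-1) ≤ r := Real.exp_le_exp.mpr (by linarith)
    have a2 : Real.exp 1 ≤ 3 := by linarith [Real.exp_one_lt_d9]
    have a3 : 1 / 3 ≤ Real.exp (-1) := by
      rw [Real.exp_neg, ← one_div]
      exact one_div_le_one_div_of_le (Real.exp_pos 1) a2
    linarith
  have hqne : 1 - q ≠ 0 := by simpa using one_sub_pow_ne_zero hq 0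
  have hqre : q.re = r * Real.cos θ := by
    rw [hqdef, Complex.exp_re]; simp [hr]
  have hns : ‖1 - q‖ ^ 2 = δ ^ 2 + 2 * r * (1 - Real.cos θ) := by
    have : q.re ^ 2 + q.im ^ 2 = r ^ 2 := by
      rw [← hqn, Complex.sq_norm, Complex.normSq_apply]; ring
    rw [Complex.sq_norm, Complex.normSq_apply]
    simp only [Complex.sub_re, Complex.one_re, Complex.sub_im, Complex.one_im, hδ]
    rw [hqre] at this ⊢
    nlinarith
  have hcos : 2 / π ^ 2 * θ ^ 2 ≤ 1 - Real.cos θ := by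
    have := Real.cos_le_one_sub_mul_cos_sq h2; linarith
  have hpi : π ^ 2 ≤ 10 := by nlinarith [Real.pi_lt_d2, Real.pi_pos]
  have hcos2 : 1 / 5 * t ^ 2 ≤ 1 - Real.cos θ := by
    refine le_trans ?_ hcos
    have b1 : t ^ 2 ≤ θ ^ 2 := by rw [← sq_abs θ]; gcongr
    have b2 : (1 : ℝ) / 5 ≤ 2 / π ^ 2 := by
      rw [div_le_div_iff₀ (by norm_num) (by positivity)]; linarith
    gcongr
  have hlow : (1.05 * δ) ^ 2 ≤ ‖1 - q‖ ^ 2 := by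
    rw [hns]
    have : δ ^ 2 ≤ t ^ 2 := by gcongr
    nlinarith [mul_le_mul hr3 hcos2 (by positivity) hrpos.le]
  have hlow2 : 1.05 * δ ≤ ‖1 - q‖ := le_of_sq_le_sq hlow (norm_nonneg _)
  have hre : (q / (1 - q)).re ≤ 1 / (1.05 * δ) - 1 := by
    have e : q / (1 - q) = 1 / (1 - q) - 1 := by field_simp; ring
    rw [e, Complex.sub_re, Complex.one_re]
    have c1 : (1 / (1 - q)).re ≤ ‖1 / (1 - q)‖ := Complex.re_le_norm _
    rw [norm_div, norm_one] at c1
    have c2 : 1 / ‖1 - q‖ ≤ 1 / (1.05 * δ) := one_div_le_one_div_of_le (by positivity) hlow2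
    linarith
  have hre2 : r / δ = 1 / δ - 1 := by
    rw [eq_sub_iff_add_eq, div_add_one hδ0.ne']
    congr 1
    rw [hδ]; ring
  have hfin : 1 / δ - 1 / (1.05 * δ) = (1 / 21) * (1 / δ) := by field_simp; norm_num
  have hdt : 1 / t ≤ 1 / δ := one_div_le_one_div_of_le hδ0 hδt
  have ht' : 0 < 1 / t := by positivity
  have e3 : -(1 / 200) / t = -(1 / 200) * (1 / t) := by ring
  rw [e3, hre2]
  linarith

end OverAsym

/-! ### The modular transformation -/

namespace OverAsym

theorem csqrt_I_mul {u : ℂ} (hu : 0 < u.re) :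
    Complex.sqrt (Complex.I * u) = Complex.sqrt Complex.I * Complex.sqrt u := by
  have hu0 : u ≠ 0 := by
    rintro rfl; simp at hu
  have ha : |u.arg| < π / 2 := Complex.abs_arg_lt_pi_div_two_iff.mpr (Or.inl hu)
  obtain ⟨h1, h2⟩ := abs_lt.mp ha
  have hlog := Complex.log_mul Complex.I_ne_zero hu0 (by
    rw [Complex.arg_I]; constructor <;> linarith [Real.pi_pos])
  rw [Complex.sqrt, Complex.sqrt, Complex.sqrt, Complex.cpow_def_of_ne_zero Complex.I_ne_zero,
    Complex.cpow_def_of_ne_zero hu0, Complex.cpow_def_of_ne_zero (mul_ne_zero Complex.I_ne_zero hu0),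
    hlog, add_mul, Complex.exp_add]

theorem csqrt_sq (u : ℂ) : Complex.sqrt u ^ 2 = u := by
  rw [Complex.sqrt]
  exact Complex.cpow_nat_inv_pow u (by norm_num)

theorem eta_eq_G {z u : ℂ} (h : 2 * π * Complex.I * z = u) :
    ModularForm.eta z = Complex.exp (u / 24) * G (Complex.exp u) := by
  subst h
  simp [ModularForm.eta, Function.Periodic.qParam, G, ModularForm.eta_q_eq_pow]

theorem H_transform {s : ℂ} (hs : 0 < s.re) :
    H (Complex.exp (-s)) = 1 / 2 * Complex.sqrt (s / π) * Complex.exp (π ^ 2 / (4 * s)) *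
      (G (Complex.exp (-(2 * π ^ 2 / s))) / G (Complex.exp (-(2 * π ^ 2 / s)) ^ 2) ^ 2) := by
  have hs0 : s ≠ 0 := by rintro rfl; simp at hs
  have hpi : (π : ℂ) ≠ 0 := by exact_mod_cast Real.pi_ne_zero
  have hI := Complex.I_ne_zero
  set σ : ℂ := s / π with hσ
  have hσs : s = σ * π := by rw [hσ]; field_simp
  have hσre : 0 < σ.re := by
    rw [hσ, Complex.div_ofReal_re]; exact div_pos hs Real.pi_pos
  have hσ0 : σ ≠ 0 := by rintro h; rw [h] at hσre; simp at hσre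
  set τ : ℂ := Complex.I * (σ / 2) with hτ
  have hre2 : 0 < (σ / 2).re := by
    have : (σ / 2).re = σ.re / 2 := by simp
    rw [this]; linarith
  have hτim : τ ∈ UpperHalfPlane.upperHalfPlaneSet := by
    change 0 < τ.im
    rw [hτ, Complex.I_mul_im]; exact hre2
  have h2τim : Complex.I * σ ∈ UpperHalfPlane.upperHalfPlaneSet := by
    change 0 < (Complex.I * σ).im
    rw [Complex.I_mul_im]; exact hσre
  have h1 := ModularForm.eta_comp_eq_csqrt_I_inv hτim
  have h2 := ModularForm.eta_comp_eq_csqrt_I_inv h2τim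
  simp only [Function.comp_apply, Pi.smul_apply, Pi.mul_apply, smul_eq_mul] at h1 h2
  rw [hτ, csqrt_I_mul hre2] at h1
  rw [csqrt_I_mul hσre] at h2
  have hsI : Complex.sqrt Complex.I ≠ 0 := by
    intro h; have := csqrt_sq Complex.I; rw [h] at this; simp at this; exact Complex.I_ne_zero this.symm
  have hsσ : Complex.sqrt σ ≠ 0 := by
    intro h; have := csqrt_sq σ; rw [h] at this; simp at this; exact hσ0 this.symm
  have hsσ2 : Complex.sqrt (σ / 2) ^ 2 = σ / 2 := csqrt_sq _
  rw [eta_eq_G (u := -(4 * π ^ 2 / s)) (by rw [hσs]; field_simp; ring),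
    eta_eq_G (u := -s) (by rw [hσs]; field_simp; rw [Complex.I_sq])] at h1
  rw [eta_eq_G (u := -(2 * π ^ 2 / s)) (by rw [hσs]; field_simp),
    eta_eq_G (u := -(2 * s)) (by rw [hσs]; field_simp; rw [Complex.I_sq])] at h2
  rw [mul_assoc (Complex.sqrt Complex.I), inv_mul_cancel_left₀ hsI] at h1 h2
  have e1 : Complex.exp (-s) ^ 2 = Complex.exp (-(2 * s)) := by
    rw [← Complex.exp_nat_mul]; congr 1; push_cast; ring
  have e2 : Complex.exp (-(2 * π ^ 2 / s)) ^ 2 = Complex.exp (-(4 * π ^ 2 / s)) := by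
    rw [← Complex.exp_nat_mul]; congr 1; push_cast; ring
  rw [H, e1, e2]
  have n1 : ‖Complex.exp (-s)‖ < 1 := by rw [Complex.norm_exp]; simpa using hs
  have hG1 : G (Complex.exp (-s)) ≠ 0 := G_ne_zero n1
  have hre4 : 0 < (4 * (π : ℂ) ^ 2 / s).re := by
    have : 4 * (π : ℂ) ^ 2 / s = ((4 * π ^ 2 : ℝ) : ℂ) * s⁻¹ := by push_cast; rw [div_eq_mul_inv]
    rw [this, Complex.re_ofReal_mul, Complex.inv_re]
    have : 0 < Complex.normSq s := Complex.normSq_pos.mpr hs0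
    have := Real.pi_pos
    positivity
  have n2 : ‖Complex.exp (-(4 * π ^ 2 / s))‖ < 1 := by
    rw [Complex.norm_exp]; simpa using hre4
  have hG2 : G (Complex.exp (-(4 * π ^ 2 / s))) ≠ 0 := G_ne_zero n2
  -- square the first relation
  have h1sq := congrArg (fun z => z ^ 2) h1
  simp only [mul_pow, hsσ2] at h1sq
  have x1 : Complex.exp (-(4 * π ^ 2 / s) / 24) ^ 2 = Complex.exp (-(π ^ 2 / (3 * s))) := by
    rw [← Complex.exp_nat_mul]; congr 1; push_cast; field_simp; ring
  have x2 : Complex.exp (-s / 24) ^ 2 = Complex.exp (-(s / 12)) := by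
    rw [← Complex.exp_nat_mul]; congr 1; push_cast; ring
  have x3 : Complex.exp (-(2 * s) / 24) = Complex.exp (-(s / 12)) := by
    congr 1; ring
  have x4 : Complex.exp (-(2 * π ^ 2 / s) / 24) =
      Complex.exp (π ^ 2 / (4 * s)) * Complex.exp (-(π ^ 2 / (3 * s))) := by
    rw [← Complex.exp_add]; congr 1; field_simp; ring
  rw [x1, x2] at h1sq
  rw [x3, x4] at h2
  have y1 := Complex.exp_ne_zero (-(π ^ 2 / (3 * s)))
  have y2 := Complex.exp_ne_zero (-(s / 12))
  have hss : Complex.sqrt σ ^ 2 = σ := csqrt_sq σ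
  rw [mul_div_assoc', div_eq_div_iff (pow_ne_zero 2 hG1) (pow_ne_zero 2 hG2)]
  generalize G (Complex.exp (-(2 * s))) = g1 at *
  generalize G (Complex.exp (-s)) = g2 at *
  generalize G (Complex.exp (-(4 * π ^ 2 / s))) = g3 at *
  generalize G (Complex.exp (-(2 * π ^ 2 / s))) = g4 at *
  generalize Complex.exp (-(π ^ 2 / (3 * s))) = a at *
  generalize Complex.exp (-(s / 12)) = b at *
  generalize Complex.exp (π ^ 2 / (4 * s)) = c at *
  generalize Complex.sqrt σ = d at *
  apply mul_left_cancel₀ (mul_ne_zero (mul_ne_zero y1 y2) hsσ)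
  linear_combination (b * d * g1) * h1sq - (1/2 * d^2 * b * g2^2) * h2 - (b^2*g1*d*g2^2/2) * hss

theorem G_zero : G 0 = 1 := by simp [G]

theorem G_differentiableAt {q : ℂ} (hq : ‖q‖ < 1) : DifferentiableAt ℂ G q :=
  ModularForm.differentiableOn_tprod_one_sub_pow.differentiableAt
    (Metric.isOpen_ball.mem_nhds (by simpa using hq))

theorem K_bound : ∃ δ C : ℝ, 0 < δ ∧ 0 < C ∧ ∀ w : ℂ, ‖w‖ < δ →
    ‖G w / G (w ^ 2) ^ 2 - 1‖ ≤ C * ‖w‖ := by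
  have hd : DifferentiableAt ℂ (fun w => G w / G (w ^ 2) ^ 2) 0 := by
    have h0 : DifferentiableAt ℂ G 0 := G_differentiableAt (by simp)
    have h1 : DifferentiableAt ℂ (fun w : ℂ => G (w ^ 2)) 0 := by
      refine DifferentiableAt.comp (g := G) (f := fun w : ℂ => w ^ 2) 0 ?_ (by fun_prop)
      simpa using h0
    refine h0.div (h1.pow 2) ?_
    simp [G_zero]
  have hO := hd.isBigO_sub
  obtain ⟨C, hC, hb⟩ := hO.exists_pos
  obtain ⟨δ, hδ, h⟩ := Metric.eventually_nhds_iff.mp hb.bound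
  refine ⟨δ, C, hδ, hC, fun w hw => ?_⟩
  have := h (y := w) (by simpa using hw)
  simpa [G_zero] using this

theorem csqrt_sub_one {x : ℝ} :
    ‖Complex.sqrt (1 + x * Complex.I) - 1‖ ≤ |x| := by
  set p := Complex.sqrt (1 + x * Complex.I) with hp
  have hsq : p ^ 2 = 1 + x * Complex.I := csqrt_sq _
  have hre : 0 ≤ p.re := by
    rw [hp, Complex.sqrt, Complex.cpow_inv_two_re]; positivity
  have h1 : (p - 1) * (p + 1) = x * Complex.I := by linear_combination hsq
  have h2 : ‖p - 1‖ * ‖p + 1‖ = |x| := by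
    rw [← norm_mul, h1]; simp
  have h3 : 1 ≤ ‖p + 1‖ := by
    have := Complex.re_le_norm (p + 1)
    simp at this; linarith
  nlinarith [norm_nonneg (p - 1)]

theorem csqrt_real_mul {t : ℝ} (ht : 0 < t) (v : ℂ) (hv : v ≠ 0) :
    Complex.sqrt (t * v) = (Real.sqrt t : ℝ) * Complex.sqrt v := by
  have ht' : (t : ℂ) ≠ 0 := by exact_mod_cast ht.ne'
  rw [Complex.sqrt, Complex.sqrt, Complex.cpow_def_of_ne_zero hv,
    Complex.cpow_def_of_ne_zero (mul_ne_zero ht' hv), Complex.log_ofReal_mul ht hv, add_mul,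
    Complex.exp_add]
  congr 1
  rw [Real.sqrt_eq_rpow, Real.rpow_def_of_pos ht]
  push_cast
  congr 2
  norm_num

theorem major_formula : ∃ t₀ C : ℝ, 0 < t₀ ∧ t₀ ≤ 1 ∧ 0 < C ∧ C * t₀ ≤ 1 ∧ ∀ t x : ℝ, 0 < t → t ≤ t₀ → |x| ≤ 1 →
    ∃ E : ℂ, ‖E‖ ≤ C * t ∧ H (Complex.exp (-((t : ℂ) + (t * x : ℝ) * Complex.I))) =
      1 / 2 * (Real.sqrt (t / π) : ℝ) * Complex.sqrt (1 + x * Complex.I) *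
        Complex.exp (((π ^ 2 / 4 / t : ℝ) : ℂ) / (1 + x * Complex.I)) * (1 + E) := by
  obtain ⟨δ, C, hδ, hC, hK⟩ := K_bound
  refine ⟨min (min 1 (δ / 2)) (1 / C), C, by positivity, (min_le_left _ _).trans (min_le_left _ _),
    hC, ?_, fun t x ht ht0 hx => ?_⟩
  · calc C * min (min 1 (δ / 2)) (1 / C) ≤ C * (1 / C) := by gcongr; exact min_le_right _ _
      _ = 1 := by field_simp
  have htδ : t ≤ δ / 2 := ht0.trans ((min_le_left _ _).trans (min_le_right _ _))
  set v : ℂ := 1 + x * Complex.I with hv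
  have hvre : v.re = 1 := by simp [hv]
  have hv0 : v ≠ 0 := by intro h; rw [h] at hvre; simp at hvre
  have hs : ((t : ℂ) + (t * x : ℝ) * Complex.I) = t * v := by rw [hv]; push_cast; ring
  have ht' : (t : ℂ) ≠ 0 := by exact_mod_cast ht.ne'
  have hpi : (π : ℂ) ≠ 0 := by exact_mod_cast Real.pi_ne_zero
  set w := Complex.exp (-(2 * π ^ 2 / (t * v))) with hw
  have hwn : ‖w‖ ≤ t := by
    have e : -(2 * (π : ℂ) ^ 2 / (t * v)) = ((-(2 * π ^ 2 / t) : ℝ) : ℂ) * v⁻¹ := by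
      push_cast; field_simp
    have hns : Complex.normSq v = 1 + x ^ 2 := by
      rw [hv, Complex.normSq_apply]; simp; ring
    have hx2 : x ^ 2 ≤ 1 := by rw [← sq_abs]; nlinarith [abs_nonneg x]
    rw [hw, Complex.norm_exp, e, Complex.re_ofReal_mul, Complex.inv_re, hvre, hns]
    have h1 : -(2 * π ^ 2 / t) * (1 / (1 + x ^ 2)) ≤ -(1 / t) := by
      have : 1 / 2 ≤ 1 / (1 + x ^ 2) := one_div_le_one_div_of_le (by positivity) (by linarith)
      have h9 : 1 ≤ π ^ 2 := by nlinarith [Real.pi_gt_three]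
      have h10 : 2 / t ≤ 2 * π ^ 2 / t := by gcongr; linarith
      have h11 : 2 / t * (1 / 2) ≤ 2 * π ^ 2 / t * (1 / (1 + x ^ 2)) := by gcongr
      have h12 : 2 / t * (1 / 2) = 1 / t := by ring
      linarith
    refine (Real.exp_le_exp.mpr h1).trans ?_
    rw [Real.exp_neg, inv_le_comm₀ (Real.exp_pos _) ht, ← one_div]
    linarith [Real.add_one_le_exp (1 / t)]
  refine ⟨G w / G (w ^ 2) ^ 2 - 1, (hK w (by linarith)).trans (by gcongr), ?_⟩
  rw [hs, H_transform (by rw [Complex.re_ofReal_mul, hvre]; linarith), ← hw]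
  have e1 : (t : ℂ) * v / π = ((t / π : ℝ) : ℂ) * v := by push_cast; ring
  rw [e1, csqrt_real_mul (by have := Real.pi_pos; positivity) v hv0]
  have e2 : (π : ℂ) ^ 2 / (4 * (t * v)) = ((π ^ 2 / 4 / t : ℝ) : ℂ) / v := by
    push_cast; field_simp
  rw [e2]
  ring

end OverAsym

/-! ### The Laplace method on the major arc -/

namespace OverAsym

theorem poly_exp_bound {y : ℝ} : y + y ^ 3 ≤ 128 * Real.exp (y ^ 2 / 8) := by
  have h := Real.quadratic_le_exp_of_nonneg (x := y ^ 2 / 8) (by positivity)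
  nlinarith [sq_nonneg (y - 1), sq_nonneg (y ^ 2 - y), sq_nonneg (y ^ 2), sq_nonneg y]

theorem exp_factor_norm {L x : ℝ} (hL : 0 ≤ L) (hx : |x| ≤ 1) :
    ‖Complex.exp (-((L * x ^ 2 : ℝ) : ℂ) / (1 + x * Complex.I))‖ ≤
      Real.exp (-(L * x ^ 2) / 4) := by
  have hx2 : x ^ 2 ≤ 1 := by rw [← sq_abs]; nlinarith [abs_nonneg x]
  set v : ℂ := 1 + x * Complex.I with hv
  have hvre : v.re = 1 := by simp [hv]
  have hns : Complex.normSq v = 1 + x ^ 2 := by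
    rw [hv, Complex.normSq_apply]; simp; ring
  have e : -((L * x ^ 2 : ℝ) : ℂ) / v = ((-(L * x ^ 2) : ℝ) : ℂ) * v⁻¹ := by
    push_cast; rw [div_eq_mul_inv]
  rw [Complex.norm_exp, e, Complex.re_ofReal_mul, Complex.inv_re, hvre, hns]
  apply Real.exp_le_exp.mpr
  have h1 : 1 / 4 ≤ 1 / (1 + x ^ 2) := one_div_le_one_div_of_le (by positivity) (by linarith)
  have h2 : 0 ≤ L * x ^ 2 := by positivity
  nlinarith

theorem exp_factor_diff {L x : ℝ} (hL : 0 ≤ L) :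
    ‖Complex.exp (-((L * x ^ 2 : ℝ) : ℂ) / (1 + x * Complex.I)) -
      Complex.exp (-((L * x ^ 2 : ℝ) : ℂ))‖ ≤
      L * |x| ^ 3 * Real.exp (-(L * x ^ 2) / 4) ∨ 1 < |x| := by
  by_cases hx : 1 < |x|
  · exact Or.inr hx
  left
  push Not at hx
  have hx2 : x ^ 2 ≤ 1 := by rw [← sq_abs]; nlinarith [abs_nonneg x]
  set v : ℂ := 1 + x * Complex.I with hv
  have hvre : v.re = 1 := by simp [hv]
  have hv0 : v ≠ 0 := by intro h; rw [h] at hvre; simp at hvre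
  have hns : ‖v‖ ^ 2 = 1 + x ^ 2 := by
    rw [← Complex.normSq_eq_norm_sq, hv, Complex.normSq_apply]; simp; ring
  set w : ℂ := ((L * x ^ 2 : ℝ) : ℂ) * (x * Complex.I / v) with hw
  have e : -((L * x ^ 2 : ℝ) : ℂ) / v = -((L * x ^ 2 : ℝ) : ℂ) + w := by
    rw [hw]; field_simp; rw [hv]; ring
  have hvn1 : 1 ≤ ‖v‖ := by
    have := Complex.re_le_norm v; rwa [hvre] at this
  have hwn : ‖w‖ = L * x ^ 2 * (|x| / ‖v‖) := by
    rw [hw, norm_mul, norm_div, Complex.norm_real, norm_mul (x : ℂ), Complex.norm_real, Complex.norm_I,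
      mul_one, Real.norm_eq_abs, Real.norm_eq_abs, abs_of_nonneg (by positivity)]
  have hA : 0 ≤ L * x ^ 2 := by positivity
  have hw1 : ‖w‖ ≤ L * |x| ^ 3 := by
    rw [hwn]
    have : |x| / ‖v‖ ≤ |x| := div_le_self (abs_nonneg x) hvn1
    calc L * x ^ 2 * (|x| / ‖v‖) ≤ L * x ^ 2 * |x| := by gcongr
      _ = L * |x| ^ 3 := by rw [← sq_abs]; ring
  have hw2 : ‖w‖ ≤ 3 / 4 * (L * x ^ 2) := by
    rw [hwn]
    have : |x| / ‖v‖ ≤ 3 / 4 := by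
      rw [div_le_iff₀ (by linarith)]
      apply abs_le_of_sq_le_sq' _ (by positivity) |>.2
      rw [sq_abs, mul_pow, hns]; nlinarith
    nlinarith
  have h3 : ‖Complex.exp w - 1‖ ≤ ‖w‖ * Real.exp ‖w‖ := by
    simpa using Complex.norm_exp_sub_sum_le_norm_mul_exp w 1
  rw [e, Complex.exp_add]
  have e2 : Complex.exp (-((L * x ^ 2 : ℝ) : ℂ)) * Complex.exp w -
      Complex.exp (-((L * x ^ 2 : ℝ) : ℂ)) =
      Complex.exp (-((L * x ^ 2 : ℝ) : ℂ)) * (Complex.exp w - 1) := by ring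
  rw [e2, norm_mul, Complex.norm_exp]
  have e3 : (-((L * x ^ 2 : ℝ) : ℂ)).re = -(L * x ^ 2) := by
    rw [Complex.neg_re, Complex.ofReal_re]
  rw [e3]
  calc Real.exp (-(L * x ^ 2)) * ‖Complex.exp w - 1‖
      ≤ Real.exp (-(L * x ^ 2)) * ((L * |x| ^ 3) * Real.exp (3 / 4 * (L * x ^ 2))) := by
        gcongr
        exact h3.trans (by gcongr)
    _ = L * |x| ^ 3 * (Real.exp (-(L * x ^ 2)) * Real.exp (3 / 4 * (L * x ^ 2))) := by ring
    _ = L * |x| ^ 3 * Real.exp (-(L * x ^ 2) / 4) := by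
        rw [← Real.exp_add]; congr 2; ring

theorem gauss_tail {L x : ℝ} (hL : 1 ≤ L) :
    (|x| + L * |x| ^ 3) * Real.exp (-(L * x ^ 2) / 4) ≤
      128 / Real.sqrt L * Real.exp (-(L / 8) * x ^ 2) := by
  have hs : 0 < Real.sqrt L := Real.sqrt_pos.mpr (by linarith)
  have hs2 : Real.sqrt L ^ 2 = L := Real.sq_sqrt (by linarith)
  have h := poly_exp_bound (y := Real.sqrt L * |x|)
  have e1 : (Real.sqrt L * |x|) ^ 2 = L * x ^ 2 := by rw [mul_pow, hs2, sq_abs]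
  have e2 : Real.sqrt L * |x| + (Real.sqrt L * |x|) ^ 3 =
      Real.sqrt L * (|x| + L * |x| ^ 3) := by
    linear_combination (Real.sqrt L * |x| ^ 3) * hs2
  rw [e1, e2] at h
  have h2 : |x| + L * |x| ^ 3 ≤ 128 / Real.sqrt L * Real.exp (L * x ^ 2 / 8) := by
    rw [div_mul_eq_mul_div, le_div_iff₀ hs]; linarith
  calc (|x| + L * |x| ^ 3) * Real.exp (-(L * x ^ 2) / 4)
      ≤ 128 / Real.sqrt L * Real.exp (L * x ^ 2 / 8) * Real.exp (-(L * x ^ 2) / 4) := by gcongr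
    _ = 128 / Real.sqrt L * Real.exp (-(L / 8) * x ^ 2) := by
        rw [mul_assoc, ← Real.exp_add]; congr 2; ring

theorem pt_bound {L x D : ℝ} {E : ℂ} (hL : 1 ≤ L) (hx : |x| ≤ 1) (hE : ‖E‖ ≤ D) :
    ‖Complex.sqrt (1 + x * Complex.I) * (1 + E) *
        Complex.exp (-((L * x ^ 2 : ℝ) : ℂ) / (1 + x * Complex.I)) -
      Complex.exp (-((L * x ^ 2 : ℝ) : ℂ))‖ ≤
      (128 / Real.sqrt L + 2 * D) * Real.exp (-(L / 8) * x ^ 2) := by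
  have h1 := exp_factor_norm (L := L) (by linarith) hx
  have h2 := (exp_factor_diff (L := L) (x := x) (by linarith)).resolve_right (not_lt.mpr hx)
  have h3 := csqrt_sub_one (x := x)
  have h4 := gauss_tail (x := x) hL
  set p := Complex.sqrt (1 + x * Complex.I)
  set e1 := Complex.exp (-((L * x ^ 2 : ℝ) : ℂ) / (1 + x * Complex.I))
  set e0 := Complex.exp (-((L * x ^ 2 : ℝ) : ℂ))
  have hp : ‖p‖ ≤ 2 := by
    calc ‖p‖ = ‖(p - 1) + 1‖ := by ring_nf
      _ ≤ ‖p - 1‖ + ‖(1 : ℂ)‖ := norm_add_le _ _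
      _ ≤ 2 := by rw [norm_one]; linarith
  have hD : 0 ≤ D := (norm_nonneg _).trans hE
  have key : p * (1 + E) * e1 - e0 = (p - 1) * e1 + p * E * e1 + (e1 - e0) := by ring
  rw [key]
  have hexp : Real.exp (-(L * x ^ 2) / 4) ≤ Real.exp (-(L / 8) * x ^ 2) := by
    apply Real.exp_le_exp.mpr
    have : 0 ≤ L * x ^ 2 := by positivity
    linarith
  calc ‖(p - 1) * e1 + p * E * e1 + (e1 - e0)‖
      ≤ ‖p - 1‖ * ‖e1‖ + ‖p‖ * ‖E‖ * ‖e1‖ + ‖e1 - e0‖ := by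
        refine (norm_add_le _ _).trans ?_
        gcongr
        refine (norm_add_le _ _).trans ?_
        rw [norm_mul, norm_mul, norm_mul]
    _ ≤ |x| * Real.exp (-(L * x ^ 2) / 4) + 2 * D * Real.exp (-(L * x ^ 2) / 4) +
          L * |x| ^ 3 * Real.exp (-(L * x ^ 2) / 4) := by gcongr
    _ = (|x| + L * |x| ^ 3) * Real.exp (-(L * x ^ 2) / 4) +
          2 * D * Real.exp (-(L * x ^ 2) / 4) := by ring
    _ ≤ 128 / Real.sqrt L * Real.exp (-(L / 8) * x ^ 2) +
          2 * D * Real.exp (-(L / 8) * x ^ 2) := by gcongr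
    _ = _ := by ring

theorem laplace {L B : ℝ} (hL : 1 ≤ L) (hB : 128 ≤ B) {F : ℝ → ℂ} (hF : Continuous F)
    (hb : ∀ x, |x| ≤ 1 → ‖F x - Complex.exp (-((L * x ^ 2 : ℝ) : ℂ))‖ ≤
      B / Real.sqrt L * Real.exp (-(L / 8) * x ^ 2)) :
    ‖(∫ x in (-1 : ℝ)..1, F x) - (Real.sqrt (π / L) : ℝ)‖ ≤ 6 * B / L := by
  have hs : 0 < Real.sqrt L := Real.sqrt_pos.mpr (by linarith)
  have hs2 : Real.sqrt L ^ 2 = L := Real.sq_sqrt (by linarith)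
  have hg : ((Real.sqrt (π / L) : ℝ) : ℂ) = ∫ x : ℝ, Complex.exp (-((L * x ^ 2 : ℝ) : ℂ)) := by
    rw [← integral_gaussian, ← integral_complex_ofReal]
    congr 1; ext x; push_cast; ring_nf
  have hgi : MeasureTheory.Integrable (fun x : ℝ => Complex.exp (-((L * x ^ 2 : ℝ) : ℂ))) := by
    have := (integrable_exp_neg_mul_sq (b := L) (by linarith)).ofReal (𝕜 := ℂ)
    refine this.congr (Filter.Eventually.of_forall fun x => ?_)
    simp
  have hFi : MeasureTheory.Integrable ((Set.Ioc (-1 : ℝ) 1).indicator F) := by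
    rw [MeasureTheory.integrable_indicator_iff measurableSet_Ioc]
    exact hF.integrableOn_Ioc
  rw [intervalIntegral.integral_of_le (by norm_num), ← MeasureTheory.integral_indicator
    measurableSet_Ioc, hg, ← MeasureTheory.integral_sub hFi hgi]
  have hbi : MeasureTheory.Integrable (fun x : ℝ => B / Real.sqrt L * Real.exp (-(L / 8) * x ^ 2)) :=
    (integrable_exp_neg_mul_sq (by linarith)).const_mul _
  refine (MeasureTheory.norm_integral_le_of_norm_le hbi
    (Filter.Eventually.of_forall fun x => ?_)).trans ?_
  · by_cases hx : x ∈ Set.Ioc (-1 : ℝ) 1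
    · rw [Set.indicator_of_mem hx]
      exact hb x (abs_le.mpr ⟨hx.1.le, hx.2⟩)
    · rw [Set.indicator_of_notMem hx, zero_sub, norm_neg, Complex.norm_exp, Complex.neg_re,
        Complex.ofReal_re]
      have hx1 : 1 ≤ |x| := by
        by_contra h
        push Not at h
        have := abs_lt.mp h
        exact hx ⟨this.1, this.2.le⟩
      have h4 := gauss_tail (x := x) hL
      have h5 : 0 ≤ L * x ^ 2 := by positivity
      calc Real.exp (-(L * x ^ 2)) ≤ 1 * Real.exp (-(L * x ^ 2) / 4) := by
            rw [one_mul]; apply Real.exp_le_exp.mpr; linarith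
        _ ≤ (|x| + L * |x| ^ 3) * Real.exp (-(L * x ^ 2) / 4) := by
            gcongr
            have : 0 ≤ L * |x| ^ 3 := by positivity
            linarith
        _ ≤ _ := h4
        _ ≤ _ := by gcongr
  · rw [MeasureTheory.integral_const_mul, integral_gaussian]
    have h6 : Real.sqrt (π / (L / 8)) ≤ 6 / Real.sqrt L := by
      rw [← Real.sqrt_sq (show (0 : ℝ) ≤ 6 by norm_num), ← Real.sqrt_div (by norm_num)]
      apply Real.sqrt_le_sqrt
      rw [div_div_eq_mul_div]
      gcongr
      nlinarith [Real.pi_lt_four]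
    calc B / Real.sqrt L * Real.sqrt (π / (L / 8)) ≤ B / Real.sqrt L * (6 / Real.sqrt L) := by
          gcongr
      _ = 6 * B / L := by
          rw [div_mul_div_comm, ← pow_two, hs2]; ring

theorem integrand_continuous {t : ℝ} (ht : 0 < t) (n : ℕ) :
    Continuous fun θ : ℝ => H (Complex.exp (-((t : ℂ) + θ * Complex.I))) *
      Complex.exp (n * ((t : ℂ) + θ * Complex.I)) := by
  refine Continuous.mul ?_ (by fun_prop)
  have hq : ∀ θ : ℝ, ‖Complex.exp (-((t : ℂ) + θ * Complex.I))‖ < 1 := by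
    intro θ; rw [Complex.norm_exp]; simpa using ht
  have hc : Continuous fun θ : ℝ => Complex.exp (-((t : ℂ) + θ * Complex.I)) := by fun_prop
  rw [continuous_iff_continuousAt]
  intro θ
  have h1 : ContinuousAt (fun θ : ℝ => G (Complex.exp (-((t : ℂ) + θ * Complex.I)))) θ :=
    ContinuousAt.comp (g := G) (G_differentiableAt (hq θ)).continuousAt hc.continuousAt
  have h2 : ContinuousAt (fun θ : ℝ => G (Complex.exp (-((t : ℂ) + θ * Complex.I)) ^ 2)) θ := by
    refine ContinuousAt.comp (g := G) (f := fun θ : ℝ =>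
      Complex.exp (-((t : ℂ) + θ * Complex.I)) ^ 2) ?_ (hc.pow 2).continuousAt
    refine (G_differentiableAt ?_).continuousAt
    rw [norm_pow]; exact pow_lt_one₀ (norm_nonneg _) (hq θ) (by norm_num)
  exact h2.div (h1.pow 2) (pow_ne_zero 2 (G_ne_zero (hq θ)))

end OverAsym

/-! ### Asymptotics of the overpartition function -/

namespace OverAsym

theorem pbar_t : ∃ t₀ C : ℝ, 0 < t₀ ∧ 0 < C ∧ ∀ (t L : ℝ) (n : ℕ), 0 < t → t ≤ t₀ →
    L = π ^ 2 / 4 / t → n * t = L →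
    |2 * π * (overpartitionCount n : ℝ) - t ^ 2 / π * Real.exp (2 * L)| ≤
      C * t ^ 2 * Real.sqrt t * Real.exp (2 * L) := by
  obtain ⟨t₀, C, ht₀, ht₀1, hC, hCt, hmaj⟩ := major_formula
  refine ⟨t₀, 3 * (128 + 6 * C) + 2 * π * 80000, ht₀, by have := Real.pi_pos; positivity,
    fun t L n ht htt hL hnt => ?_⟩
  have hpi := Real.pi_pos
  have hpi3 := Real.pi_gt_three
  have hpi4 := Real.pi_lt_four
  have ht1 : t ≤ 1 := htt.trans ht₀1
  have hLt : L * t = π ^ 2 / 4 := by rw [hL]; field_simp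
  have hL1 : 1 ≤ L := by
    rw [hL, le_div_iff₀ ht]; nlinarith
  have hL4 : L * t ≤ 4 := by nlinarith
  have hsL : 0 < Real.sqrt L := Real.sqrt_pos.mpr (by linarith)
  have hsL2 : Real.sqrt L ^ 2 = L := Real.sq_sqrt (by linarith)
  have hsL1 : 1 ≤ Real.sqrt L := Real.one_le_sqrt.mpr hL1
  have hst : 0 < Real.sqrt t := Real.sqrt_pos.mpr ht
  have hstp : 0 < Real.sqrt (t / π) := Real.sqrt_pos.mpr (by positivity)
  have hstp_le : Real.sqrt (t / π) ≤ Real.sqrt t := by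
    apply Real.sqrt_le_sqrt
    exact div_le_self ht.le (by linarith)
  have htL : t ≤ 3 / Real.sqrt L := by
    rw [le_div_iff₀ hsL]
    have : t * Real.sqrt L ≤ t * Real.sqrt L ^ 2 := by gcongr; nlinarith
    rw [hsL2] at this
    have h10 : π ^ 2 / 4 ≤ 3 := by nlinarith [Real.pi_lt_d2]
    linarith
  set g : ℝ → ℂ := fun θ => H (Complex.exp (-((t : ℂ) + θ * Complex.I))) *
      Complex.exp (n * ((t : ℂ) + θ * Complex.I)) with hg
  have hgc : Continuous g := integrand_continuous ht n
  have hgi : ∀ a b : ℝ, IntervalIntegrable g MeasureTheory.volume a b :=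
    fun a b => hgc.intervalIntegrable a b
  have hint : ∫ θ in (-π)..π, g θ = 2 * π * (overpartitionCount n : ℂ) := pbar_integral ht n
  have hsplit : ∫ θ in (-π)..π, g θ =
      (∫ θ in (-π)..(-t), g θ) + (∫ θ in (-t)..t, g θ) + ∫ θ in t..π, g θ := by
    rw [intervalIntegral.integral_add_adjacent_intervals (hgi _ _) (hgi _ _),
      intervalIntegral.integral_add_adjacent_intervals (hgi _ _) (hgi _ _)]
  -- minor arcs
  have hHre : (H (Real.exp (-t) : ℝ)).re ≤ Real.sqrt t * Real.exp L := by
    obtain ⟨E, hE, hH⟩ := hmaj t 0 ht htt (by simp)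
    have hE1 : ‖1 + E‖ ≤ 2 := by
      refine (norm_add_le _ _).trans ?_
      rw [norm_one]
      have : C * t ≤ C * t₀ := by gcongr
      linarith
    have e0 : Complex.exp (-((t : ℂ) + (t * 0 : ℝ) * Complex.I)) = ((Real.exp (-t) : ℝ) : ℂ) := by
      push_cast; congr 1; ring
    have e1 : Complex.sqrt (1 + (0 : ℝ) * Complex.I) = 1 := by
      simp [Complex.sqrt]
    rw [e0, e1, ← hL] at hH
    refine (Complex.re_le_norm _).trans ?_
    rw [hH]
    have e2 : (L : ℂ) / (1 + (0 : ℝ) * Complex.I) = (L : ℂ) := by simp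
    rw [e2, norm_mul, norm_mul, norm_mul, norm_mul, Complex.norm_real, Complex.norm_exp,
      Complex.ofReal_re, norm_one, Real.norm_of_nonneg hstp.le]
    have : ‖(1 / 2 : ℂ)‖ = 1 / 2 := by norm_num
    rw [this]
    calc 1 / 2 * Real.sqrt (t / π) * 1 * Real.exp L * ‖1 + E‖
        ≤ 1 / 2 * Real.sqrt t * 1 * Real.exp L * 2 := by gcongr
      _ = _ := by ring
  have hexpt : Real.exp (-(1 / 200) / t) ≤ 80000 * t ^ 2 := by
    have h := Real.quadratic_le_exp_of_nonneg (x := 1 / 200 / t) (by positivity)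
    have h2 : (1 / 200 / t) ^ 2 / 2 ≤ Real.exp (1 / 200 / t) := by
      have : 0 ≤ 1 / 200 / t := by positivity
      linarith
    rw [neg_div, Real.exp_neg]
    rw [inv_le_comm₀ (Real.exp_pos _) (by positivity)]
    refine le_trans (le_of_eq ?_) h2
    field_simp; norm_num
  have hminor : ∀ θ : ℝ, t ≤ |θ| → |θ| ≤ π →
      ‖g θ‖ ≤ 80000 * t ^ 2 * Real.sqrt t * Real.exp (2 * L) := by
    intro θ h1 h2
    have hm := minor_bound ht ht1 h1 h2
    have e : ‖Complex.exp (n * ((t : ℂ) + θ * Complex.I))‖ = Real.exp L := by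
      rw [Complex.norm_exp]; congr 1; rw [← hnt]; simp
    rw [hg]
    simp only
    rw [norm_mul, e]
    calc ‖H (Complex.exp (-((t : ℂ) + θ * Complex.I)))‖ * Real.exp L
        ≤ (Real.sqrt t * Real.exp L * (80000 * t ^ 2)) * Real.exp L := by
          gcongr
          refine hm.trans ?_
          gcongr
      _ = 80000 * t ^ 2 * Real.sqrt t * (Real.exp L * Real.exp L) := by ring
      _ = _ := by rw [← Real.exp_add, ← two_mul]
  have htpi : t ≤ π := by linarith
  set M := 80000 * t ^ 2 * Real.sqrt t * Real.exp (2 * L) with hM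
  have hM0 : 0 ≤ M := by positivity
  have hm1 : ‖∫ θ in (-π)..(-t), g θ‖ ≤ π * M := by
    have := intervalIntegral.norm_integral_le_of_norm_le_const (a := -π) (b := -t) (f := g) (C := M)
      (fun θ hθ => by
        rw [Set.uIoc_of_le (by linarith)] at hθ
        have hneg : |θ| = -θ := abs_of_nonpos (by linarith [hθ.2])
        exact hminor θ (by rw [hneg]; linarith [hθ.2]) (by rw [hneg]; linarith [hθ.1]))
    refine this.trans ?_
    rw [abs_of_nonneg (by linarith)]
    nlinarith
  have hm2 : ‖∫ θ in t..π, g θ‖ ≤ π * M := by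
    have := intervalIntegral.norm_integral_le_of_norm_le_const (a := t) (b := π) (f := g) (C := M)
      (fun θ hθ => by
        rw [Set.uIoc_of_le (by linarith)] at hθ
        have hneg : |θ| = θ := abs_of_nonneg (by linarith [hθ.1])
        exact hminor θ (by rw [hneg]; linarith [hθ.1]) (by rw [hneg]; linarith [hθ.2]))
    refine this.trans ?_
    rw [abs_of_nonneg (by linarith)]
    nlinarith
  -- major arc
  set A : ℝ := 1 / 2 * Real.sqrt (t / π) * Real.exp (2 * L) with hA
  have hA0 : 0 < A := by positivity
  have hAc : (A : ℂ) ≠ 0 := by exact_mod_cast hA0.ne'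
  set F : ℝ → ℂ := fun x => (A : ℂ)⁻¹ * g (t * x) with hF
  have hFc : Continuous F := by
    rw [hF]; exact continuous_const.mul (hgc.comp (by fun_prop))
  have hlap := laplace (L := L) (B := 128 + 6 * C) hL1 (by linarith) hFc (fun x hx => by
    obtain ⟨E, hE, hH⟩ := hmaj t x ht htt hx
    have hp := pt_bound (L := L) hL1 hx hE
    have hFx : F x = Complex.sqrt (1 + x * Complex.I) * (1 + E) *
        Complex.exp (-((L * x ^ 2 : ℝ) : ℂ) / (1 + x * Complex.I)) := by
      have hvre : (1 + x * Complex.I : ℂ).re = 1 := by simp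
      have hv0 : (1 + x * Complex.I : ℂ) ≠ 0 := by
        intro h; rw [h] at hvre; simp at hvre
      have hntc : (n : ℂ) * t = L := by exact_mod_cast hnt
      have e1 : (n : ℂ) * ((t : ℂ) + (t * x : ℝ) * Complex.I) = L * (1 + x * Complex.I) := by
        rw [← hntc]; push_cast; ring
      have e2 : Complex.exp ((L : ℂ) / (1 + x * Complex.I)) *
          Complex.exp (L * (1 + x * Complex.I)) = Complex.exp (2 * L) *
          Complex.exp (-((L * x ^ 2 : ℝ) : ℂ) / (1 + x * Complex.I)) := by
        rw [← Complex.exp_add, ← Complex.exp_add]; congr 1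
        field_simp
        push_cast
        linear_combination ((L : ℂ) * x ^ 2) * Complex.I_sq
      rw [hF, hg]
      simp only
      rw [hH, e1, ← hL, inv_mul_eq_iff_eq_mul₀ hAc, hA]
      push_cast at e2 ⊢
      linear_combination (1 / 2 * (Real.sqrt (t / π) : ℝ) * Complex.sqrt (1 + x * Complex.I) *
        (1 + E)) * e2
    rw [hFx]
    refine hp.trans ?_
    gcongr
    rw [add_div]
    gcongr
    calc 2 * (C * t) ≤ 2 * (C * (3 / Real.sqrt L)) := by gcongr
      _ = 6 * C / Real.sqrt L := by ring)
  have hmid : ∫ θ in (-t)..t, g θ = t * A * ∫ x in (-1 : ℝ)..1, F x := by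
    rw [hF, intervalIntegral.integral_const_mul]
    have h' : (t : ℂ) * ∫ x in (-1 : ℝ)..1, g (t * x) = ∫ θ in (-t)..t, g θ := by
      have h2 := intervalIntegral.smul_integral_comp_mul_left (f := g) (a := -1) (b := 1) (c := t)
      rwa [mul_neg, mul_one, Complex.real_smul] at h2
    rw [← h']
    field_simp
  have hmain : t * A * Real.sqrt (π / L) = t ^ 2 / π * Real.exp (2 * L) := by
    have : Real.sqrt (t / π) * Real.sqrt (π / L) = 2 * t / π := by
      rw [← Real.sqrt_mul (by positivity), Real.sqrt_eq_iff_mul_self_eq (by positivity) (by positivity),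
        hL]
      field_simp; norm_num
    rw [hA]
    linear_combination (t * (1 / 2) * Real.exp (2 * L)) * this
  have hmajor : ‖(∫ θ in (-t)..t, g θ) - ((t ^ 2 / π * Real.exp (2 * L) : ℝ) : ℂ)‖ ≤
      3 * (128 + 6 * C) * t ^ 2 * Real.sqrt t * Real.exp (2 * L) := by
    rw [hmid, ← hmain]
    have e : (t : ℂ) * A * (∫ x in (-1 : ℝ)..1, F x) - ((t * A * Real.sqrt (π / L) : ℝ) : ℂ) =
        ((t * A : ℝ) : ℂ) * ((∫ x in (-1 : ℝ)..1, F x) - (Real.sqrt (π / L) : ℝ)) := by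
      push_cast; ring
    rw [e, norm_mul, Complex.norm_real, Real.norm_of_nonneg (by positivity)]
    have hLinv : 1 / L ≤ t := by
      rw [div_le_iff₀ (by linarith)]; nlinarith
    calc t * A * ‖(∫ x in (-1 : ℝ)..1, F x) - (Real.sqrt (π / L) : ℝ)‖
        ≤ t * A * (6 * (128 + 6 * C) / L) := by gcongr
      _ = t * A * (6 * (128 + 6 * C)) * (1 / L) := by ring
      _ ≤ t * A * (6 * (128 + 6 * C)) * t := by gcongr
      _ ≤ t * (1 / 2 * Real.sqrt t * Real.exp (2 * L)) * (6 * (128 + 6 * C)) * t := by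
          rw [hA]; gcongr
      _ = _ := by ring
  have hfin : ((2 * π * (overpartitionCount n : ℝ) - t ^ 2 / π * Real.exp (2 * L) : ℝ) : ℂ) =
      ((∫ θ in (-t)..t, g θ) - ((t ^ 2 / π * Real.exp (2 * L) : ℝ) : ℂ)) +
      (∫ θ in (-π)..(-t), g θ) + ∫ θ in t..π, g θ := by
    have h := hint.symm.trans hsplit
    have e : ((2 * π * (overpartitionCount n : ℝ) - t ^ 2 / π * Real.exp (2 * L) : ℝ) : ℂ) =
      2 * π * (overpartitionCount n : ℂ) - ((t ^ 2 / π * Real.exp (2 * L) : ℝ) : ℂ) := by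
      push_cast; ring
    rw [e, h]; ring
  rw [← Real.norm_eq_abs, ← Complex.norm_real, hfin]
  refine (norm_add₃_le).trans ?_
  refine (add_le_add (add_le_add hmajor hm1) hm2).trans (le_of_eq ?_)
  rw [hM]; ring

theorem pbar_asymp : ∃ C : ℝ, 0 < C ∧ ∃ N : ℕ, 1 ≤ N ∧ ∀ n : ℕ, N ≤ n →
    |(overpartitionCount n : ℝ) - 1 / 8 * (n : ℝ)⁻¹ * Real.exp (π * Real.sqrt n)| ≤
      C * (n : ℝ) ^ (-(5 : ℝ) / 4) * Real.exp (π * Real.sqrt n) := by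
  obtain ⟨t₀, C, ht₀, hC, h⟩ := pbar_t
  have hpi := Real.pi_pos
  have hpi3 := Real.pi_gt_three
  have hpi4 := Real.pi_lt_four
  refine ⟨4 * 2 * C, by positivity, ⌈(2 / t₀) ^ 2⌉₊ + 1, by omega, fun n hn => ?_⟩
  have hn1 : 1 ≤ n := by omega
  have hnpos : (0 : ℝ) < n := by exact_mod_cast hn1
  set s := Real.sqrt n with hs
  have hs0 : 0 < s := Real.sqrt_pos.mpr hnpos
  have hs2 : s ^ 2 = n := Real.sq_sqrt hnpos.le
  have hst : 2 / t₀ ≤ s := by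
    apply Real.le_sqrt_of_sq_le
    have h1 : (2 / t₀) ^ 2 ≤ ⌈(2 / t₀) ^ 2⌉₊ := Nat.le_ceil _
    have h2 : (⌈(2 / t₀) ^ 2⌉₊ : ℝ) + 1 ≤ n := by exact_mod_cast hn
    linarith
  have ht : 0 < π / (2 * s) := by positivity
  have htt : π / (2 * s) ≤ t₀ := by
    rw [div_le_iff₀ ht₀] at hst
    rw [div_le_iff₀ (by positivity)]
    linarith
  have hmain := h (π / (2 * s)) (π * s / 2) n ht htt (by field_simp; norm_num)
    (by rw [← hs2]; field_simp)
  have e1 : 2 * (π * s / 2) = π * s := by ring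
  rw [e1] at hmain
  have e2 : (π / (2 * s)) ^ 2 / π = 2 * π * (1 / 8 * (n : ℝ)⁻¹) := by
    rw [← hs2]; field_simp; norm_num
  rw [e2] at hmain
  have e3 : 2 * π * (overpartitionCount n : ℝ) - 2 * π * (1 / 8 * (n : ℝ)⁻¹) * Real.exp (π * s) =
    2 * π * ((overpartitionCount n : ℝ) - 1 / 8 * (n : ℝ)⁻¹ * Real.exp (π * s)) := by ring
  rw [e3, abs_mul, abs_of_pos (by positivity)] at hmain
  -- powers
  have hp : (n : ℝ) ^ (-(5 : ℝ) / 4) = (n : ℝ)⁻¹ * (Real.sqrt s)⁻¹ := by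
    rw [show (-(5 : ℝ) / 4) = -1 + -(1 / 4) by norm_num, Real.rpow_add hnpos, Real.rpow_neg_one,
      Real.rpow_neg hnpos.le, hs, Real.sqrt_eq_rpow, Real.sqrt_eq_rpow, ← Real.rpow_mul hnpos.le]
    norm_num
  have hss : 0 < Real.sqrt s := Real.sqrt_pos.mpr hs0
  have hrt : Real.sqrt (π / (2 * s)) ≤ 2 * (Real.sqrt s)⁻¹ := by
    rw [Real.sqrt_le_left (by positivity), mul_pow, inv_pow, Real.sq_sqrt hs0.le]
    rw [div_le_iff₀ (by positivity)]
    field_simp; linarith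
  have hsq : (π / (2 * s)) ^ 2 ≤ 4 * (n : ℝ)⁻¹ := by
    rw [← hs2, div_pow, div_le_iff₀ (by positivity)]
    field_simp
    nlinarith
  have hb : C * (π / (2 * s)) ^ 2 * Real.sqrt (π / (2 * s)) * Real.exp (π * s) ≤
      4 * 2 * C * (n : ℝ) ^ (-(5 : ℝ) / 4) * Real.exp (π * s) := by
    rw [hp]
    calc C * (π / (2 * s)) ^ 2 * Real.sqrt (π / (2 * s)) * Real.exp (π * s)
        ≤ C * (4 * (n : ℝ)⁻¹) * (2 * (Real.sqrt s)⁻¹) * Real.exp (π * s) := by gcongr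
      _ = _ := by ring
  refine le_trans ?_ (hmain.trans hb)
  have := abs_nonneg ((overpartitionCount n : ℝ) - 1 / 8 * (n : ℝ)⁻¹ * Real.exp (π * s))
  nlinarith

end OverAsym

/-! ### Comparison of the terms -/

namespace OverAsym

theorem rpow_five_fourths {n : ℝ} (hn : 0 < n) :
    n ^ (-(5 : ℝ) / 4) = n⁻¹ * (Real.sqrt (Real.sqrt n))⁻¹ := by
  rw [show (-(5 : ℝ) / 4) = -1 + -(1 / 4) by norm_num, Real.rpow_add hn, Real.rpow_neg_one,
    Real.rpow_neg hn.le, Real.sqrt_eq_rpow, Real.sqrt_eq_rpow, ← Real.rpow_mul hn.le]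
  norm_num

theorem shift_main {n d : ℝ} (hn : 2 ≤ n) (hd : 0 ≤ d) (hdn : 2 * d ≤ n) :
    |1 / 8 * (n - d)⁻¹ * Real.exp (π * Real.sqrt (n - d)) -
      1 / 8 * n⁻¹ * Real.exp (π * Real.sqrt n)| ≤
      d * n ^ (-(5 : ℝ) / 4) * Real.exp (π * Real.sqrt n) := by
  have hpi := Real.pi_pos
  have hpi4 := Real.pi_lt_four
  have hn0 : 0 < n := by linarith
  have hm0 : 0 < n - d := by linarith
  set m := n - d with hm
  set r := Real.sqrt n with hr
  set u := Real.sqrt m with hu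
  have hr1 : 1 ≤ r := Real.one_le_sqrt.mpr (by linarith)
  have hu0 : 0 ≤ u := Real.sqrt_nonneg _
  have hr2 : r ^ 2 = n := Real.sq_sqrt hn0.le
  have hu2 : u ^ 2 = m := Real.sq_sqrt hm0.le
  have hur : u ≤ r := Real.sqrt_le_sqrt (by linarith)
  have hdiff : r - u ≤ d * r⁻¹ := by
    rw [← div_eq_mul_inv, le_div_iff₀ (by linarith)]
    nlinarith
  have hrs : r⁻¹ ≤ (Real.sqrt r)⁻¹ := by
    have h1 : 0 < Real.sqrt r := Real.sqrt_pos.mpr (by linarith)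
    have h2 : Real.sqrt r ≤ r := by
      rw [Real.sqrt_le_left (by linarith)]; nlinarith
    gcongr
  have hinv : m⁻¹ - n⁻¹ ≤ 2 * d * n⁻¹ * r⁻¹ := by
    have e : m⁻¹ - n⁻¹ = d * n⁻¹ * m⁻¹ := by
      field_simp; rw [hm]; ring
    have h1 : m⁻¹ ≤ 2 * r⁻¹ := by
      have h2 : m⁻¹ ≤ (n / 2)⁻¹ := by gcongr; linarith
      have h3 : (n / 2)⁻¹ = 2 * (n)⁻¹ := by rw [inv_div]; ring
      have h4 : n⁻¹ ≤ r⁻¹ := by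
        gcongr
        nlinarith
      linarith
    rw [e]
    calc d * n⁻¹ * m⁻¹ ≤ d * n⁻¹ * (2 * r⁻¹) := by gcongr
      _ = _ := by ring
  have hinv0 : 0 ≤ m⁻¹ - n⁻¹ := by
    have : n⁻¹ ≤ m⁻¹ := by gcongr; linarith
    linarith
  have hP : Real.exp (π * u) ≤ Real.exp (π * r) := by gcongr
  have hPd : Real.exp (π * r) - Real.exp (π * u) ≤ Real.exp (π * r) * (4 * (d * r⁻¹)) := by
    have e : Real.exp (π * u) = Real.exp (π * r) * Real.exp (-(π * (r - u))) := by
      rw [← Real.exp_add]; congr 1; ring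
    have h1 := Real.add_one_le_exp (-(π * (r - u)))
    have h2 : π * (r - u) ≤ 4 * (d * r⁻¹) := by
      have : 0 ≤ r - u := by linarith
      nlinarith
    rw [e]
    have h3 := Real.exp_pos (π * r)
    nlinarith
  rw [rpow_five_fourths hn0, ← hr]
  have key : 1 / 8 * m⁻¹ * Real.exp (π * u) - 1 / 8 * n⁻¹ * Real.exp (π * r) =
      1 / 8 * ((m⁻¹ - n⁻¹) * Real.exp (π * u) -
        n⁻¹ * (Real.exp (π * r) - Real.exp (π * u))) := by ring
  rw [key]
  have hE := Real.exp_pos (π * r)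
  have hA : (m⁻¹ - n⁻¹) * Real.exp (π * u) ≤ 2 * d * n⁻¹ * (Real.sqrt r)⁻¹ * Real.exp (π * r) := by
    calc (m⁻¹ - n⁻¹) * Real.exp (π * u) ≤ (2 * d * n⁻¹ * r⁻¹) * Real.exp (π * r) := by gcongr
      _ ≤ _ := by gcongr
  have hB : n⁻¹ * (Real.exp (π * r) - Real.exp (π * u)) ≤
      4 * d * n⁻¹ * (Real.sqrt r)⁻¹ * Real.exp (π * r) := by
    calc n⁻¹ * (Real.exp (π * r) - Real.exp (π * u)) ≤
        n⁻¹ * (Real.exp (π * r) * (4 * (d * r⁻¹))) := by gcongr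
      _ ≤ n⁻¹ * (Real.exp (π * r) * (4 * (d * (Real.sqrt r)⁻¹))) := by gcongr
      _ = _ := by ring
  have hA0 : 0 ≤ (m⁻¹ - n⁻¹) * Real.exp (π * u) := by positivity
  have hB0 : 0 ≤ n⁻¹ * (Real.exp (π * r) - Real.exp (π * u)) :=
    mul_nonneg (by positivity) (by linarith)
  have hZ : 0 ≤ d * n⁻¹ * (Real.sqrt r)⁻¹ * Real.exp (π * r) := by positivity
  rw [abs_le]
  constructor <;> nlinarith

theorem shift_error {n m : ℝ} (hn : 2 ≤ n) (hmn : m ≤ n) (hm : n ≤ 2 * m) :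
    m ^ (-(5 : ℝ) / 4) * Real.exp (π * Real.sqrt m) ≤
      4 * n ^ (-(5 : ℝ) / 4) * Real.exp (π * Real.sqrt n) := by
  have hpi := Real.pi_pos
  have hm0 : 0 < m := by linarith
  have hn0 : 0 < n := by linarith
  have h1 : m ^ (-(5 : ℝ) / 4) ≤ 4 * n ^ (-(5 : ℝ) / 4) := by
    calc m ^ (-(5 : ℝ) / 4) ≤ (n / 2) ^ (-(5 : ℝ) / 4) :=
          Real.rpow_le_rpow_of_nonpos (by positivity) (by linarith) (by norm_num)
      _ = (1 / 2 : ℝ) ^ (-(5 : ℝ) / 4) * n ^ (-(5 : ℝ) / 4) := by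
          rw [← Real.mul_rpow (by norm_num) hn0.le]; congr 1; ring
      _ ≤ 4 * n ^ (-(5 : ℝ) / 4) := by
          gcongr
          calc (1 / 2 : ℝ) ^ (-(5 : ℝ) / 4) ≤ (1 / 2 : ℝ) ^ (-(2 : ℝ)) :=
                Real.rpow_le_rpow_of_exponent_ge (by norm_num) (by norm_num) (by norm_num)
            _ = 4 := by
                rw [Real.rpow_neg (by norm_num)]; norm_num
  have h2 : Real.exp (π * Real.sqrt m) ≤ Real.exp (π * Real.sqrt n) := by gcongr
  gcongr

theorem sign_sum (k : ℕ) :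
    ∑ j ∈ Finset.Icc (-(k : ℤ)) (k : ℤ), (-1 : ℝ) ^ j.natAbs = (-1) ^ k := by
  induction k with
  | zero => simp
  | succ k ih =>
    have e : Finset.Icc (-((k + 1 : ℕ) : ℤ)) ((k + 1 : ℕ) : ℤ) =
        insert ((k + 1 : ℕ) : ℤ) (insert (-((k + 1 : ℕ) : ℤ))
          (Finset.Icc (-(k : ℤ)) (k : ℤ))) := by
      ext j; simp only [Finset.mem_Icc, Finset.mem_insert]; push_cast; omega
    rw [e, Finset.sum_insert (by
        simp only [Finset.mem_Icc, Finset.mem_insert]; push_cast; omega),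
      Finset.sum_insert (by simp only [Finset.mem_Icc]; push_cast; omega), ih, Int.natAbs_neg,
      Int.natAbs_natCast]
    ring

end OverAsym

theorem Mbar_asymptotic (ε : ℝ) (hε : 0 < ε) :
    ∃ C : ℝ, 0 < C ∧ ∃ N : ℕ, ∀ n : ℕ, N ≤ n → ∀ k : ℕ, 0 < k →
      (k : ℝ) ≤ (n : ℝ) ^ ((1 : ℝ) / 12 - ε) →
      |(Mbar k n : ℝ) - 1 / 8 * (n : ℝ)⁻¹ * Real.exp (π * Real.sqrt n)| ≤
        C * k ^ 3 * (n : ℝ) ^ (-(5 : ℝ) / 4) * Real.exp (π * Real.sqrt n) := by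
  obtain ⟨C, hC, N, hN, hp⟩ := OverAsym.pbar_asymp
  refine ⟨3 * (4 * C + 1), by positivity, 2 * N, fun n hn k hk hkn => ?_⟩
  have hn2 : 2 ≤ n := by omega
  have hn2r : (2 : ℝ) ≤ n := by exact_mod_cast hn2
  have hk1 : (1 : ℝ) ≤ k := by exact_mod_cast hk
  have hk12 : k ^ 12 ≤ n := by
    have h1 : (k : ℝ) ≤ (n : ℝ) ^ ((1 : ℝ) / 12) :=
      hkn.trans (Real.rpow_le_rpow_of_exponent_le (by linarith) (by linarith))
    have h2 : (k : ℝ) ^ 12 ≤ n := by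
      calc (k : ℝ) ^ 12 ≤ ((n : ℝ) ^ ((1 : ℝ) / 12)) ^ 12 := by gcongr
        _ = (n : ℝ) := by
          rw [← Real.rpow_natCast, ← Real.rpow_mul (by positivity)]; norm_num
    exact_mod_cast h2
  have h2k : 2 * k ^ 2 ≤ n := by
    rcases Nat.lt_or_ge k 2 with h | h
    · have : k = 1 := by omega
      subst this; omega
    · have h10 : 2 ≤ k ^ 10 := h.trans (Nat.le_self_pow (by norm_num) k)
      calc 2 * k ^ 2 ≤ k ^ 10 * k ^ 2 := by gcongr
        _ = k ^ 12 := by ring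
        _ ≤ n := hk12
  set g : ℝ := 1 / 8 * (n : ℝ)⁻¹ * Real.exp (π * Real.sqrt n) with hg
  set W : ℝ := (n : ℝ) ^ (-(5 : ℝ) / 4) * Real.exp (π * Real.sqrt n) with hW
  have hW0 : 0 ≤ W := by positivity
  have hterm : ∀ j ∈ Finset.Icc (-(k : ℤ)) (k : ℤ),
      |(pbarZ (n - j ^ 2) : ℝ) - g| ≤ (4 * C + 1) * k ^ 2 * W := by
    intro j hj
    rw [Finset.mem_Icc] at hj
    have hjk : j.natAbs ≤ k := by omega
    have hj2 : j.natAbs ^ 2 ≤ k ^ 2 := by gcongr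
    have hjn : 2 * j.natAbs ^ 2 ≤ n := by omega
    obtain ⟨m, hm⟩ : ∃ m, n = m + j.natAbs ^ 2 := ⟨n - j.natAbs ^ 2, by omega⟩
    have e1 : (n : ℤ) - j ^ 2 = m := by
      rw [← Int.natAbs_sq, hm]; push_cast; ring
    have e2 : (pbarZ (n - j ^ 2) : ℝ) = overpartitionCount m := by
      rw [e1, pbarZ, if_pos (by positivity)]; simp
    rw [e2]
    have hmN : N ≤ m := by omega
    have e3 : (m : ℝ) = n - (j.natAbs : ℝ) ^ 2 := by rw [hm]; push_cast; ring
    have hd2 : 2 * (j.natAbs : ℝ) ^ 2 ≤ n := by exact_mod_cast hjn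
    have hdk : (j.natAbs : ℝ) ^ 2 ≤ (k : ℝ) ^ 2 := by exact_mod_cast hj2
    have h1 := hp m hmN
    have h2 := OverAsym.shift_main hn2r (by positivity) hd2
    have h3 := OverAsym.shift_error (m := m) hn2r (by rw [e3]; nlinarith [sq_nonneg (j.natAbs : ℝ)])
      (by rw [e3]; linarith)
    rw [← e3, ← hg] at h2
    have h4 := abs_sub_le (overpartitionCount m : ℝ)
      (1 / 8 * (m : ℝ)⁻¹ * Real.exp (π * Real.sqrt m)) g
    have h5 : C * ((m : ℝ) ^ (-(5 : ℝ) / 4) * Real.exp (π * Real.sqrt m)) ≤ C * (4 * W) := by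
      refine mul_le_mul_of_nonneg_left ?_ hC.le
      rw [hW]; linarith
    have h6 : (j.natAbs : ℝ) ^ 2 * W ≤ (k : ℝ) ^ 2 * W := by gcongr
    have h7 : 4 * C * W ≤ 4 * C * W * (k : ℝ) ^ 2 := by
      apply le_mul_of_one_le_right (by positivity)
      nlinarith
    have h8 : (j.natAbs : ℝ) ^ 2 * (n : ℝ) ^ (-(5 : ℝ) / 4) * Real.exp (π * Real.sqrt n) =
      (j.natAbs : ℝ) ^ 2 * W := by rw [hW]; ring
    rw [h8] at h2
    linarith
  have hM : (Mbar k n : ℝ) - g = (-1) ^ k *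
      ∑ j ∈ Finset.Icc (-(k : ℤ)) (k : ℤ), (-1 : ℝ) ^ j.natAbs * ((pbarZ (n - j ^ 2) : ℝ) - g) := by
    have hs := OverAsym.sign_sum k
    have hone : ((-1 : ℝ) ^ k) * (-1) ^ k = 1 := by
      rw [← mul_pow]; norm_num
    simp only [mul_sub, Finset.sum_sub_distrib]
    rw [← Finset.sum_mul, hs, Mbar]
    push_cast
    linear_combination g * hone
  rw [hM, abs_mul, abs_pow, abs_neg, abs_one, one_pow, one_mul]
  refine (Finset.abs_sum_le_sum_abs _ _).trans ?_
  refine (Finset.sum_le_card_nsmul _ _ ((4 * C + 1) * k ^ 2 * W) ?_).trans ?_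
  · intro j hj
    rw [abs_mul, abs_pow, abs_neg, abs_one, one_pow, one_mul]
    exact hterm j hj
  · have hcard : ((Finset.Icc (-(k : ℤ)) (k : ℤ)).card : ℝ) ≤ 3 * k := by
      have : (Finset.Icc (-(k : ℤ)) (k : ℤ)).card ≤ 3 * k := by
        rw [Int.card_Icc]; omega
      exact_mod_cast this
    rw [nsmul_eq_mul]
    calc ((Finset.Icc (-(k : ℤ)) (k : ℤ)).card : ℝ) * ((4 * C + 1) * k ^ 2 * W)
        ≤ (3 * k) * ((4 * C + 1) * k ^ 2 * W) := by gcongr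
      _ = _ := by rw [hW]; ring
end
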